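/- Let Ω ⊂ ℝⁿ be a bounded Lipschitz domain, let f ∈ C²([0,∞)) be convex with f(0) = f'(0) = 0, satisfying the linear growth condition νt − L ≤ f(t) ≤ L(t+1) and the bound f''(t) ≤ L(1+t)⁻¹ for all t ≥ 0, and let T₀ ∈ W^{2,∞}(Ω;ℝ^{N×n}) satisfy ‖T₀‖_{L^∞(Ω;ℝ^{N×n})} < f^∞(1). Then each minimiser u_k ∈ W^{1,2}(Ω;ℝ^N) of 𝔉_k with (u_k)_Ω = 0 belongs to W^{2,2}_loc(Ω;ℝ^N), and for every compact set K ⊂ Ω one has sup_{k∈ℕ} { Σ_{s=1}^{n} ∫_K D_z A(∇u_k)[∂_s∇u_k, ∂_s∇u_k] dx + k⁻¹ ∫_K |∇²u_k|² dx } < ∞, where A(z) = f'(|z|)z/|z| (with A(0)=0). -/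

import Mathlib

open MeasureTheory Filter Topology Set
open scoped ENNReal RealInnerProductSpace

noncomputable section

/-- Euclidean space `ℝⁿ`. -/
abbrev EVec (n : ℕ) := EuclideanSpace ℝ (Fin n)

/-- Frobenius inner product of two "matrices". -/
def mdot {ι κ : Type*} [Fintype ι] [Fintype κ] (A B : ι → κ → ℝ) : ℝ :=
  ∑ a, ∑ i, A a i * B a i

/-- Frobenius norm. -/
noncomputable def mnorm {ι κ : Type*} [Fintype ι] [Fintype κ] (A : ι → κ → ℝ) : ℝ :=
  Real.sqrt (mdot A A)

/-- Euclidean norm of a vector given as a tuple. -/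
noncomputable def vnorm {ι : Type*} [Fintype ι] (v : ι → ℝ) : ℝ :=
  Real.sqrt (∑ a, v a ^ 2)

/-- `Ω ⊆ ℝⁿ` is a (nonempty, open, connected) Lipschitz domain: every boundary point has
a neighbourhood on which `Ω` can be flattened to a half space by a bi-Lipschitz map. -/
def IsLipschitzDomain {n : ℕ} (Ω : Set (EVec n)) : Prop :=
  IsOpen Ω ∧ Ω.Nonempty ∧ IsConnected Ω ∧
  ∀ x ∈ frontier Ω, ∃ (U : Set (EVec n)) (h hinv : EVec n → EVec n) (K : NNReal)
      (e : EVec n),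
    ‖e‖ = 1 ∧ IsOpen U ∧ x ∈ U ∧ LipschitzOnWith K h U ∧
    LipschitzOnWith K hinv (h '' U) ∧ (∀ y ∈ U, hinv (h y) = y) ∧
    h '' (U ∩ Ω) = (h '' U) ∩ {y : EVec n | 0 < ⟪e, y⟫}

/-- `Du` is the weak (distributional) gradient of `u` on `Ω`, and both are integrable;
i.e. `u ∈ W^{1,1}(Ω; ℝ^ι)` with weak gradient `Du`. -/
def HasWeakDerivOn {n : ℕ} {ι : Type*} [Fintype ι] (Ω : Set (EVec n))
    (u : EVec n → ι → ℝ) (Du : EVec n → ι → Fin n → ℝ) : Prop :=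
  IntegrableOn u Ω volume ∧ IntegrableOn Du Ω volume ∧
  ∀ φ : EVec n → ℝ, ContDiff ℝ 1 φ → HasCompactSupport φ → tsupport φ ⊆ Ω →
    ∀ (a : ι) (i : Fin n),
      ∫ x in Ω, u x a * fderiv ℝ φ x (EuclideanSpace.single i 1) =
        - ∫ x in Ω, Du x a i * φ x

/-- `u ∈ W^{1,2}(Ω;ℝ^ι)` with weak gradient `Du`. -/
def MemW12 {n : ℕ} {ι : Type*} [Fintype ι] (Ω : Set (EVec n))
    (u : EVec n → ι → ℝ) (Du : EVec n → ι → Fin n → ℝ) : Prop :=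
  HasWeakDerivOn Ω u Du ∧ IntegrableOn (fun x => vnorm (u x) ^ 2) Ω volume ∧
    IntegrableOn (fun x => mnorm (Du x) ^ 2) Ω volume

/-- vanishing mean value `(u)_Ω = 0`. -/
def ZeroMean {n : ℕ} {ι : Type*} [Fintype ι] (Ω : Set (EVec n))
    (u : EVec n → ι → ℝ) : Prop :=
  ∀ a : ι, ∫ x in Ω, u x a = 0

/-- The `L^∞(Ω)` norm of a matrix field (w.r.t. the pointwise Frobenius norm). -/
noncomputable def linfNormOn {n N : ℕ} (Ω : Set (EVec n))
    (T : EVec n → Fin N → Fin n → ℝ) : ℝ≥0∞ :=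
  essSup (fun x => ENNReal.ofReal (mnorm (T x))) (volume.restrict Ω)

/-- `T ∈ W^{1,∞}(Ω)`: bounded and Lipschitz on `Ω`. -/
def MemW1inf {n N : ℕ} (Ω : Set (EVec n)) (T : EVec n → Fin N → Fin n → ℝ) : Prop :=
  ∃ C : NNReal, (∀ x ∈ Ω, ‖T x‖ ≤ C) ∧ LipschitzOnWith C T Ω

/-- `T ∈ W^{2,∞}(Ω)`: `T` is bounded with bounded Lipschitz derivative on `Ω`. -/
def MemW2inf {n N : ℕ} (Ω : Set (EVec n)) (T : EVec n → Fin N → Fin n → ℝ) : Prop :=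
  ∃ (C : NNReal) (DT : EVec n → EVec n →L[ℝ] (Fin N → Fin n → ℝ)),
    (∀ x ∈ Ω, ‖T x‖ ≤ C) ∧ (∀ x ∈ Ω, HasFDerivWithinAt T (DT x) Ω x) ∧
    (∀ x ∈ Ω, ‖DT x‖ ≤ C) ∧ LipschitzOnWith C DT Ω

/-- The nonlinear map `A(z) = f'(|z|) z / |z|` (equal to `0` at `z = 0`). -/
noncomputable def Amap {N n : ℕ} (f' : ℝ → ℝ) (z : Fin N → Fin n → ℝ) :
    Fin N → Fin n → ℝ :=
  fun a i => (f' (mnorm z) / mnorm z) * z a i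

/-- `u` is a weak solution of the Neumann problem for the integrand `f(|·|)` and datum `T₀`. -/
def IsWeakSolution {n N : ℕ} (Ω : Set (EVec n)) (f' : ℝ → ℝ)
    (T₀ : EVec n → Fin N → Fin n → ℝ)
    (u : EVec n → Fin N → ℝ) (Du : EVec n → Fin N → Fin n → ℝ) : Prop :=
  HasWeakDerivOn Ω u Du ∧
  ∀ φ Dφ, HasWeakDerivOn Ω φ Dφ →
    ∫ x in Ω, mdot (Amap f' (Du x)) (Dφ x) = ∫ x in Ω, mdot (T₀ x) (Dφ x)

/-- The functional `𝔉[w] = ∫_Ω (f(|∇w|) − T₀ · ∇w) dx` (as a function of the gradient). -/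
noncomputable def FF {n N : ℕ} (Ω : Set (EVec n)) (f : ℝ → ℝ)
    (T₀ : EVec n → Fin N → Fin n → ℝ) (Du : EVec n → Fin N → Fin n → ℝ) : ℝ :=
  ∫ x in Ω, (f (mnorm (Du x)) - mdot (T₀ x) (Du x))

/-- The regularised functional `𝔉_k[w] = 𝔉[w] + (2k)⁻¹ ∫_Ω |∇w|² dx`. -/
noncomputable def FFk {n N : ℕ} (Ω : Set (EVec n)) (f : ℝ → ℝ)
    (T₀ : EVec n → Fin N → Fin n → ℝ) (k : ℕ)
    (Du : EVec n → Fin N → Fin n → ℝ) : ℝ :=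
  FF Ω f T₀ Du + (2 * (k : ℝ))⁻¹ * ∫ x in Ω, mnorm (Du x) ^ 2

end

/-- Locally integrable weak (distributional) gradient on `Ω`. -/
def HasLocWeakDerivOn {n : ℕ} {ι : Type*} [Fintype ι] (Ω : Set (EVec n))
    (u : EVec n → ι → ℝ) (Du : EVec n → ι → Fin n → ℝ) : Prop :=
  (∀ K : Set (EVec n), IsCompact K → K ⊆ Ω → IntegrableOn Du K volume) ∧
  ∀ φ : EVec n → ℝ, ContDiff ℝ 1 φ → HasCompactSupport φ → tsupport φ ⊆ Ω →
    ∀ (a : ι) (i : Fin n),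
      ∫ x in Ω, u x a * fderiv ℝ φ x (EuclideanSpace.single i 1) =
        - ∫ x in Ω, Du x a i * φ x

/-- The quadratic form `D_z A(z)[ζ,ζ]`, i.e. the Hessian of `z ↦ f(|z|)` applied to
`(ζ,ζ)`. -/
noncomputable def QA {N n : ℕ} (f' f'' : ℝ → ℝ) (z ζ : Fin N → Fin n → ℝ) : ℝ :=
  if mnorm z = 0 then f'' 0 * mnorm ζ ^ 2
  else f'' (mnorm z) * (mdot z ζ) ^ 2 / mnorm z ^ 2 +
    f' (mnorm z) / mnorm z *
      ((mnorm z ^ 2 * mnorm ζ ^ 2 - (mdot z ζ) ^ 2) / mnorm z ^ 2)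

/-!
Nirenberg's method. A minimiser `u` of `𝔉_k` solves `-div (DΦ_k(∇u)) = -div T₀` weakly, where
`Φ_k(z) = f(|z|) + |z|² / (2k)`. Subtract the translated equation and test with `η² Δₕu`, where `Δₕ`
is the difference quotient in direction `e_s`. The difference quotient of `DΦ_k(∇u)` is `S Δₕ∇u`,
with `S` the mean of the Hessian `D²Φ_k` over the segment joining the two values of `∇u`. As `S` is
symmetric and nonnegative, Young's inequality for its quadratic form gives

`∫ η² ⟨S Δₕ∇u, Δₕ∇u⟩ ≤ ∫ ⟨S ζ, ζ⟩ + 2 Lip(div T₀) ∫ η² |Δₕu|`, with `ζ = 2 Δₕu ⊗ ∇η`.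

Since `S ≥ k⁻¹`, the quotients `Δₕ(η∇u)` are bounded in `L²`, so `∇u` has local weak derivatives in
`L²`, and `h → 0` gives the same inequality with `D²Φ_k(∇u)` for `S` and `∂_s` for `Δₕ`. Its right
side is bounded uniformly in `k`: `f''(t) ≤ L / (1 + t)` implies `⟨D²Φ_k(z) ζ, ζ⟩ ≲ |z| + k⁻¹ |z|²`
for `|ζ| ≲ |z|`, and comparing `u` with `0` bounds `∫ |∇u| + k⁻¹ ∫ |∇u|²` because
`‖T₀‖_∞ < f^∞(1)`. The weak derivatives found for different cutoffs `η` are glued along an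
exhaustion of `Ω`.
-/

/-! ### Elliptic operators and vector fields -/

section EllipticOperator

variable {V : Type*} [NormedAddCommGroup V] [InnerProductSpace ℝ V]

/-- `B` is a symmetric operator with quadratic form between `κ ‖ζ‖²` and `Λ ‖ζ‖²`, where `0 ≤ κ`;
the value `κ = 0` (degenerate ellipticity) is allowed. -/
structure IsEllipticOperator (κ Λ : ℝ) (B : V →L[ℝ] V) : Prop where
  nonneg : 0 ≤ κ
  symm : ∀ ξ ζ, ⟪B ξ, ζ⟫ = ⟪B ζ, ξ⟫
  le_inner : ∀ ζ, κ * ‖ζ‖ ^ 2 ≤ ⟪B ζ, ζ⟫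
  norm_le : ‖B‖ ≤ Λ

namespace IsEllipticOperator

variable {κ Λ : ℝ} {B : V →L[ℝ] V}

theorem inner_self_nonneg (hB : IsEllipticOperator κ Λ B) (ζ : V) : 0 ≤ ⟪B ζ, ζ⟫ :=
  (mul_nonneg hB.nonneg (sq_nonneg _)).trans (hB.le_inner ζ)

theorem inner_self_le (hB : IsEllipticOperator κ Λ B) (ζ : V) : ⟪B ζ, ζ⟫ ≤ Λ * ‖ζ‖ ^ 2 :=
  calc ⟪B ζ, ζ⟫ ≤ ‖B ζ‖ * ‖ζ‖ := real_inner_le_norm _ _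
    _ ≤ Λ * ‖ζ‖ * ‖ζ‖ := by gcongr; exact B.le_of_opNorm_le hB.norm_le ζ
    _ = Λ * ‖ζ‖ ^ 2 := by ring

theorem inner_add_self (hB : IsEllipticOperator κ Λ B) (ξ ζ : V) :
    ⟪B (ξ + ζ), ξ + ζ⟫ = ⟪B ξ, ξ⟫ + 2 * ⟪B ξ, ζ⟫ + ⟪B ζ, ζ⟫ := by
  rw [map_add, inner_add_left, inner_add_right, inner_add_right, hB.symm ζ ξ]
  ring

theorem sq_mul_inner_self_sub_le (hB : IsEllipticOperator κ Λ B) (c : ℝ) (ξ ζ : V) :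
    c ^ 2 * ⟪B ξ, ξ⟫ - ⟪B ζ, ζ⟫ ≤ 2 * ⟪B ξ, c ^ 2 • ξ + c • ζ⟫ := by
  have hnonneg := hB.inner_self_nonneg (c • ξ + ζ)
  rw [hB.inner_add_self, map_smul, real_inner_smul_left, real_inner_smul_right,
    real_inner_smul_left] at hnonneg
  rw [inner_add_right, real_inner_smul_right, real_inner_smul_right]
  linarith

theorem add_smul_id (hB : IsEllipticOperator κ Λ B) {ε : ℝ} (hε : 0 ≤ ε) :
    IsEllipticOperator (κ + ε) (Λ + ε) (B + ε • ContinuousLinearMap.id ℝ V) where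
  nonneg := add_nonneg hB.nonneg hε
  symm ξ ζ := by
    simp [inner_add_left, real_inner_smul_left, hB.symm ξ ζ, real_inner_comm ξ ζ]
  le_inner ζ := by
    have := hB.le_inner ζ
    simp only [add_apply, FunLike.coe_smul, Pi.smul_apply, ContinuousLinearMap.id_apply,
      inner_add_left, real_inner_smul_left, real_inner_self_eq_norm_sq]
    linarith
  norm_le := by
    refine (norm_add_le _ _).trans (add_le_add hB.norm_le ?_)
    rw [norm_smul, Real.norm_of_nonneg hε]
    exact mul_le_of_le_one_right hε ContinuousLinearMap.norm_id_le

end IsEllipticOperator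

theorem convex_setOf_isEllipticOperator (κ Λ : ℝ) :
    Convex ℝ {B : V →L[ℝ] V | IsEllipticOperator κ Λ B} := by
  intro B hB C hC a b ha hb hab
  refine ⟨hB.nonneg, fun ξ ζ => ?_, fun ζ => ?_, ?_⟩
  · simp [inner_add_left, real_inner_smul_left, hB.symm ξ ζ, hC.symm ξ ζ]
  · calc κ * ‖ζ‖ ^ 2 = a * (κ * ‖ζ‖ ^ 2) + b * (κ * ‖ζ‖ ^ 2) := by
          rw [← add_mul, hab, one_mul]
      _ ≤ a * ⟪B ζ, ζ⟫ + b * ⟪C ζ, ζ⟫ := by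
          gcongr
          exacts [hB.le_inner ζ, hC.le_inner ζ]
      _ = ⟪(a • B + b • C) ζ, ζ⟫ := by simp [inner_add_left, real_inner_smul_left]
  · have := convex_closedBall (0 : V →L[ℝ] V) Λ (mem_closedBall_zero_iff.2 hB.norm_le)
      (mem_closedBall_zero_iff.2 hC.norm_le) ha hb hab
    exact mem_closedBall_zero_iff.1 this

theorem isClosed_setOf_isEllipticOperator (κ Λ : ℝ) :
    IsClosed {B : V →L[ℝ] V | IsEllipticOperator κ Λ B} := by
  have hset : {B : V →L[ℝ] V | IsEllipticOperator κ Λ B} =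
      {_B | 0 ≤ κ} ∩ ((⋂ ξ, ⋂ ζ, {B | ⟪B ξ, ζ⟫ = ⟪B ζ, ξ⟫}) ∩
        ((⋂ ζ, {B | κ * ‖ζ‖ ^ 2 ≤ ⟪B ζ, ζ⟫}) ∩ {B | ‖B‖ ≤ Λ})) := by
    ext B
    simp only [mem_inter_iff, mem_iInter, mem_ofPred_eq]
    exact ⟨fun h => ⟨h.nonneg, h.symm, h.le_inner, h.norm_le⟩,
      fun ⟨h₀, h₁, h₂, h₃⟩ => ⟨h₀, h₁, h₂, h₃⟩⟩
  rw [hset]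
  refine isClosed_const.inter (.inter (isClosed_iInter fun ξ => isClosed_iInter fun ζ => ?_)
    (.inter (isClosed_iInter fun ζ => ?_) (isClosed_le continuous_norm continuous_const)))
  · exact isClosed_eq (by fun_prop) (by fun_prop)
  · exact isClosed_le continuous_const (by fun_prop)

theorem isEllipticOperator_integral [CompleteSpace V] {α : Type*} [MeasurableSpace α]
    {μ : Measure α} [IsProbabilityMeasure μ] {κ Λ : ℝ} {B : α → V →L[ℝ] V}
    (hB : ∀ᵐ t ∂μ, IsEllipticOperator κ Λ (B t)) (hBint : Integrable B μ) :
    IsEllipticOperator κ Λ (∫ t, B t ∂μ) :=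
  Convex.integral_mem (E := V →L[ℝ] V) (s := {B | IsEllipticOperator κ Λ B})
    (convex_setOf_isEllipticOperator κ Λ) (isClosed_setOf_isEllipticOperator κ Λ) hB hBint

end EllipticOperator

section EllipticField

variable {V : Type*} [NormedAddCommGroup V] [InnerProductSpace ℝ V]

/-- `A` is a `C¹` vector field with `A 0 = 0` whose derivative `DA` is elliptic at every point:
the class of nonlinearities of the systems `div A(∇v) = b` considered here. -/
structure IsEllipticField (κ Λ : ℝ) (A : V → V) (DA : V → V →L[ℝ] V) : Prop where
  map_zero : A 0 = 0
  hasFDerivAt : ∀ z, HasFDerivAt A (DA z) z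
  continuous_deriv : Continuous DA
  elliptic : ∀ z, IsEllipticOperator κ Λ (DA z)

/-- The average `∫₀¹ DA(z + t (z' - z)) dt` of `DA` over the segment from `z` to `z'`. -/
noncomputable def segmentMean (DA : V → V →L[ℝ] V) (z z' : V) : V →L[ℝ] V :=
  ∫ t in (0 : ℝ)..1, DA (z + t • (z' - z))

theorem continuous_segmentMean {DA : V → V →L[ℝ] V} (hDA : Continuous DA) :
    Continuous fun p : V × V => segmentMean DA p.1 p.2 :=
  intervalIntegral.continuous_parametric_intervalIntegral_of_continuous'
    (f := fun (p : V × V) (t : ℝ) => DA (p.1 + t • (p.2 - p.1)))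
    (hDA.comp (by fun_prop)) 0 1

theorem segmentMean_self [CompleteSpace V] (DA : V → V →L[ℝ] V) (z : V) :
    segmentMean DA z z = DA z := by
  simp [segmentMean]

namespace IsEllipticField

variable {κ Λ : ℝ} {A : V → V} {DA : V → V →L[ℝ] V}

theorem add_smul_id (hA : IsEllipticField κ Λ A DA) {ε : ℝ} (hε : 0 ≤ ε) :
    IsEllipticField (κ + ε) (Λ + ε) (fun z => A z + ε • z)
      (fun z => DA z + ε • ContinuousLinearMap.id ℝ V) where
  map_zero := by simp [hA.map_zero]
  hasFDerivAt z := (hA.hasFDerivAt z).add ((hasFDerivAt_id z).const_smul ε)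
  continuous_deriv := hA.continuous_deriv.add continuous_const
  elliptic z := (hA.elliptic z).add_smul_id hε

theorem continuous (hA : IsEllipticField κ Λ A DA) : Continuous A :=
  continuous_iff_continuousAt.2 fun z => (hA.hasFDerivAt z).continuousAt

theorem norm_sub_le (hA : IsEllipticField κ Λ A DA) (w z : V) : ‖A w - A z‖ ≤ Λ * ‖w - z‖ :=
  convex_univ.norm_image_sub_le_of_norm_hasFDerivWithin_le
    (fun z _ => (hA.hasFDerivAt z).hasFDerivWithinAt) (fun z _ => (hA.elliptic z).norm_le)
    (mem_univ z) (mem_univ w)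

theorem norm_le (hA : IsEllipticField κ Λ A DA) (z : V) : ‖A z‖ ≤ Λ * ‖z‖ := by
  simpa [hA.map_zero] using hA.norm_sub_le z 0

theorem memLp_comp {α : Type*} [MeasurableSpace α] {μ : Measure α} {p : ℝ≥0∞}
    (hA : IsEllipticField κ Λ A DA) {Z : α → V} (hZ : MemLp Z p μ) :
    MemLp (fun x => A (Z x)) p μ :=
  hZ.of_le_mul (hA.continuous.comp_aestronglyMeasurable hZ.1)
    (ae_of_all _ fun x => hA.norm_le (Z x))

variable [CompleteSpace V]

theorem segmentMean_elliptic (hA : IsEllipticField κ Λ A DA) (z z' : V) :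
    IsEllipticOperator κ Λ (segmentMean DA z z') := by
  have hinteg : IntervalIntegrable (fun t : ℝ => DA (z + t • (z' - z))) volume 0 1 :=
    (hA.continuous_deriv.comp (by fun_prop)).intervalIntegrable 0 1
  have hprob : IsProbabilityMeasure (volume.restrict (Ioc (0 : ℝ) 1)) := ⟨by simp⟩
  rw [segmentMean, intervalIntegral.integral_of_le zero_le_one]
  exact isEllipticOperator_integral (ae_of_all _ fun _ => hA.elliptic _) hinteg.1

theorem segmentMean_apply_sub (hA : IsEllipticField κ Λ A DA) (z z' : V) :
    segmentMean DA z z' (z' - z) = A z' - A z := by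
  have hcont : Continuous fun t : ℝ => DA (z + t • (z' - z)) :=
    hA.continuous_deriv.comp (by fun_prop)
  have hderiv (t : ℝ) :
      HasDerivAt (fun t : ℝ => A (z + t • (z' - z))) (DA (z + t • (z' - z)) (z' - z)) t := by
    refine (hA.hasFDerivAt _).comp_hasDerivAt t ?_
    simpa using ((hasDerivAt_id t).smul_const (z' - z)).const_add z
  rw [segmentMean, ContinuousLinearMap.intervalIntegral_apply (hcont.intervalIntegrable 0 1),
    intervalIntegral.integral_eq_sub_of_hasDerivAt (fun t _ => hderiv t)
      ((hcont.clm_apply continuous_const).intervalIntegrable 0 1)]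
  simp

end IsEllipticField

end EllipticField

/-! ### Square-integrable fields and test functions -/

section SquareIntegrable

variable {α : Type*} [MeasurableSpace α] {μ : Measure α}
  {F : Type*} [NormedAddCommGroup F] [InnerProductSpace ℝ F] {f g : α → F}

theorem ae_inner_toLp_eq (hf : MemLp f 2 μ) (hg : MemLp g 2 μ) :
    (fun x => ⟪hf.toLp f x, hg.toLp g x⟫) =ᵐ[μ] fun x => ⟪f x, g x⟫ := by
  filter_upwards [hf.coeFn_toLp, hg.coeFn_toLp] with x hfx hgx
  rw [hfx, hgx]

theorem integrable_inner_of_memLp (hf : MemLp f 2 μ) (hg : MemLp g 2 μ) :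
    Integrable (fun x => ⟪f x, g x⟫) μ :=
  (L2.integrable_inner (𝕜 := ℝ) (hf.toLp f) (hg.toLp g)).congr (ae_inner_toLp_eq hf hg)

theorem inner_toLp_toLp (hf : MemLp f 2 μ) (hg : MemLp g 2 μ) :
    ⟪hf.toLp f, hg.toLp g⟫ = ∫ x, ⟪f x, g x⟫ ∂μ := by
  rw [L2.inner_def]
  exact integral_congr_ae (ae_inner_toLp_eq hf hg)

theorem abs_integral_inner_le (hf : MemLp f 2 μ) (hg : MemLp g 2 μ) :
    |∫ x, ⟪f x, g x⟫ ∂μ| ≤ (eLpNorm f 2 μ).toReal * (eLpNorm g 2 μ).toReal := by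
  rw [← inner_toLp_toLp hf hg, ← Lp.norm_toLp f hf, ← Lp.norm_toLp g hg]
  exact abs_real_inner_le_norm _ _

theorem integral_norm_sq_eq (hf : MemLp f 2 μ) :
    ∫ x, ‖f x‖ ^ 2 ∂μ = (eLpNorm f 2 μ).toReal ^ 2 := by
  simp only [← real_inner_self_eq_norm_sq]
  rw [← inner_toLp_toLp hf hf, real_inner_self_eq_norm_sq, Lp.norm_toLp]

end SquareIntegrable

theorem exists_ultrafilter_tendsto_inner {ι H : Type*} [NormedAddCommGroup H]
    [InnerProductSpace ℝ H] [CompleteSpace H] {l : Filter ι} [l.NeBot] {D : ι → H} {C : ℝ}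
    (hD : ∀ᶠ i in l, ‖D i‖ ≤ C) :
    ∃ (𝒰 : Ultrafilter ι) (y : H), ↑𝒰 ≤ l ∧ ∀ z, Tendsto (fun i => ⟪D i, z⟫) 𝒰 (𝓝 ⟪y, z⟫) := by
  let 𝒰 : Ultrafilter ι := Ultrafilter.of l
  let ℓ : ι → WeakDual ℝ H := fun i => StrongDual.toWeakDual (InnerProductSpace.toDual ℝ H (D i))
  have hball : ∀ᶠ i in (𝒰 : Filter ι),
      ℓ i ∈ WeakDual.toStrongDual ⁻¹' Metric.closedBall (0 : StrongDual ℝ H) C := by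
    filter_upwards [Ultrafilter.of_le l hD] with i hi
    rw [mem_preimage, mem_closedBall_zero_iff]
    exact ((InnerProductSpace.toDual ℝ H).norm_map (D i)).trans_le hi
  obtain ⟨m, -, hm⟩ := (WeakDual.isCompact_closedBall (𝕜 := ℝ) (0 : StrongDual ℝ H)
    C).ultrafilter_le_nhds (𝒰.map ℓ) (le_principal_iff.2 hball)
  refine ⟨𝒰, (InnerProductSpace.toDual ℝ H).symm (WeakDual.toStrongDual m),
    Ultrafilter.of_le l, fun z => ?_⟩
  rw [InnerProductSpace.toDual_symm_apply]
  exact ((WeakDual.eval_continuous z).tendsto m).comp hm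

section TestFunction

variable {E : Type*} [NormedAddCommGroup E] [NormedSpace ℝ E]
  {F : Type*} [NormedAddCommGroup F] [NormedSpace ℝ F]

/-- `φ` is a compactly supported `C¹` function with support in `U`. -/
structure IsTestFunction (U : Set E) (φ : E → F) : Prop where
  contDiff : ContDiff ℝ 1 φ
  hasCompactSupport : HasCompactSupport φ
  tsupport_subset : tsupport φ ⊆ U

namespace IsTestFunction

variable {U : Set E} {φ : E → F} {η : E → ℝ}

theorem mono {U' : Set E} (hφ : IsTestFunction U φ) (hU : U ⊆ U') : IsTestFunction U' φ :=
  ⟨hφ.contDiff, hφ.hasCompactSupport, hφ.tsupport_subset.trans hU⟩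

theorem continuous (hφ : IsTestFunction U φ) : Continuous φ := hφ.contDiff.continuous

theorem differentiable (hφ : IsTestFunction U φ) : Differentiable ℝ φ :=
  hφ.contDiff.differentiable one_ne_zero

theorem continuous_fderiv (hφ : IsTestFunction U φ) : Continuous (fderiv ℝ φ) :=
  hφ.contDiff.continuous_fderiv one_ne_zero

theorem continuous_fderiv_apply (hφ : IsTestFunction U φ) (e : E) :
    Continuous fun x => fderiv ℝ φ x e :=
  hφ.continuous_fderiv.clm_apply continuous_const

theorem eq_zero_of_notMem (hφ : IsTestFunction U φ) {x : E} (hx : x ∉ U) : φ x = 0 :=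
  image_eq_zero_of_notMem_tsupport fun h => hx (hφ.tsupport_subset h)

theorem fderiv_eq_zero_of_notMem (hφ : IsTestFunction U φ) {x : E} (hx : x ∉ U) :
    fderiv ℝ φ x = 0 :=
  fderiv_of_notMem_tsupport ℝ fun h => hx (hφ.tsupport_subset h)

theorem comp_add_right (hφ : IsTestFunction univ φ) (v : E) :
    IsTestFunction univ fun x => φ (x + v) where
  contDiff := hφ.contDiff.comp (by fun_prop)
  hasCompactSupport := hφ.hasCompactSupport.comp_homeomorph (Homeomorph.addRight v)
  tsupport_subset := subset_univ _

theorem smul (hη : IsTestFunction U η) (hφ : ContDiff ℝ 1 φ) :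
    IsTestFunction U fun x => η x • φ x where
  contDiff := hη.contDiff.smul hφ
  hasCompactSupport := hη.hasCompactSupport.smul_right
  tsupport_subset := (tsupport_smul_subset_left η φ).trans hη.tsupport_subset

theorem hasDerivAt_inner_comp_sub_smul {F : Type*} [NormedAddCommGroup F] [InnerProductSpace ℝ F]
    {φ : E → F} (hφ : IsTestFunction U φ) (y : F) (e x : E) (t : ℝ) :
    HasDerivAt (fun t : ℝ => ⟪y, φ (x - t • e)⟫) ⟪y, -fderiv ℝ φ (x - t • e) e⟫ t := by
  have hline : HasDerivAt (fun t : ℝ => x - t • e) (-e) t := by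
    simpa using ((hasDerivAt_id t).smul_const e).const_sub x
  have hcomp := (hφ.differentiable (x - t • e)).hasFDerivAt.comp_hasDerivAt t hline
  simpa using (hasDerivAt_const t y).inner ℝ hcomp

end IsTestFunction

end TestFunction

/-! ### Difference quotients and weak derivatives -/

section Translation

theorem memLp_comp_add_right {G F : Type*} [AddGroup G] [MeasurableSpace G] [MeasurableAdd G]
    {μ : Measure G} [μ.IsAddRightInvariant] [NormedAddCommGroup F] {g : G → F} {p : ℝ≥0∞}
    (hg : MemLp g p μ) (v : G) : MemLp (fun x => g (x + v)) p μ :=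
  hg.comp_measurePreserving (measurePreserving_add_right μ v)

theorem integral_inner_comp_sub {G F : Type*} [AddGroup G] [MeasurableSpace G] [MeasurableAdd G]
    {μ : Measure G} [μ.IsAddRightInvariant] [NormedAddCommGroup F] [InnerProductSpace ℝ F]
    (g φ : G → F) (v : G) : ∫ x, ⟪g x, φ (x - v)⟫ ∂μ = ∫ x, ⟪g (x + v), φ x⟫ ∂μ := by
  rw [← integral_add_right_eq_self _ v]
  simp only [add_sub_cancel_right]

variable {E : Type*} [NormedAddCommGroup E] [NormedSpace ℝ E]

/-- The difference quotient `(g(x + h e) - g(x)) / h` of `g` in direction `e`. -/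
noncomputable def diffQuot {F : Type*} [AddCommGroup F] [Module ℝ F] (e : E) (h : ℝ) (g : E → F)
    (x : E) : F :=
  h⁻¹ • (g (x + h • e) - g x)

variable [MeasurableSpace E] [BorelSpace E] {μ : Measure E} [μ.IsAddHaarMeasure]

theorem memLp_diffQuot {F : Type*} [NormedAddCommGroup F] [NormedSpace ℝ F] {g : E → F}
    {p : ℝ≥0∞} (hg : MemLp g p μ) (e : E) (h : ℝ) : MemLp (diffQuot e h g) p μ :=
  ((memLp_comp_add_right hg (h • e)).sub hg).const_smul h⁻¹

theorem tendsto_eLpNorm_comp_add_smul_sub [FiniteDimensional ℝ E] {F : Type*}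
    [NormedAddCommGroup F] {g : E → F} {p : ℝ≥0∞} [Fact (1 ≤ p)] (hp : p ≠ ∞) (hg : MemLp g p μ)
    (e : E) : Tendsto (fun h : ℝ => eLpNorm (fun x => g (x + h • e) - g x) p μ) (𝓝 0) (𝓝 0) := by
  let τ : C(ℝ, C(E, E)) :=
    (ContinuousMap.mk (fun a : ℝ × E => a.2 + a.1 • e) (by fun_prop)).curry
  have hτ (h : ℝ) : MeasurePreserving (τ h) μ μ := measurePreserving_add_right μ (h • e)
  have hcoe (h : ℝ) : Lp.compMeasurePreserving (τ h) (hτ h) (hg.toLp g) =ᵐ[μ]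
      fun x => g (x + h • e) :=
    (Lp.coeFn_compMeasurePreserving _ (hτ h)).trans
      ((hτ h).quasiMeasurePreserving.ae_eq_comp hg.coeFn_toLp)
  have hlim := Tendsto.compMeasurePreservingLp (tendsto_const_nhds (x := hg.toLp g))
    (τ.continuous.tendsto 0) hτ (hτ 0) hp
  refine (tendsto_iff_edist_tendsto_0.1 hlim).congr fun h => ?_
  rw [Lp.edist_def]
  refine eLpNorm_congr_ae ?_
  filter_upwards [hcoe h, hcoe 0] with x hx hx0
  rw [Pi.sub_apply, hx, hx0, zero_smul, add_zero]

variable {F : Type*} [NormedAddCommGroup F] [InnerProductSpace ℝ F] {g φ : E → F}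

theorem integral_inner_diffQuot (hg : MemLp g 2 μ) (hφ : MemLp φ 2 μ) (e : E) (h : ℝ) :
    ∫ x, ⟪diffQuot e h g x, φ x⟫ ∂μ =
      h⁻¹ * (∫ x, ⟪g (x + h • e), φ x⟫ ∂μ - ∫ x, ⟪g x, φ x⟫ ∂μ) := by
  simp only [diffQuot, real_inner_smul_left, inner_sub_left]
  rw [integral_const_mul, integral_sub
    (integrable_inner_of_memLp (memLp_comp_add_right hg _) hφ) (integrable_inner_of_memLp hg hφ)]

theorem integral_inner_diffQuot_eq_neg (hg : MemLp g 2 μ) (hφ : MemLp φ 2 μ) (e : E) (h : ℝ) :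
    ∫ x, ⟪diffQuot e h g x, φ x⟫ ∂μ = -∫ x, ⟪g x, diffQuot e (-h) φ x⟫ ∂μ := by
  have hswap := integral_inner_diffQuot hφ hg e (-h)
  simp only [real_inner_comm (g _)] at hswap
  rw [hswap, integral_inner_diffQuot hg hφ, ← integral_inner_comp_sub]
  simp only [neg_smul, ← sub_eq_add_neg, inv_neg]
  ring

end Translation

section WeakDerivative

theorem IsTestFunction.memLp {E F : Type*} [NormedAddCommGroup E] [NormedSpace ℝ E]
    [MeasurableSpace E] [BorelSpace E] {μ : Measure E} [IsFiniteMeasureOnCompacts μ]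
    [NormedAddCommGroup F] [NormedSpace ℝ F] {U : Set E} {φ : E → F} (hφ : IsTestFunction U φ)
    (p : ℝ≥0∞) : MemLp φ p μ :=
  hφ.continuous.memLp_of_hasCompactSupport hφ.hasCompactSupport

variable {E : Type*} [NormedAddCommGroup E] [NormedSpace ℝ E] [FiniteDimensional ℝ E]
  [MeasurableSpace E] [BorelSpace E] {μ : Measure E}
  {F : Type*} [NormedAddCommGroup F] [InnerProductSpace ℝ F]

/-- `g'` is the weak derivative of `g` in direction `e` on the open set `U`. As the test functions
vanish outside `U`, the integrals may be taken over the whole space. -/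
def HasWeakDirDerivOn (μ : Measure E) (U : Set E) (e : E) (g g' : E → F) : Prop :=
  ∀ φ : E → F, IsTestFunction U φ →
    ∫ x, ⟪g x, fderiv ℝ φ x e⟫ ∂μ = -∫ x, ⟪g' x, φ x⟫ ∂μ

theorem integrable_inner_of_tsupport_subset {U : Set E} {g ψ : E → F}
    (hg : LocallyIntegrableOn g U μ)
    (hψ : Continuous ψ) (hψc : HasCompactSupport ψ) (hψU : tsupport ψ ⊆ U) :
    Integrable (fun x => ⟪g x, ψ x⟫) μ := by
  obtain ⟨C, hC⟩ := hψc.exists_bound_of_continuous hψ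
  have hgK := hg.integrableOn_compact_subset hψU hψc.isCompact
  have hind : (fun x => ⟪g x, ψ x⟫) = (tsupport ψ).indicator fun x => ⟪g x, ψ x⟫ := by
    refine (indicator_eq_self.2 fun x hx => subset_tsupport ψ fun h0 => hx ?_).symm
    simp [h0]
  rw [hind, integrable_indicator_iff hψc.isCompact.measurableSet]
  refine (hgK.norm.mul_const C).mono'
    (hgK.aestronglyMeasurable.inner hψ.aestronglyMeasurable) (ae_of_all _ fun x => ?_)
  exact (norm_inner_le_norm _ _).trans (by gcongr; exact hC x)

variable {g φ : E → F} {e : E}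

theorem eLpNorm_two_le_of_forall_test [IsFiniteMeasureOnCompacts μ] (hg : MemLp g 2 μ) {ε : ℝ}
    (hε : 0 ≤ ε) (htest : ∀ φ : E → F, IsTestFunction univ φ →
      |∫ x, ⟪g x, φ x⟫ ∂μ| ≤ ε * (eLpNorm φ 2 μ).toReal) :
    eLpNorm g 2 μ ≤ ENNReal.ofReal ε := by
  have hbound (ψ : Lp F 2 μ) : |⟪hg.toLp g, ψ⟫| ≤ ε * ‖ψ‖ := by
    have hclosed : IsClosed {ψ : Lp F 2 μ | |⟪hg.toLp g, ψ⟫| ≤ ε * ‖ψ‖} :=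
      isClosed_le (by fun_prop) (by fun_prop)
    refine hclosed.closure_subset_iff.2 ?_
      (Lp.dense_hasCompactSupport_contDiff (F := F) (p := 2) (μ := μ) ENNReal.ofNat_ne_top ψ)
    rintro ψ ⟨φ, hψφ, hφc, hφ⟩
    have hφt : IsTestFunction univ φ := ⟨hφ.of_le (mod_cast le_top), hφc, subset_univ _⟩
    obtain rfl : ψ = (hφt.memLp 2).toLp φ := Lp.ext (hψφ.trans (hφt.memLp 2).coeFn_toLp.symm)
    rw [mem_ofPred_eq, inner_toLp_toLp, Lp.norm_toLp]
    exact htest φ hφt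
  have hself := hbound (hg.toLp g)
  rw [real_inner_self_eq_norm_sq, abs_of_nonneg (sq_nonneg _), sq] at hself
  have hnorm : ‖hg.toLp g‖ ≤ ε := by
    rcases (norm_nonneg (hg.toLp g)).eq_or_lt with h0 | hpos
    · exact h0 ▸ hε
    · exact le_of_mul_le_mul_right hself hpos
  rw [Lp.norm_toLp] at hnorm
  exact (ENNReal.le_ofReal_iff_toReal_le hg.eLpNorm_ne_top hε).2 hnorm

theorem hasDerivAt_integral_inner_comp_sub_smul
    (hg : LocallyIntegrable g μ) (hφ : IsTestFunction univ φ) (e : E) (t₀ : ℝ) :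
    HasDerivAt (fun t : ℝ => ∫ x, ⟪g x, φ (x - t • e)⟫ ∂μ)
      (-∫ x, ⟪g x, fderiv ℝ φ (x - t₀ • e) e⟫ ∂μ) t₀ := by
  obtain ⟨C, hC⟩ := (hφ.hasCompactSupport.fderiv ℝ).exists_bound_of_continuous hφ.continuous_fderiv
  set K : Set E := (fun p : E × ℝ => p.1 + p.2 • e) '' (tsupport φ ×ˢ Icc (t₀ - 1) (t₀ + 1))
  have hK : IsCompact K :=
    (hφ.hasCompactSupport.isCompact.prod isCompact_Icc).image (by fun_prop)
  have hbound (x : E) (t : ℝ) (ht : t ∈ Metric.ball t₀ 1) :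
      ‖⟪g x, -fderiv ℝ φ (x - t • e) e⟫‖ ≤ K.indicator (fun x => ‖g x‖ * (C * ‖e‖)) x := by
    by_cases hx : x ∈ K
    · rw [indicator_of_mem hx]
      refine (norm_inner_le_norm _ _).trans (mul_le_mul_of_nonneg_left ?_ (norm_nonneg _))
      rw [norm_neg]
      exact ContinuousLinearMap.le_of_opNorm_le _ (hC _) e
    · have hsupp : x - t • e ∉ tsupport φ := fun hmem => hx <| by
        refine ⟨(x - t • e, t), ⟨hmem, ?_⟩, sub_add_cancel _ _⟩
        rw [Real.ball_eq_Ioo] at ht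
        exact Ioo_subset_Icc_self ht
      simp [hx, fderiv_of_notMem_tsupport ℝ hsupp]
  have hmeas (ψ : E → F) (hψ : Continuous ψ) (t : ℝ) :
      AEStronglyMeasurable (fun x => ⟪g x, ψ (x - t • e)⟫) μ :=
    hg.aestronglyMeasurable.inner (hψ.comp (by fun_prop)).aestronglyMeasurable
  have hinteg : Integrable (fun x => ⟪g x, φ (x - t₀ • e)⟫) μ := by
    have hshift := hφ.comp_add_right (-(t₀ • e))
    simp only [← sub_eq_add_neg] at hshift
    exact integrable_inner_of_tsupport_subset (locallyIntegrableOn_univ.2 hg) hshift.continuous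
      hshift.hasCompactSupport (subset_univ _)
  have := (hasDerivAt_integral_of_dominated_loc_of_deriv_le (Metric.ball_mem_nhds t₀ one_pos)
    (Eventually.of_forall (hmeas φ hφ.continuous)) hinteg
    (hmeas _ (hφ.continuous_fderiv_apply e).neg t₀) (ae_of_all _ hbound)
    ((integrable_indicator_iff hK.measurableSet).2
      ((hg.integrableOn_isCompact hK).norm.mul_const _))
    (ae_of_all _ fun x t _ => hφ.hasDerivAt_inner_comp_sub_smul (g x) e x t)).2
  simpa only [inner_neg_right, integral_neg] using this

end WeakDerivative

section WeakDerivativeCalculus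

variable {E : Type*} [NormedAddCommGroup E] [NormedSpace ℝ E] [MeasurableSpace E] [BorelSpace E]
  {μ : Measure E} {F : Type*} [NormedAddCommGroup F] [InnerProductSpace ℝ F]
  {U : Set E} {e : E} {g g' g₁ g₁' φ : E → F}

section AddHaar

variable [μ.IsAddHaarMeasure]

theorem HasWeakDirDerivOn.comp_add_right (h : HasWeakDirDerivOn μ univ e g g') (v : E) :
    HasWeakDirDerivOn μ univ e (fun x => g (x + v)) (fun x => g' (x + v)) := by
  intro φ hφ
  have htest := h _ (hφ.comp_add_right (-v))
  simp only [fderiv_comp_add_right] at htest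
  simp only [← sub_eq_add_neg] at htest
  rwa [integral_inner_comp_sub g (fun x => fderiv ℝ φ x e), integral_inner_comp_sub g' φ] at htest

theorem HasWeakDirDerivOn.diffQuot_diffQuot (h : HasWeakDirDerivOn μ univ e g g') (hg : MemLp g 2 μ)
    (hg' : MemLp g' 2 μ) (d : E) (t : ℝ) :
    HasWeakDirDerivOn μ univ e (diffQuot d t g) (diffQuot d t g') := by
  intro φ hφ
  have hφ' : MemLp (fun x => fderiv ℝ φ x e) 2 μ :=
    (hφ.continuous_fderiv_apply e).memLp_of_hasCompactSupport
      (hφ.hasCompactSupport.fderiv_apply ℝ e)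
  rw [integral_inner_diffQuot hg hφ', integral_inner_diffQuot hg' (hφ.memLp 2), h φ hφ,
    h.comp_add_right (t • d) φ hφ]
  ring

end AddHaar

variable [FiniteDimensional ℝ E]

theorem HasWeakDirDerivOn.smul {η : E → ℝ} (h : HasWeakDirDerivOn μ U e g g')
    (hg : LocallyIntegrableOn g U μ) (hg' : LocallyIntegrableOn g' U μ)
    (hη : IsTestFunction U η) :
    HasWeakDirDerivOn μ univ e (fun x => η x • g x)
      (fun x => η x • g' x + fderiv ℝ η x e • g x) := by
  intro φ hφ
  have hηφ := hη.smul hφ.contDiff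
  have hsupp (ψ : E → ℝ) (χ : E → F) (hψ : tsupport ψ ⊆ U) : tsupport (fun x => ψ x • χ x) ⊆ U :=
    (tsupport_smul_subset_left ψ χ).trans hψ
  have hinteg₁ : Integrable (fun x => ⟪g x, η x • fderiv ℝ φ x e⟫) μ :=
    integrable_inner_of_tsupport_subset hg (hη.continuous.smul (hφ.continuous_fderiv_apply e))
      hη.hasCompactSupport.smul_right (hsupp _ _ hη.tsupport_subset)
  have hinteg₂ : Integrable (fun x => ⟪g x, fderiv ℝ η x e • φ x⟫) μ :=
    integrable_inner_of_tsupport_subset hg ((hη.continuous_fderiv_apply e).smul hφ.continuous)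
      (hη.hasCompactSupport.fderiv_apply ℝ e).smul_right
      (hsupp _ _ ((tsupport_fderiv_apply_subset ℝ e).trans hη.tsupport_subset))
  have hinteg₃ : Integrable (fun x => ⟪g' x, η x • φ x⟫) μ :=
    integrable_inner_of_tsupport_subset hg' hηφ.continuous hηφ.hasCompactSupport
      hηφ.tsupport_subset
  have hleibniz (x : E) : fderiv ℝ (fun x => η x • φ x) x e =
      η x • fderiv ℝ φ x e + fderiv ℝ η x e • φ x := by
    rw [fderiv_fun_smul (hη.differentiable x) (hφ.differentiable x)]
    simp
  have htest := h _ hηφ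
  simp only [hleibniz, inner_add_right] at htest
  rw [integral_add hinteg₁ hinteg₂] at htest
  simp only [real_inner_smul_right] at hinteg₁ hinteg₂ hinteg₃ htest
  simp only [inner_add_left, real_inner_smul_left]
  rw [integral_add hinteg₃ hinteg₂]
  linarith

theorem HasWeakDirDerivOn.ae_eq_of_eqOn [CompleteSpace F]
    (hU : IsOpen U) (h : HasWeakDirDerivOn μ U e g g')
    (h₁ : HasWeakDirDerivOn μ U e g₁ g₁') (hg' : LocallyIntegrableOn g' U μ)
    (hg₁' : LocallyIntegrableOn g₁' U μ) (heq : EqOn g g₁ U) :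
    ∀ᵐ x ∂μ, x ∈ U → g' x = g₁' x := by
  have hae : ∀ᵐ x ∂μ, x ∈ U → (g' - g₁') x = 0 := by
    refine hU.ae_eq_zero_of_integral_contDiff_smul_eq_zero (hg'.sub hg₁') fun ψ hψ hψc hψU => ?_
    have hψt : IsTestFunction U ψ := ⟨hψ.of_le (mod_cast le_top), hψc, hψU⟩
    refine ext_inner_left ℝ fun y => ?_
    have hφ : IsTestFunction U fun x => ψ x • y := hψt.smul contDiff_const
    have hinteg (G : E → F) (hG : LocallyIntegrableOn G U μ) :=
      integrable_inner_of_tsupport_subset hG hφ.continuous hφ.hasCompactSupport hφ.tsupport_subset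
    have hsame : ∫ x, ⟪g x, fderiv ℝ (fun x => ψ x • y) x e⟫ ∂μ =
        ∫ x, ⟪g₁ x, fderiv ℝ (fun x => ψ x • y) x e⟫ ∂μ := by
      refine integral_congr_ae (ae_of_all _ fun x => ?_)
      by_cases hx : x ∈ U
      · simp only [heq hx]
      · simp [hφ.fderiv_eq_zero_of_notMem hx]
    have hdiff : ∫ x, ⟪(g' - g₁') x, ψ x • y⟫ ∂μ = 0 := by
      simp only [Pi.sub_apply, inner_sub_left]
      rw [integral_sub (hinteg g' hg') (hinteg g₁' hg₁')]
      linarith [h _ hφ, h₁ _ hφ]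
    have hsmul : Integrable (fun x => ψ x • (g' - g₁') x) μ :=
      (integrableOn_iff_integrable_of_support_subset
        ((Function.support_smul_subset_left ψ _).trans (subset_tsupport ψ))).1
        (((hg'.sub hg₁').integrableOn_compact_subset hψU hψc.isCompact).continuousOn_smul
          hψ.continuous.continuousOn hψc.isCompact)
    rw [inner_zero_right, ← integral_inner hsmul y]
    simpa only [real_inner_smul_right, real_inner_comm y] using hdiff
  filter_upwards [hae] with x hx hxU using sub_eq_zero.1 (hx hxU)

variable [μ.IsAddHaarMeasure]

theorem HasWeakDirDerivOn.hasDerivAt_integral_inner_comp_add_smul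
    (h : HasWeakDirDerivOn μ univ e g g') (hg : LocallyIntegrable g μ)
    (hφ : IsTestFunction univ φ) (t : ℝ) :
    HasDerivAt (fun t : ℝ => ∫ x, ⟪g (x + t • e), φ x⟫ ∂μ)
      (∫ x, ⟪g' (x + t • e), φ x⟫ ∂μ) t := by
  have hderiv := hasDerivAt_integral_inner_comp_sub_smul hg hφ e t
  have htest := h.comp_add_right (t • e) φ hφ
  rw [integral_inner_comp_sub g (fun x => fderiv ℝ φ x e), htest, neg_neg] at hderiv
  simpa only [integral_inner_comp_sub] using hderiv

theorem HasWeakDirDerivOn.abs_integral_inner_diffQuot_sub_le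
    (h : HasWeakDirDerivOn μ univ e g g') (hg : MemLp g 2 μ) (hg' : MemLp g' 2 μ) {δ ε t : ℝ}
    (hε : 0 ≤ ε) (hδ : ∀ s ∈ Metric.ball (0 : ℝ) δ,
      eLpNorm (fun x => g' (x + s • e) - g' x) 2 μ ≤ ENNReal.ofReal ε)
    (ht : t ∈ Metric.ball (0 : ℝ) δ) (ht0 : t ≠ 0) (hφ : IsTestFunction univ φ) :
    |∫ x, ⟪diffQuot e t g x - g' x, φ x⟫ ∂μ| ≤ ε * (eLpNorm φ 2 μ).toReal := by
  set c := ∫ x, ⟪g' x, φ x⟫ ∂μ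
  set J : ℝ → ℝ := fun s => ∫ x, ⟪g (x + s • e), φ x⟫ ∂μ - s * c with hJ
  have hderiv (s : ℝ) : HasDerivAt J (∫ x, ⟪g' (x + s • e) - g' x, φ x⟫ ∂μ) s := by
    simp only [inner_sub_left]
    rw [integral_sub (integrable_inner_of_memLp (memLp_comp_add_right hg' _) (hφ.memLp 2))
      (integrable_inner_of_memLp hg' (hφ.memLp 2))]
    simpa only [one_mul] using! (h.hasDerivAt_integral_inner_comp_add_smul
      (hg.locallyIntegrable (by norm_num)) hφ s).sub ((hasDerivAt_id s).mul_const c)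
  have hmean := (convex_ball (0 : ℝ) δ).norm_image_sub_le_of_norm_hasDerivWithin_le
    (C := ε * (eLpNorm φ 2 μ).toReal) (fun s _ => (hderiv s).hasDerivWithinAt)
    (fun s hs => (abs_integral_inner_le ((memLp_comp_add_right hg' _).sub hg') (hφ.memLp 2)).trans
      (by gcongr; exact ENNReal.toReal_le_of_le_ofReal hε (hδ s hs)))
    (Metric.mem_ball_self (Metric.pos_of_mem_ball ht)) ht
  have hquot : ∫ x, ⟪diffQuot e t g x - g' x, φ x⟫ ∂μ = t⁻¹ * (J t - J 0) := by
    simp only [inner_sub_left]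
    rw [integral_sub (integrable_inner_of_memLp (memLp_diffQuot hg e t) (hφ.memLp 2))
      (integrable_inner_of_memLp hg' (hφ.memLp 2)), integral_inner_diffQuot hg (hφ.memLp 2)]
    simp only [hJ, zero_smul, add_zero]
    field_simp
    ring
  rw [hquot, abs_mul, abs_inv, inv_mul_le_iff₀ (abs_pos.2 ht0), mul_comm |t|]
  simpa using hmean

theorem HasWeakDirDerivOn.tendsto_eLpNorm_diffQuot_sub (h : HasWeakDirDerivOn μ univ e g g')
    (hg : MemLp g 2 μ) (hg' : MemLp g' 2 μ) :
    Tendsto (fun t : ℝ => eLpNorm (fun x => diffQuot e t g x - g' x) 2 μ)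
      (𝓝[≠] 0) (𝓝 0) := by
  rw [ENNReal.tendsto_nhds_zero]
  intro ε hε
  obtain ⟨r, hr, hrε⟩ := ENNReal.lt_iff_exists_nnreal_btwn.1 hε
  have hr' : (r : ℝ≥0∞) = ENNReal.ofReal r := (ENNReal.ofReal_coe_nnreal).symm
  have hshift := ENNReal.tendsto_nhds_zero.1
    (tendsto_eLpNorm_comp_add_smul_sub ENNReal.ofNat_ne_top hg' e) r hr
  obtain ⟨δ, hδ, hball⟩ := Metric.eventually_nhds_iff_ball.1 hshift
  rw [hr'] at hball
  filter_upwards [mem_nhdsWithin_of_mem_nhds (Metric.ball_mem_nhds 0 hδ), self_mem_nhdsWithin]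
    with t ht ht0
  refine (eLpNorm_two_le_of_forall_test ((memLp_diffQuot hg e t).sub hg') r.2 fun φ hφ =>
    h.abs_integral_inner_diffQuot_sub_le hg hg' r.2 hball ht ht0 hφ).trans ?_
  exact hr' ▸ hrε.le

theorem exists_hasWeakDirDerivOn_of_eLpNorm_diffQuot_le [CompleteSpace F] (hg : MemLp g 2 μ)
    {C : ℝ} (hC : ∀ᶠ t : ℝ in 𝓝[≠] 0, eLpNorm (diffQuot e t g) 2 μ ≤ ENNReal.ofReal C) :
    ∃ g', MemLp g' 2 μ ∧ HasWeakDirDerivOn μ univ e g g' := by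
  let D : ℝ → Lp F 2 μ := fun t => (memLp_diffQuot hg e t).toLp (diffQuot e t g)
  have hD : ∀ᶠ t in 𝓝[≠] 0, ‖D t‖ ≤ max C 0 := by
    filter_upwards [hC] with t ht
    rw [Lp.norm_toLp]
    exact ENNReal.toReal_le_of_le_ofReal (le_max_right _ _)
      (ht.trans (ENNReal.ofReal_le_ofReal (le_max_left _ _)))
  obtain ⟨𝒰, G, h𝒰, hlim⟩ := exists_ultrafilter_tendsto_inner hD
  refine ⟨G, Lp.memLp G, fun φ hφ => ?_⟩
  have hlim_weak : Tendsto (fun t => ∫ x, ⟪diffQuot e t g x, φ x⟫ ∂μ) 𝒰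
      (𝓝 (∫ x, ⟪G x, φ x⟫ ∂μ)) := by
    have := hlim ((hφ.memLp 2).toLp φ)
    rw [← Lp.toLp_coeFn G (Lp.memLp G), inner_toLp_toLp] at this
    simpa only [D, inner_toLp_toLp] using this
  have hlim_deriv : Tendsto (fun t => ∫ x, ⟪diffQuot e t g x, φ x⟫ ∂μ) (𝓝[≠] 0)
      (𝓝 (-∫ x, ⟪g x, fderiv ℝ φ x e⟫ ∂μ)) := by
    have hderiv := hasDerivAt_iff_tendsto_slope.1
      (hasDerivAt_integral_inner_comp_sub_smul (hg.locallyIntegrable (by norm_num)) hφ e 0)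
    simp only [zero_smul, sub_zero] at hderiv
    refine hderiv.congr fun t => ?_
    rw [integral_inner_diffQuot hg (hφ.memLp 2), slope_def_field, integral_inner_comp_sub]
    simp only [zero_smul, sub_zero, div_eq_inv_mul]
  rw [tendsto_nhds_unique hlim_weak (hlim_deriv.mono_left h𝒰), neg_neg]

end WeakDerivativeCalculus

/-! ### Convergence in `L²` -/

section SquareIntegrableConvergence

theorem tendsto_eLpNorm_of_le_mul {α ι F F' : Type*} [MeasurableSpace α] {μ : Measure α}
    [NormedAddCommGroup F] [NormedAddCommGroup F'] {l : Filter ι} {X : ι → α → F} {Y : ι → α → F'}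
    {C : ℝ} {p : ℝ≥0∞} (hle : ∀ i x, ‖Y i x‖ ≤ C * ‖X i x‖)
    (hX : Tendsto (fun i => eLpNorm (X i) p μ) l (𝓝 0)) :
    Tendsto (fun i => eLpNorm (Y i) p μ) l (𝓝 0) := by
  have hCX : Tendsto (fun i => ENNReal.ofReal C * eLpNorm (X i) p μ) l (𝓝 0) := by
    simpa using ENNReal.Tendsto.const_mul hX (Or.inr ENNReal.ofReal_ne_top)
  exact tendsto_of_tendsto_of_tendsto_of_le_of_le tendsto_const_nhds hCX (fun _ => zero_le)
    fun i => eLpNorm_le_mul_eLpNorm_of_ae_le_mul (ae_of_all _ (hle i)) p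

variable {α : Type*} [MeasurableSpace α] {μ : Measure α} {ι : Type*} {l : Filter ι}
  {V : Type*} [NormedAddCommGroup V] [InnerProductSpace ℝ V]

theorem tendsto_integral_inner {X Y : ι → α → V} {X₀ Y₀ : α → V} (hX : ∀ i, MemLp (X i) 2 μ)
    (hX₀ : MemLp X₀ 2 μ) (hY : ∀ i, MemLp (Y i) 2 μ) (hY₀ : MemLp Y₀ 2 μ)
    (hXlim : Tendsto (fun i => eLpNorm (fun x => X i x - X₀ x) 2 μ) l (𝓝 0))
    (hYlim : Tendsto (fun i => eLpNorm (fun x => Y i x - Y₀ x) 2 μ) l (𝓝 0)) :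
    Tendsto (fun i => ∫ x, ⟪X i x, Y i x⟫ ∂μ) l (𝓝 (∫ x, ⟪X₀ x, Y₀ x⟫ ∂μ)) := by
  have hLpX := (Lp.tendsto_Lp_iff_tendsto_eLpNorm'' X hX X₀ hX₀).2 hXlim
  have hLpY := (Lp.tendsto_Lp_iff_tendsto_eLpNorm'' Y hY Y₀ hY₀).2 hYlim
  simpa only [inner_toLp_toLp] using hLpX.inner (𝕜 := ℝ) hLpY

theorem tendsto_eLpNorm_two_of_dominated [l.IsCountablyGenerated] {X : ι → α → V} {b : α → ℝ}
    (hX : ∀ i, AEStronglyMeasurable (X i) μ) (hb : MemLp b 2 μ) (hXb : ∀ i x, ‖X i x‖ ≤ b x)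
    (hlim : ∀ᵐ x ∂μ, Tendsto (fun i => X i x) l (𝓝 0)) :
    Tendsto (fun i => eLpNorm (X i) 2 μ) l (𝓝 0) := by
  have hXL (i : ι) : MemLp (X i) 2 μ :=
    hb.mono (hX i) (ae_of_all _ fun x => (hXb i x).trans (le_abs_self _))
  have hinteg : Tendsto (fun i => ∫ x, ‖X i x‖ ^ 2 ∂μ) l (𝓝 (∫ _, 0 ∂μ)) := by
    refine tendsto_integral_filter_of_dominated_convergence (fun x => b x ^ 2)
      (.of_forall fun i => (hX i).norm.pow 2) (.of_forall fun i => ae_of_all _ fun x => ?_)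
      hb.integrable_sq ?_
    · rw [Real.norm_of_nonneg (sq_nonneg _)]
      gcongr
      exact hXb i x
    · filter_upwards [hlim] with x hx
      simpa using hx.norm.pow 2
  simp only [fun i => integral_norm_sq_eq (hXL i), integral_zero] at hinteg
  rw [← ENNReal.tendsto_toReal_iff (fun i => (hXL i).eLpNorm_ne_top) ENNReal.zero_ne_top]
  simpa using hinteg.sqrt

variable {B : ι → α → V →L[ℝ] V} {B₀ : α → V →L[ℝ] V} {Z : ι → α → V} {Z₀ : α → V} {Λ : ℝ}

theorem aestronglyMeasurable_clm_apply {B : α → V →L[ℝ] V} {Z : α → V}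
    (hB : AEStronglyMeasurable B μ) (hZ : AEStronglyMeasurable Z μ) :
    AEStronglyMeasurable (fun x => B x (Z x)) μ :=
  isBoundedBilinearMap_apply.continuous.comp_aestronglyMeasurable (hB.prodMk hZ)

theorem memLp_clm_apply {B : α → V →L[ℝ] V} {Z : α → V} (hB : AEStronglyMeasurable B μ)
    (hBΛ : ∀ x, ‖B x‖ ≤ Λ) (hZ : MemLp Z 2 μ) : MemLp (fun x => B x (Z x)) 2 μ :=
  hZ.of_le_mul (aestronglyMeasurable_clm_apply hB hZ.1)
    (ae_of_all _ fun x => (B x).le_of_opNorm_le (hBΛ x) _)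

theorem tendsto_eLpNorm_clm_apply_sub [l.IsCountablyGenerated]
    (hB : ∀ i, AEStronglyMeasurable (B i) μ) (hB₀ : AEStronglyMeasurable B₀ μ)
    (hBΛ : ∀ i x, ‖B i x‖ ≤ Λ) (hB₀Λ : ∀ x, ‖B₀ x‖ ≤ Λ)
    (hBlim : ∀ᵐ x ∂μ, Tendsto (fun i => B i x) l (𝓝 (B₀ x)))
    (hZ : ∀ i, MemLp (Z i) 2 μ) (hZ₀ : MemLp Z₀ 2 μ)
    (hZlim : Tendsto (fun i => eLpNorm (fun x => Z i x - Z₀ x) 2 μ) l (𝓝 0)) :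
    Tendsto (fun i => eLpNorm (fun x => B i x (Z i x) - B₀ x (Z₀ x)) 2 μ) l (𝓝 0) := by
  have hfield : Tendsto (fun i => eLpNorm (fun x => B i x (Z i x - Z₀ x)) 2 μ) l (𝓝 0) :=
    tendsto_eLpNorm_of_le_mul (fun i x => (B i x).le_of_opNorm_le (hBΛ i x) _) hZlim
  have hoperator : Tendsto (fun i => eLpNorm (fun x => (B i x - B₀ x) (Z₀ x)) 2 μ) l (𝓝 0) := by
    refine tendsto_eLpNorm_two_of_dominated
      (fun i => aestronglyMeasurable_clm_apply ((hB i).sub hB₀) hZ₀.1)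
      (hZ₀.norm.const_mul (Λ + Λ)) (fun i x => ?_) ?_
    · exact ContinuousLinearMap.le_of_opNorm_le _
        ((norm_sub_le _ _).trans (add_le_add (hBΛ i x) (hB₀Λ x))) _
    · filter_upwards [hBlim] with x hx
      have happly := (ContinuousLinearMap.apply ℝ V (Z₀ x)).continuous.tendsto (B₀ x - B₀ x)
      simpa [Function.comp_def] using happly.comp (hx.sub_const (B₀ x))
  have hsum := hfield.add hoperator
  rw [add_zero] at hsum
  refine tendsto_of_tendsto_of_tendsto_of_le_of_le tendsto_const_nhds hsum (fun _ => zero_le)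
    fun i => ?_
  have hsplit : (fun x => B i x (Z i x) - B₀ x (Z₀ x)) =
      (fun x => B i x (Z i x - Z₀ x)) + fun x => (B i x - B₀ x) (Z₀ x) := by
    funext x
    simp
  rw [hsplit]
  exact eLpNorm_add_le (aestronglyMeasurable_clm_apply (hB i) ((hZ i).sub hZ₀).1)
    (aestronglyMeasurable_clm_apply ((hB i).sub hB₀) hZ₀.1) one_le_two

theorem tendsto_integral_inner_clm_apply [l.IsCountablyGenerated]
    (hB : ∀ i, AEStronglyMeasurable (B i) μ) (hB₀ : AEStronglyMeasurable B₀ μ)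
    (hBΛ : ∀ i x, ‖B i x‖ ≤ Λ) (hB₀Λ : ∀ x, ‖B₀ x‖ ≤ Λ)
    (hBlim : ∀ᵐ x ∂μ, Tendsto (fun i => B i x) l (𝓝 (B₀ x)))
    (hZ : ∀ i, MemLp (Z i) 2 μ) (hZ₀ : MemLp Z₀ 2 μ)
    (hZlim : Tendsto (fun i => eLpNorm (fun x => Z i x - Z₀ x) 2 μ) l (𝓝 0)) :
    Tendsto (fun i => ∫ x, ⟪B i x (Z i x), Z i x⟫ ∂μ) l (𝓝 (∫ x, ⟪B₀ x (Z₀ x), Z₀ x⟫ ∂μ)) :=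
  tendsto_integral_inner (fun i => memLp_clm_apply (hB i) (hBΛ i) (hZ i))
    (memLp_clm_apply hB₀ hB₀Λ hZ₀) hZ hZ₀
    (tendsto_eLpNorm_clm_apply_sub hB hB₀ hBΛ hB₀Λ hBlim hZ hZ₀ hZlim) hZlim

theorem tendsto_integral_mul_norm {α ι F : Type*} [MeasurableSpace α] {μ : Measure α}
    [NormedAddCommGroup F] {l : Filter ι} {y : ι → α → F} {y₀ : α → F} {ψ : α → ℝ}
    (hψ : MemLp ψ 2 μ) (hy : ∀ i, MemLp (y i) 2 μ) (hy₀ : MemLp y₀ 2 μ)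
    (hlim : Tendsto (fun i => eLpNorm (fun x => y i x - y₀ x) 2 μ) l (𝓝 0)) :
    Tendsto (fun i => ∫ x, ψ x * ‖y i x‖ ∂μ) l (𝓝 (∫ x, ψ x * ‖y₀ x‖ ∂μ)) := by
  have hnorm : Tendsto (fun i => eLpNorm (fun x => ‖y i x‖ - ‖y₀ x‖) 2 μ) l (𝓝 0) :=
    tendsto_eLpNorm_of_le_mul (C := 1)
      (fun i x => by simpa using abs_norm_sub_norm_le (y i x) (y₀ x)) hlim
  simpa [mul_comm] using tendsto_integral_inner (fun _ => hψ) hψ (fun i => (hy i).norm) hy₀.norm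
    (by simp [tendsto_const_nhds]) hnorm

end SquareIntegrableConvergence

section ShiftedPoints

variable {E : Type*} [NormedAddCommGroup E] [NormedSpace ℝ E]

theorem eventually_forall_add_smul_mem {K U : Set E} (hK : IsCompact K) (hU : IsOpen U)
    (hKU : K ⊆ U) (e : E) : ∀ᶠ h : ℝ in 𝓝 0, ∀ x ∈ K, x + h • e ∈ U := by
  refine hK.eventually_forall_of_forall_eventually fun x hx => ?_
  have hcont : ContinuousAt (fun p : ℝ × E => p.2 + p.1 • e) (0, x) := by fun_prop
  exact hcont.eventually_mem (by simpa using hU.mem_nhds (hKU hx))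

theorem exists_seq_tendsto_ae_comp_add_smul [FiniteDimensional ℝ E] [MeasurableSpace E]
    [BorelSpace E] {μ : Measure E} [μ.IsAddHaarMeasure] {F : Type*} [NormedAddCommGroup F]
    {Z : E → F} {p : ℝ≥0∞} [Fact (1 ≤ p)] (hp : p ≠ ∞) (hZ : MemLp Z p μ) (e : E) :
    ∃ h : ℕ → ℝ, Tendsto h atTop (𝓝[≠] 0) ∧
      ∀ᵐ x ∂μ, Tendsto (fun j => Z (x + h j • e)) atTop (𝓝 (Z x)) := by
  have hmeasure : TendstoInMeasure μ (fun (h : ℝ) x => Z (x + h • e)) (𝓝[≠] 0) Z :=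
    tendstoInMeasure_of_tendsto_eLpNorm (zero_lt_one.trans_le Fact.out).ne'
      (fun h => (memLp_comp_add_right hZ _).1) hZ.1
      ((tendsto_eLpNorm_comp_add_smul_sub hp hZ e).mono_left nhdsWithin_le_nhds)
  obtain ⟨h, hh⟩ := exists_seq_tendsto (𝓝[≠] (0 : ℝ))
  obtain ⟨ns, hns, hae⟩ := (hmeasure.comp hh).exists_seq_tendsto_ae
  exact ⟨h ∘ ns, hh.comp hns.tendsto_atTop, hae⟩

end ShiftedPoints

/-! ### Weak gradients -/

theorem IsTestFunction.memLp_smul_of_restrict {E F : Type*} [NormedAddCommGroup E] [NormedSpace ℝ E]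
    [MeasurableSpace E] [BorelSpace E] {μ : Measure E} [NormedAddCommGroup F] [NormedSpace ℝ F]
    {U : Set E} {η : E → ℝ} {g : E → F} {p : ℝ≥0∞} (hη : IsTestFunction U η)
    (hU : MeasurableSet U) (hg : MemLp g p (μ.restrict U)) : MemLp (fun x => η x • g x) p μ := by
  obtain ⟨M, hM⟩ := hη.hasCompactSupport.exists_bound_of_continuous hη.continuous
  have hind : (fun x => η x • g x) = U.indicator fun x => η x • g x := by
    refine (indicator_eq_self.2 fun x hx => ?_).symm
    by_contra hxU
    simp [hη.eq_zero_of_notMem hxU] at hx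
  rw [hind, memLp_indicator_iff_restrict hU]
  refine hg.of_le_mul (c := M) (hη.continuous.aestronglyMeasurable.smul hg.1)
    (ae_of_all _ fun x => ?_)
  rw [norm_smul]
  gcongr
  exact hM x

theorem IsTestFunction.exists_norm_fderiv_le {E F : Type*} [NormedAddCommGroup E]
    [NormedSpace ℝ E] [NormedAddCommGroup F] [NormedSpace ℝ F] {U : Set E} {φ : E → F}
    (hφ : IsTestFunction U φ) : ∃ M, ∀ x, ‖fderiv ℝ φ x‖ ≤ M :=
  (hφ.hasCompactSupport.fderiv ℝ).exists_bound_of_continuous hφ.continuous_fderiv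

theorem IsTestFunction.clm_comp {E F F' : Type*} [NormedAddCommGroup E] [NormedSpace ℝ E]
    [NormedAddCommGroup F] [NormedSpace ℝ F] [NormedAddCommGroup F'] [NormedSpace ℝ F'] {U : Set E}
    {φ : E → F} (hφ : IsTestFunction U φ) (ℓ : F →L[ℝ] F') :
    IsTestFunction U fun x => ℓ (φ x) where
  contDiff := ℓ.contDiff.comp hφ.contDiff
  hasCompactSupport := hφ.hasCompactSupport.comp_left ℓ.map_zero
  tsupport_subset := (tsupport_comp_subset ℓ.map_zero φ).trans hφ.tsupport_subset

theorem IsTestFunction.fderiv_clm_comp {E F F' : Type*} [NormedAddCommGroup E] [NormedSpace ℝ E]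
    [NormedAddCommGroup F] [NormedSpace ℝ F] [NormedAddCommGroup F'] [NormedSpace ℝ F'] {U : Set E}
    {φ : E → F} (hφ : IsTestFunction U φ) (ℓ : F →L[ℝ] F') (x e : E) :
    fderiv ℝ (fun y => ℓ (φ y)) x e = ℓ (fderiv ℝ φ x e) :=
  congrArg (· e) (ℓ.hasFDerivAt.comp x (hφ.differentiable x).hasFDerivAt).fderiv

theorem locallyIntegrableOn_clm_comp {E F F' : Type*} [TopologicalSpace E] [MeasurableSpace E]
    {μ : Measure E} [NormedAddCommGroup F] [NormedSpace ℝ F] [NormedAddCommGroup F']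
    [NormedSpace ℝ F'] {U : Set E} {g : E → F} (ℓ : F →L[ℝ] F')
    (hg : LocallyIntegrableOn g U μ) : LocallyIntegrableOn (fun x => ℓ (g x)) U μ := fun x hx =>
  let ⟨s, hs, hinteg⟩ := hg x hx
  ⟨s, hs, ℓ.integrable_comp hinteg⟩

section Gradient

variable {N n : ℕ}

/-- Real `N × n` matrices with the Frobenius inner product. -/
abbrev EMat (N n : ℕ) := EuclideanSpace ℝ (Fin N × Fin n)

/-- The `i`-th column of a matrix. -/
def matCol (i : Fin n) : EMat N n →L[ℝ] EVec N where
  toFun z := WithLp.toLp 2 fun a => z (a, i)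
  map_add' _ _ := rfl
  map_smul' _ _ := rfl

/-- The matrix `y ⊗ ℓ`, whose `i`-th column is `ℓ eᵢ • y`. -/
noncomputable def outer (y : EVec N) (ℓ : EVec n →L[ℝ] ℝ) : EMat N n :=
  WithLp.toLp 2 fun q => ℓ (EuclideanSpace.single q.2 1) * y q.1

@[simp]
theorem matCol_apply (i : Fin n) (z : EMat N n) (a : Fin N) : matCol i z a = z (a, i) := rfl

@[simp]
theorem matCol_outer (i : Fin n) (y : EVec N) (ℓ : EVec n →L[ℝ] ℝ) :
    matCol i (outer y ℓ) = ℓ (EuclideanSpace.single i 1) • y := rfl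

theorem inner_eq_sum_inner_matCol (z w : EMat N n) :
    ⟪z, w⟫ = ∑ i, ⟪matCol i z, matCol i w⟫ := by
  simp only [PiLp.inner_apply, Fintype.sum_prod_type, matCol_apply]
  exact Finset.sum_comm

theorem norm_sq_eq_sum_norm_sq_matCol (z : EMat N n) : ‖z‖ ^ 2 = ∑ i, ‖matCol i z‖ ^ 2 := by
  simp only [← real_inner_self_eq_norm_sq, inner_eq_sum_inner_matCol]

theorem norm_matCol_le (i : Fin n) (z : EMat N n) : ‖matCol i z‖ ≤ ‖z‖ := by
  refine le_of_sq_le_sq ?_ (norm_nonneg _)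
  rw [norm_sq_eq_sum_norm_sq_matCol z]
  exact Finset.single_le_sum (f := fun i => ‖matCol i z‖ ^ 2) (fun _ _ => sq_nonneg _)
    (Finset.mem_univ i)

theorem norm_outer (y : EVec N) (ℓ : EVec n →L[ℝ] ℝ) : ‖outer y ℓ‖ = ‖ℓ‖ * ‖y‖ := by
  have hℓ : ‖ℓ‖ ^ 2 = ∑ i, ‖ℓ (EuclideanSpace.single i 1)‖ ^ 2 := by
    obtain ⟨p, rfl⟩ := (InnerProductSpace.toDual ℝ (EVec n)).surjective ℓ
    rw [LinearIsometryEquiv.norm_map, EuclideanSpace.norm_sq_eq]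
    simp [EuclideanSpace.inner_single_right]
  refine (sq_eq_sq₀ (norm_nonneg _) (by positivity)).1 ?_
  simp only [norm_sq_eq_sum_norm_sq_matCol, matCol_outer, norm_smul, mul_pow, hℓ, Finset.sum_mul]

theorem outer_sub (y y' : EVec N) (ℓ : EVec n →L[ℝ] ℝ) :
    outer (y - y') ℓ = outer y ℓ - outer y' ℓ := by
  ext q
  exact mul_sub _ _ _

theorem outer_zero_right (y : EVec N) : outer y (0 : EVec n →L[ℝ] ℝ) = 0 := by
  ext q
  exact zero_mul _

theorem outer_smul_right (y : EVec N) (c : ℝ) (ℓ : EVec n →L[ℝ] ℝ) :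
    outer y (c • ℓ) = c • outer y ℓ := by
  ext q
  exact mul_assoc _ _ _

theorem continuous_outer : Continuous fun p : EVec N × (EVec n →L[ℝ] ℝ) => outer p.1 p.2 :=
  (PiLp.continuous_toLp 2 _).comp <| continuous_pi fun q =>
    (continuous_snd.clm_apply continuous_const).mul
      ((EuclideanSpace.proj q.1).continuous.comp continuous_fst)

theorem IsTestFunction.memLp_outer_fderiv {U : Set (EVec n)} {η : EVec n → ℝ} {y : EVec n → EVec N}
    {p : ℝ≥0∞} {μ : Measure (EVec n)} (hη : IsTestFunction U η) (hy : MemLp y p μ) :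
    MemLp (fun x => outer (y x) (fderiv ℝ η x)) p μ := by
  obtain ⟨M, hM⟩ := hη.exists_norm_fderiv_le
  refine hy.of_le_mul (c := M) (continuous_outer.comp_aestronglyMeasurable
    (hy.1.prodMk hη.continuous_fderiv.aestronglyMeasurable)) (ae_of_all _ fun x => ?_)
  rw [norm_outer]
  gcongr
  exact hM x

/-- `Dv` is the weak gradient of the vector field `v` on the open set `U`: its columns are the
weak partial derivatives of `v`. -/
def HasWeakGradOn (U : Set (EVec n)) (v : EVec n → EVec N) (Dv : EVec n → EMat N n) : Prop :=
  ∀ i, HasWeakDirDerivOn volume U (EuclideanSpace.single i 1) v fun x => matCol i (Dv x)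

namespace HasWeakGradOn

variable {U : Set (EVec n)} {v : EVec n → EVec N} {Dv : EVec n → EMat N n}

theorem diffQuot_diffQuot (h : HasWeakGradOn univ v Dv) (hv : MemLp v 2) (hDv : MemLp Dv 2)
    (d : EVec n) (t : ℝ) : HasWeakGradOn univ (diffQuot d t v) (diffQuot d t Dv) := by
  intro i
  have hcol : (fun x => matCol i (diffQuot d t Dv x)) = diffQuot d t fun x => matCol i (Dv x) := by
    funext x
    simp only [diffQuot, map_smul, map_sub]
  rw [hcol]
  exact (h i).diffQuot_diffQuot hv ((matCol i).comp_memLp' hDv) d t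

theorem smul {η : EVec n → ℝ} (h : HasWeakGradOn U v Dv) (hv : LocallyIntegrableOn v U)
    (hDv : LocallyIntegrableOn Dv U) (hη : IsTestFunction U η) :
    HasWeakGradOn univ (fun x => η x • v x)
      (fun x => η x • Dv x + outer (v x) (fderiv ℝ η x)) := by
  intro i
  simpa using (h i).smul hv (locallyIntegrableOn_clm_comp (matCol i) hDv) hη

end HasWeakGradOn

end Gradient

/-! ### The Caccioppoli inequality for difference quotients -/

section SecantOperator

variable {E V : Type*} [NormedAddCommGroup E] [NormedSpace ℝ E] [NormedAddCommGroup V]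
  [InnerProductSpace ℝ V] {κ Λ : ℝ} {A : V → V} {DA : V → V →L[ℝ] V}

/-- For a field `A` with derivative `DA`, the linear operator `S` with
`S(x) (Δₕ Z)(x) = Δₕ(A ∘ Z)(x)`, where `Δₕ` is the difference quotient in direction `e`. -/
noncomputable def secantOp (DA : V → V →L[ℝ] V) (Z : E → V) (e : E) (h : ℝ) (x : E) : V →L[ℝ] V :=
  segmentMean DA (Z x) (Z (x + h • e))

theorem aestronglyMeasurable_secantOp [MeasurableSpace E] [BorelSpace E]
    {μ : Measure E} [μ.IsAddHaarMeasure] {Z : E → V} {p : ℝ≥0∞} (hDA : Continuous DA)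
    (hZ : MemLp Z p μ) (e : E) (h : ℝ) : AEStronglyMeasurable (secantOp DA Z e h) μ :=
  (continuous_segmentMean hDA).comp_aestronglyMeasurable
    (hZ.1.prodMk (memLp_comp_add_right hZ (h • e)).1)

variable [CompleteSpace V]

theorem IsEllipticField.secantOp_apply_diffQuot (hA : IsEllipticField κ Λ A DA) (Z : E → V) (e : E)
    (h : ℝ) (x : E) :
    secantOp DA Z e h x (diffQuot e h Z x) = diffQuot e h (fun y => A (Z y)) x := by
  rw [secantOp, diffQuot, map_smul, hA.segmentMean_apply_sub, diffQuot]

theorem IsEllipticField.secantOp_elliptic (hA : IsEllipticField κ Λ A DA) (Z : E → V) (e : E)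
    (h : ℝ) (x : E) : IsEllipticOperator κ Λ (secantOp DA Z e h x) :=
  hA.segmentMean_elliptic _ _

theorem tendsto_secantOp {ι : Type*} {l : Filter ι} {Z : E → V} {e x : E} {h : ι → ℝ}
    (hDA : Continuous DA) (hlim : Tendsto (fun i => Z (x + h i • e)) l (𝓝 (Z x))) :
    Tendsto (fun i => secantOp DA Z e (h i) x) l (𝓝 (DA (Z x))) := by
  have := ((continuous_segmentMean hDA).tendsto (Z x, Z x)).comp
    ((tendsto_const_nhds (x := Z x)).prodMk_nhds hlim)
  simpa only [segmentMean_self] using! this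

end SecantOperator

section Caccioppoli

variable {N n : ℕ} {κ Λ : ℝ} {A : EMat N n → EMat N n} {DA : EMat N n → EMat N n →L[ℝ] EMat N n}
  {U : Set (EVec n)} {b v : EVec n → EVec N} {Dv : EVec n → EMat N n} {η : EVec n → ℝ}

/-- `v`, with weak gradient `Dv`, is a weak solution of `-div A(Dv) = b` in `U`. Both `v` and `b`
are given on the whole space, and the test fields are the `W^{1,2}` fields vanishing off `U`. -/
structure IsLocalSolution (A : EMat N n → EMat N n) (U : Set (EVec n)) (b v : EVec n → EVec N)
    (Dv : EVec n → EMat N n) : Prop where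
  memLp : MemLp v 2
  memLp_grad : MemLp Dv 2
  memLp_rhs : MemLp b 2
  hasWeakGradOn : HasWeakGradOn univ v Dv
  integral_eq : ∀ w Dw, MemLp w 2 → MemLp Dw 2 → HasWeakGradOn univ w Dw →
    (∀ x ∉ U, w x = 0) → (∀ x ∉ U, Dw x = 0) →
    ∫ x, ⟪A (Dv x), Dw x⟫ = ∫ x, ⟪b x, w x⟫

theorem diffQuot_neg_eq_zero {E F : Type*} [NormedAddCommGroup E] [NormedSpace ℝ E]
    [AddCommGroup F] [Module ℝ F] {K U : Set E} {g : E → F} {e : E} {h : ℝ}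
    (hg : ∀ x ∉ K, g x = 0) (hKU : K ⊆ U) (hshift : ∀ x ∈ K, x + h • e ∈ U) {x : E}
    (hx : x ∉ U) : diffQuot e (-h) g x = 0 := by
  have hxe : x + (-h) • e ∉ K := fun hmem => hx (by simpa [neg_smul] using hshift _ hmem)
  rw [diffQuot, hg x fun hxK => hx (hKU hxK), hg _ hxe, sub_zero, smul_zero]

theorem IsLocalSolution.integral_inner_diffQuot_eq (hv : IsLocalSolution A U b v Dv)
    (hA : IsEllipticField κ Λ A DA) {K : Set (EVec n)} {e : EVec n} {h : ℝ} (hKU : K ⊆ U)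
    (hshift : ∀ x ∈ K, x + h • e ∈ U) {w : EVec n → EVec N} {Dw : EVec n → EMat N n}
    (hw : MemLp w 2) (hDw : MemLp Dw 2) (hgrad : HasWeakGradOn univ w Dw)
    (hw0 : ∀ x ∉ K, w x = 0) (hDw0 : ∀ x ∉ K, Dw x = 0) :
    ∫ x, ⟪diffQuot e h (fun y => A (Dv y)) x, Dw x⟫ = ∫ x, ⟪diffQuot e h b x, w x⟫ := by
  rw [integral_inner_diffQuot_eq_neg (hA.memLp_comp hv.memLp_grad) hDw,
    integral_inner_diffQuot_eq_neg hv.memLp_rhs hw,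
    hv.integral_eq _ _ (memLp_diffQuot hw e (-h)) (memLp_diffQuot hDw e (-h))
      (hgrad.diffQuot_diffQuot hw hDw e (-h))
      (fun _ hx => diffQuot_neg_eq_zero hw0 hKU hshift hx)
      (fun _ hx => diffQuot_neg_eq_zero hDw0 hKU hshift hx)]

/-- `2 y ⊗ ∇η`, so that `∇(η² y) = η² ∇y + η (2 y ⊗ ∇η)`. -/
noncomputable def cutoffTerm (η : EVec n → ℝ) (y : EVec n → EVec N) (x : EVec n) : EMat N n :=
  (2 : ℝ) • outer (y x) (fderiv ℝ η x)

theorem IsTestFunction.sq (hη : IsTestFunction U η) : IsTestFunction U fun x => η x ^ 2 := by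
  simp only [pow_two]
  exact hη.smul hη.contDiff

theorem IsTestFunction.memLp_smul {F : Type*} [NormedAddCommGroup F] [NormedSpace ℝ F]
    {g : EVec n → F} {p : ℝ≥0∞} (hη : IsTestFunction U η) (hg : MemLp g p) :
    MemLp (fun x => η x • g x) p :=
  (hη.mono (subset_univ U)).memLp_smul_of_restrict MeasurableSet.univ
    (by rwa [Measure.restrict_univ])

theorem IsTestFunction.memLp_cutoffTerm (hη : IsTestFunction U η) {y : EVec n → EVec N}
    (hy : MemLp y 2) : MemLp (cutoffTerm η y) 2 :=
  (hη.memLp_outer_fderiv hy).const_smul (2 : ℝ)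

theorem HasWeakGradOn.sq_smul (h : HasWeakGradOn univ v Dv) (hv : MemLp v 2) (hDv : MemLp Dv 2)
    (hη : IsTestFunction univ η) :
    HasWeakGradOn univ (fun x => η x ^ 2 • v x)
      (fun x => η x ^ 2 • Dv x + η x • cutoffTerm η v x) := by
  have hloc := h.smul ((hv.locallyIntegrable one_le_two).locallyIntegrableOn _)
    ((hDv.locallyIntegrable one_le_two).locallyIntegrableOn _) hη.sq
  have hfderiv (x : EVec n) : fderiv ℝ (fun x => η x ^ 2) x = (2 * η x) • fderiv ℝ η x := by
    simpa using ((hη.differentiable x).hasFDerivAt.pow 2).fderiv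
  have houter (x : EVec n) :
      outer (v x) (fderiv ℝ (fun x => η x ^ 2) x) = η x • cutoffTerm η v x := by
    rw [hfderiv, outer_smul_right, cutoffTerm, smul_smul, mul_comm]
  simpa only [houter] using hloc

theorem norm_diffQuot_le_of_lipschitzOnWith {E F : Type*} [NormedAddCommGroup E] [NormedSpace ℝ E]
    [NormedAddCommGroup F] [NormedSpace ℝ F] {C : NNReal} {U : Set E} {g : E → F}
    (hg : LipschitzOnWith C g U) {e x : E} (he : ‖e‖ ≤ 1) {h : ℝ} (hx : x ∈ U)
    (hxe : x + h • e ∈ U) : ‖diffQuot e h g x‖ ≤ C := by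
  have hlip := hg.norm_sub_le hxe hx
  rw [add_sub_cancel_left, norm_smul] at hlip
  rw [diffQuot, norm_smul, norm_inv]
  calc ‖h‖⁻¹ * ‖g (x + h • e) - g x‖ ≤ ‖h‖⁻¹ * (C * (‖h‖ * 1)) := by
        gcongr
        exact hlip.trans (by gcongr)
    _ = C * (‖h‖⁻¹ * ‖h‖) := by ring
    _ ≤ C := mul_le_of_le_one_right C.2 (inv_mul_le_one)

theorem integral_inner_diffQuot_sq_smul_le {C : NNReal} (hb : LipschitzOnWith C b U)
    (hbL : MemLp b 2) (hv : MemLp v 2) (hη : IsTestFunction U η) {e : EVec n} (he : ‖e‖ ≤ 1)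
    {h : ℝ} (hshift : ∀ x ∈ tsupport η, x + h • e ∈ U) :
    ∫ x, ⟪diffQuot e h b x, η x ^ 2 • v x⟫ ≤ C * ∫ x, η x ^ 2 * ‖v x‖ := by
  have hηv : MemLp (fun x => η x ^ 2 • v x) 2 := hη.sq.memLp_smul hv
  rw [← integral_const_mul]
  refine integral_mono (integrable_inner_of_memLp (memLp_diffQuot hbL e h) hηv)
    (((hη.sq.memLp 2).integrable_mul hv.norm).const_mul _) fun x => ?_
  by_cases hx : x ∈ tsupport η
  · have hbx := norm_diffQuot_le_of_lipschitzOnWith hb he (hη.tsupport_subset hx) (hshift x hx)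
    calc ⟪diffQuot e h b x, η x ^ 2 • v x⟫ ≤ ‖diffQuot e h b x‖ * ‖η x ^ 2 • v x‖ :=
          real_inner_le_norm _ _
      _ ≤ C * (η x ^ 2 * ‖v x‖) := by
          rw [norm_smul, Real.norm_of_nonneg (sq_nonneg _)]
          gcongr
  · simp [image_eq_zero_of_notMem_tsupport hx]

theorem IsLocalSolution.integral_secantOp_diffQuot_le (hv : IsLocalSolution A U b v Dv)
    (hA : IsEllipticField κ Λ A DA) {C : NNReal} (hb : LipschitzOnWith C b U)
    (hη : IsTestFunction U η) {e : EVec n} (he : ‖e‖ ≤ 1) {h : ℝ}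
    (hshift : ∀ x ∈ tsupport η, x + h • e ∈ U) :
    ∫ x, η x ^ 2 * ⟪secantOp DA Dv e h x (diffQuot e h Dv x), diffQuot e h Dv x⟫ ≤
      (∫ x, ⟪secantOp DA Dv e h x (cutoffTerm η (diffQuot e h v) x),
        cutoffTerm η (diffQuot e h v) x⟫) + 2 * C * ∫ x, η x ^ 2 * ‖diffQuot e h v x‖ := by
  set S := secantOp DA Dv e h
  set ζ := cutoffTerm η (diffQuot e h v)
  set Δ := diffQuot e h Dv
  have hΔv := memLp_diffQuot hv.memLp e h
  have hΔDv : MemLp Δ 2 := memLp_diffQuot hv.memLp_grad e h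
  have hζ : MemLp ζ 2 := hη.memLp_cutoffTerm hΔv
  have hS : AEStronglyMeasurable S :=
    aestronglyMeasurable_secantOp hA.continuous_deriv hv.memLp_grad e h
  have hSΛ (x : EVec n) : ‖S x‖ ≤ Λ := (hA.secantOp_elliptic Dv e h x).norm_le
  have hSΔ : MemLp (fun x => S x (Δ x)) 2 := memLp_clm_apply hS hSΛ hΔDv
  have hSζ : MemLp (fun x => S x (ζ x)) 2 := memLp_clm_apply hS hSΛ hζ
  have hηΔ : MemLp (fun x => η x ^ 2 • Δ x) 2 := hη.sq.memLp_smul hΔDv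
  have hW : MemLp (fun x => η x ^ 2 • Δ x + η x • ζ x) 2 := hηΔ.add (hη.memLp_smul hζ)
  have hη0 : ∀ x ∉ tsupport η, η x = 0 := fun x hx => image_eq_zero_of_notMem_tsupport hx
  have hequation : ∫ x, ⟪S x (Δ x), η x ^ 2 • Δ x + η x • ζ x⟫ =
      ∫ x, ⟪diffQuot e h b x, η x ^ 2 • diffQuot e h v x⟫ := by
    simp only [S, Δ, hA.secantOp_apply_diffQuot]
    exact hv.integral_inner_diffQuot_eq hA hη.tsupport_subset hshift (hη.sq.memLp_smul hΔv) hW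
      ((hv.hasWeakGradOn.diffQuot_diffQuot hv.memLp hv.memLp_grad e h).sq_smul hΔv hΔDv
        (hη.mono (subset_univ U)))
      (fun x hx => by simp [hη0 x hx]) (fun x hx => by simp [hη0 x hx])
  have hleft : Integrable fun x => η x ^ 2 * ⟪S x (Δ x), Δ x⟫ := by
    simpa only [real_inner_smul_right] using integrable_inner_of_memLp hSΔ hηΔ
  have hyoung := integral_mono (hleft.sub (integrable_inner_of_memLp hSζ hζ))
    ((integrable_inner_of_memLp hSΔ hW).const_mul 2)
    fun x => (hA.secantOp_elliptic Dv e h x).sq_mul_inner_self_sub_le (η x) (Δ x) (ζ x)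
  simp only [Pi.sub_apply] at hyoung
  rw [integral_sub hleft (integrable_inner_of_memLp hSζ hζ), integral_const_mul,
    hequation] at hyoung
  have hright := integral_inner_diffQuot_sq_smul_le hb hv.memLp_rhs hΔv hη he hshift
  linarith

end Caccioppoli

section SecondDerivative

variable {N n : ℕ} {κ Λ : ℝ} {A : EMat N n → EMat N n} {DA : EMat N n → EMat N n →L[ℝ] EMat N n}
  {U : Set (EVec n)} {b v : EVec n → EVec N} {Dv G : EVec n → EMat N n} {η : EVec n → ℝ}

theorem norm_cutoffTerm (η : EVec n → ℝ) (y : EVec n → EVec N) (x : EVec n) :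
    ‖cutoffTerm η y x‖ = 2 * ‖fderiv ℝ η x‖ * ‖y x‖ := by
  rw [cutoffTerm, norm_smul, norm_outer, Real.norm_ofNat, mul_assoc]

theorem IsTestFunction.tendsto_eLpNorm_cutoffTerm_sub {ι : Type*} {l : Filter ι}
    {y : ι → EVec n → EVec N} {y₀ : EVec n → EVec N} (hη : IsTestFunction U η)
    (hlim : Tendsto (fun i => eLpNorm (fun x => y i x - y₀ x) 2) l (𝓝 0)) :
    Tendsto (fun i => eLpNorm (fun x => cutoffTerm η (y i) x - cutoffTerm η y₀ x) 2) l (𝓝 0) := by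
  obtain ⟨M, hM⟩ := hη.exists_norm_fderiv_le
  refine tendsto_eLpNorm_of_le_mul (C := 2 * M) (fun i x => ?_) hlim
  have hsub : cutoffTerm η (y i) x - cutoffTerm η y₀ x =
      cutoffTerm η (fun x => y i x - y₀ x) x := by
    simp only [cutoffTerm, outer_sub, smul_sub]
  rw [hsub, norm_cutoffTerm]
  gcongr
  exact hM x

theorem diffQuot_smul {E F : Type*} [NormedAddCommGroup E] [NormedSpace ℝ E] [AddCommGroup F]
    [Module ℝ F] (η : E → ℝ) (g : E → F) (e : E) (h : ℝ) (x : E) :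
    diffQuot e h (fun y => η y • g y) x =
      η x • diffQuot e h g x + diffQuot e h η x • g (x + h • e) := by
  simp only [diffQuot, smul_sub, sub_smul, smul_eq_mul, mul_sub, smul_smul, mul_comm (η x)]
  abel

theorem IsTestFunction.exists_eLpNorm_diffQuot_smul_le {E F : Type*} [NormedAddCommGroup E]
    [NormedSpace ℝ E] [MeasurableSpace E] [BorelSpace E] {μ : Measure E}
    [μ.IsAddHaarMeasure] [NormedAddCommGroup F] [NormedSpace ℝ F] {U : Set E} {η : E → ℝ}
    {g : E → F} (hη : IsTestFunction U η) (hg : MemLp g 2 μ) {e : E} (he : ‖e‖ ≤ 1) :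
    ∃ C : NNReal, ∀ h, eLpNorm (diffQuot e h fun x => η x • g x) 2 μ ≤
      eLpNorm (fun x => η x • diffQuot e h g x) 2 μ + C := by
  obtain ⟨M, hM⟩ := hη.contDiff.lipschitzWith_of_hasCompactSupport hη.hasCompactSupport one_ne_zero
  have hMn (h : ℝ) (x : E) : ‖diffQuot e h η x‖ ≤ M :=
    norm_diffQuot_le_of_lipschitzOnWith hM.lipschitzOnWith he (mem_univ x) (mem_univ _)
  have hshift (h : ℝ) := memLp_comp_add_right hg (h • e)
  have hΔη (h : ℝ) : AEStronglyMeasurable (diffQuot e h η) μ := (memLp_diffQuot (hη.memLp 2) e h).1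
  refine ⟨M * (eLpNorm g 2 μ).toNNReal, fun h => ?_⟩
  have hsum : (diffQuot e h fun x => η x • g x) =
      (fun x => η x • diffQuot e h g x) + fun x => diffQuot e h η x • g (x + h • e) :=
    funext (diffQuot_smul η g e h)
  rw [hsum]
  refine (eLpNorm_add_le (hη.continuous.aestronglyMeasurable.smul (memLp_diffQuot hg e h).1)
    ((hΔη h).smul (hshift h).1) one_le_two).trans (add_le_add le_rfl ?_)
  rw [ENNReal.coe_mul, ENNReal.coe_toNNReal hg.eLpNorm_ne_top]
  calc eLpNorm (fun x => diffQuot e h η x • g (x + h • e)) 2 μ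
      ≤ ENNReal.ofReal M * eLpNorm (fun x => g (x + h • e)) 2 μ :=
        eLpNorm_le_mul_eLpNorm_of_ae_le_mul (ae_of_all _ fun x => by
          rw [norm_smul]
          gcongr
          exact hMn h x) 2
    _ = M * eLpNorm g 2 μ := by
        rw [ENNReal.ofReal_coe_nnreal]
        congr 1
        exact eLpNorm_comp_measurePreserving hg.1 (measurePreserving_add_right μ _)

theorem IsEllipticField.eLpNorm_smul_diffQuot_le (hA : IsEllipticField κ Λ A DA) (hκ : 0 < κ)
    (hDv : MemLp Dv 2) (hη : IsTestFunction U η) {e : EVec n} {h C : ℝ}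
    (hC : ∫ x, η x ^ 2 * ⟪secantOp DA Dv e h x (diffQuot e h Dv x), diffQuot e h Dv x⟫ ≤ C) :
    eLpNorm (fun x => η x • diffQuot e h Dv x) 2 ≤ ENNReal.ofReal (√(κ⁻¹ * C)) := by
  have hΔ := memLp_diffQuot hDv e h
  have hηΔ : MemLp (fun x => η x • diffQuot e h Dv x) 2 := hη.memLp_smul hΔ
  have hSΔ := memLp_clm_apply (aestronglyMeasurable_secantOp hA.continuous_deriv hDv e h)
    (fun x => (hA.secantOp_elliptic Dv e h x).norm_le) hΔ
  have hinteg := integrable_inner_of_memLp hSΔ (hη.sq.memLp_smul hΔ)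
  simp only [real_inner_smul_right] at hinteg
  refine (ENNReal.le_ofReal_iff_toReal_le hηΔ.eLpNorm_ne_top (Real.sqrt_nonneg _)).2 ?_
  refine Real.le_sqrt_of_sq_le ?_
  rw [← integral_norm_sq_eq hηΔ, le_inv_mul_iff₀ hκ, ← integral_const_mul]
  refine (integral_mono (hηΔ.norm.integrable_sq.const_mul κ) hinteg fun x => ?_).trans hC
  have helliptic := (hA.secantOp_elliptic Dv e h x).le_inner (diffQuot e h Dv x)
  calc κ * ‖η x • diffQuot e h Dv x‖ ^ 2 = η x ^ 2 * (κ * ‖diffQuot e h Dv x‖ ^ 2) := by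
        rw [norm_smul, mul_pow, Real.norm_eq_abs, sq_abs]
        ring
    _ ≤ η x ^ 2 * ⟪secantOp DA Dv e h x (diffQuot e h Dv x), diffQuot e h Dv x⟫ := by gcongr

theorem IsLocalSolution.memLp_matCol (hv : IsLocalSolution A U b v Dv) (s : Fin n) :
    MemLp (fun x => matCol s (Dv x)) 2 :=
  (matCol s).comp_memLp' hv.memLp_grad

theorem IsLocalSolution.tendsto_eLpNorm_diffQuot_sub (hv : IsLocalSolution A U b v Dv) (s : Fin n) :
    Tendsto (fun h : ℝ => eLpNorm
      (fun x => diffQuot (EuclideanSpace.single s 1) h v x - matCol s (Dv x)) 2) (𝓝[≠] 0) (𝓝 0) :=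
  (hv.hasWeakGradOn s).tendsto_eLpNorm_diffQuot_sub hv.memLp (hv.memLp_matCol s)

theorem IsLocalSolution.exists_eventually_integral_secantOp_diffQuot_le
    (hv : IsLocalSolution A U b v Dv) (hA : IsEllipticField κ Λ A DA) (hU : IsOpen U)
    {CT : NNReal} (hb : LipschitzOnWith CT b U) (hη : IsTestFunction U η) (s : Fin n) :
    ∃ C, ∀ᶠ h : ℝ in 𝓝[≠] 0, ∫ x, η x ^ 2 *
      ⟪secantOp DA Dv (EuclideanSpace.single s 1) h x (diffQuot (EuclideanSpace.single s 1) h Dv x),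
        diffQuot (EuclideanSpace.single s 1) h Dv x⟫ ≤ C := by
  set e : EVec n := EuclideanSpace.single s 1
  set ζ := fun h : ℝ => cutoffTerm η (diffQuot e h v)
  set ζ₀ := cutoffTerm η fun x => matCol s (Dv x)
  have hΔv (h : ℝ) : MemLp (diffQuot e h v) 2 := memLp_diffQuot hv.memLp e h
  have hζ (h : ℝ) : MemLp (ζ h) 2 := hη.memLp_cutoffTerm (hΔv h)
  have hζ₀ : MemLp ζ₀ 2 := hη.memLp_cutoffTerm (hv.memLp_matCol s)
  have hlim := hv.tendsto_eLpNorm_diffQuot_sub s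
  have hζlim := hη.tendsto_eLpNorm_cutoffTerm_sub hlim
  have hbound := ((tendsto_integral_inner hζ hζ₀ hζ hζ₀ hζlim hζlim).const_mul Λ).add
    ((tendsto_integral_mul_norm (hη.sq.memLp 2) hΔv (hv.memLp_matCol s) hlim).const_mul
      (2 * CT : ℝ))
  obtain ⟨C, hC⟩ := hbound.isBoundedUnder_le
  refine ⟨C, ?_⟩
  have hshift := (eventually_forall_add_smul_mem hη.hasCompactSupport.isCompact hU
    hη.tsupport_subset e).filter_mono (nhdsWithin_le_nhds (s := {0}ᶜ))
  filter_upwards [eventually_map.1 hC, hshift] with h hCh hsh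
  refine (hv.integral_secantOp_diffQuot_le hA hb hη (by simp [e]) hsh).trans (le_trans ?_ hCh)
  gcongr
  rw [← integral_const_mul]
  have hS := aestronglyMeasurable_secantOp hA.continuous_deriv hv.memLp_grad e h
  have hell := hA.secantOp_elliptic Dv e h
  refine integral_mono (integrable_inner_of_memLp (memLp_clm_apply hS (fun x => (hell x).norm_le)
    (hζ h)) (hζ h)) ((integrable_inner_of_memLp (hζ h) (hζ h)).const_mul Λ) fun x => ?_
  simpa only [real_inner_self_eq_norm_sq] using (hell x).inner_self_le (ζ h x)

theorem IsLocalSolution.exists_hasWeakDirDerivOn_smul_grad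
    (hv : IsLocalSolution A U b v Dv) (hA : IsEllipticField κ Λ A DA) (hκ : 0 < κ) (hU : IsOpen U)
    {CT : NNReal} (hb : LipschitzOnWith CT b U) (hη : IsTestFunction U η) (s : Fin n) :
    ∃ G, MemLp G 2 ∧
      HasWeakDirDerivOn volume univ (EuclideanSpace.single s 1) (fun x => η x • Dv x) G := by
  obtain ⟨C, hC⟩ := hv.exists_eventually_integral_secantOp_diffQuot_le hA hU hb hη s
  obtain ⟨C', hC'⟩ := hη.exists_eLpNorm_diffQuot_smul_le hv.memLp_grad
    (e := EuclideanSpace.single s 1) (by simp)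
  refine exists_hasWeakDirDerivOn_of_eLpNorm_diffQuot_le (hη.memLp_smul hv.memLp_grad)
    (C := √(κ⁻¹ * C) + C') ?_
  filter_upwards [hC] with h hCh
  refine (hC' h).trans ?_
  rw [ENNReal.ofReal_add (Real.sqrt_nonneg _) C'.coe_nonneg, ENNReal.ofReal_coe_nnreal]
  gcongr
  exact hA.eLpNorm_smul_diffQuot_le hκ hv.memLp_grad hη hCh

theorem IsLocalSolution.eventually_setIntegral_secantOp_diffQuot_le
    (hv : IsLocalSolution A U b v Dv) (hA : IsEllipticField κ Λ A DA) (hU : IsOpen U)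
    {CT : NNReal} (hb : LipschitzOnWith CT b U) (hη : IsTestFunction U η) {e : EVec n}
    (he : ‖e‖ ≤ 1) {K : Set (EVec n)} (hK : IsCompact K) (hKη : K ⊆ interior {x | η x = 1}) :
    ∀ᶠ h : ℝ in 𝓝 0,
      ∫ x in K, ⟪secantOp DA Dv e h x (diffQuot e h (fun y => η y • Dv y) x),
        diffQuot e h (fun y => η y • Dv y) x⟫ ≤
      (∫ x, ⟪secantOp DA Dv e h x (cutoffTerm η (diffQuot e h v) x),
        cutoffTerm η (diffQuot e h v) x⟫) + 2 * CT * ∫ x, η x ^ 2 * ‖diffQuot e h v x‖ := by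
  filter_upwards [eventually_forall_add_smul_mem hη.hasCompactSupport.isCompact hU
      hη.tsupport_subset e, eventually_forall_add_smul_mem hK isOpen_interior hKη e]
    with h hshift hshiftK
  refine le_trans ?_ (hv.integral_secantOp_diffQuot_le hA hb hη he hshift)
  have hell := hA.secantOp_elliptic Dv e h
  have hΔ := memLp_diffQuot hv.memLp_grad e h
  have hSΔ := memLp_clm_apply (aestronglyMeasurable_secantOp hA.continuous_deriv hv.memLp_grad e h)
    (fun x => (hell x).norm_le) hΔ
  have hinteg := integrable_inner_of_memLp hSΔ (hη.sq.memLp_smul hΔ)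
  simp only [real_inner_smul_right] at hinteg
  refine le_trans (le_of_eq ?_) (setIntegral_le_integral (s := K) hinteg
    (ae_of_all _ fun x => mul_nonneg (sq_nonneg _) ((hell x).inner_self_nonneg _)))
  refine setIntegral_congr_fun hK.measurableSet fun x hx => ?_
  have hηx : η x = 1 := (interior_subset (hKη hx) : x ∈ {x | η x = 1})
  have hηxe : η (x + h • e) = 1 := (interior_subset (hshiftK x hx) : x + h • e ∈ {x | η x = 1})
  simp only [diffQuot, hηx, hηxe, one_smul, one_pow, one_mul]

theorem IsLocalSolution.setIntegral_deriv_le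
    (hv : IsLocalSolution A U b v Dv) (hA : IsEllipticField κ Λ A DA) (hU : IsOpen U)
    {CT : NNReal} (hb : LipschitzOnWith CT b U) (hη : IsTestFunction U η) (s : Fin n)
    (hG : MemLp G 2)
    (hGη : HasWeakDirDerivOn volume univ (EuclideanSpace.single s 1) (fun x => η x • Dv x) G)
    {K : Set (EVec n)} (hK : IsCompact K) (hKη : K ⊆ interior {x | η x = 1}) :
    ∫ x in K, ⟪DA (Dv x) (G x), G x⟫ ≤
      (∫ x, ⟪DA (Dv x) (cutoffTerm η (fun y => matCol s (Dv y)) x),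
        cutoffTerm η (fun y => matCol s (Dv y)) x⟫) +
      2 * CT * ∫ x, η x ^ 2 * ‖matCol s (Dv x)‖ := by
  set e : EVec n := EuclideanSpace.single s 1
  -- Along `h` the translates `Dv (x + h j • e)` converge almost everywhere, hence so do the secant
  -- operators; these are bounded, so their products with `L²`-convergent fields converge in `L²`.
  obtain ⟨h, hh, hae⟩ := exists_seq_tendsto_ae_comp_add_smul ENNReal.ofNat_ne_top hv.memLp_grad e
  have hS (j : ℕ) := aestronglyMeasurable_secantOp hA.continuous_deriv hv.memLp_grad e (h j)
  have hSΛ (j : ℕ) (x : EVec n) := (hA.secantOp_elliptic Dv e (h j) x).norm_le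
  have hDA : AEStronglyMeasurable (fun x => DA (Dv x)) :=
    hA.continuous_deriv.comp_aestronglyMeasurable hv.memLp_grad.1
  have hDAΛ (x : EVec n) := (hA.elliptic (Dv x)).norm_le
  have hSlim : ∀ᵐ x, Tendsto (fun j => secantOp DA Dv e (h j) x) atTop (𝓝 (DA (Dv x))) := by
    filter_upwards [hae] with x hx using tendsto_secantOp hA.continuous_deriv hx
  have hηDv : MemLp (fun x => η x • Dv x) 2 := hη.memLp_smul hv.memLp_grad
  have hΔv (j : ℕ) : MemLp (diffQuot e (h j) v) 2 := memLp_diffQuot hv.memLp e (h j)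
  have hvlim := (hv.tendsto_eLpNorm_diffQuot_sub s).comp hh
  have hGlim := (hGη.tendsto_eLpNorm_diffQuot_sub hηDv hG).comp hh
  have hleft := tendsto_integral_inner_clm_apply (μ := volume.restrict K)
    (fun j => (hS j).restrict) hDA.restrict hSΛ hDAΛ (ae_restrict_of_ae hSlim)
    (fun j => (memLp_diffQuot hηDv e (h j)).restrict K) (hG.restrict K)
    (tendsto_of_tendsto_of_tendsto_of_le_of_le tendsto_const_nhds hGlim (fun _ => zero_le)
      fun _ => eLpNorm_restrict_le _ _ _ _)
  have hright₁ := tendsto_integral_inner_clm_apply hS hDA hSΛ hDAΛ hSlim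
    (fun j => hη.memLp_cutoffTerm (hΔv j)) (hη.memLp_cutoffTerm (hv.memLp_matCol s))
    (hη.tendsto_eLpNorm_cutoffTerm_sub hvlim)
  have hright₂ := tendsto_integral_mul_norm (hη.sq.memLp 2) hΔv (hv.memLp_matCol s) hvlim
  refine le_of_tendsto_of_tendsto hleft (hright₁.add (hright₂.const_mul (2 * CT : ℝ))) ?_
  exact (hh.mono_right nhdsWithin_le_nhds).eventually
    (hv.eventually_setIntegral_secantOp_diffQuot_le hA hU hb hη (by simp [e]) hK hKη)

end SecondDerivative

/-! ### Radial integrands -/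

section RadialIntegrand

/-- `f ∈ C²([0,∞))` is convex with `f 0 = f' 0 = 0` and bounded second derivative `f'' ≤ Λ`, so
that `z ↦ f ‖z‖` is a convex function of class `C²`. All derivatives are relative to `[0,∞)`. -/
structure IsRadialIntegrand (Λ : ℝ) (f f' f'' : ℝ → ℝ) : Prop where
  hasDerivWithinAt : ∀ t ∈ Ici (0 : ℝ), HasDerivWithinAt f (f' t) (Ici 0) t
  hasDerivWithinAt_deriv : ∀ t ∈ Ici (0 : ℝ), HasDerivWithinAt f' (f'' t) (Ici 0) t
  continuousOn_deriv2 : ContinuousOn f'' (Ici 0)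
  convexOn : ConvexOn ℝ (Ici 0) f
  map_zero : f 0 = 0
  deriv_zero : f' 0 = 0
  deriv2_le : ∀ t ∈ Ici (0 : ℝ), f'' t ≤ Λ

/-- The quotient `f' t / t`, extended to `t = 0` by its limit `f'' 0`. -/
noncomputable def radialSlope (f' f'' : ℝ → ℝ) (t : ℝ) : ℝ := if t = 0 then f'' 0 else f' t / t

theorem radialSlope_zero (f' f'' : ℝ → ℝ) : radialSlope f' f'' 0 = f'' 0 := if_pos rfl

theorem radialSlope_of_ne {t : ℝ} (f' f'' : ℝ → ℝ) (ht : t ≠ 0) :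
    radialSlope f' f'' t = f' t / t := if_neg ht

namespace IsRadialIntegrand

variable {Λ : ℝ} {f f' f'' : ℝ → ℝ}

theorem add_deriv_mul_sub_le (H : IsRadialIntegrand Λ f f' f'') {s t : ℝ} (hs : 0 ≤ s)
    (ht : 0 ≤ t) : f s + f' s * (t - s) ≤ f t := by
  rcases lt_trichotomy s t with hlt | rfl | hgt
  · have := H.convexOn.le_slope_of_hasDerivWithinAt hs ht hlt (H.hasDerivWithinAt s hs)
    rw [slope_def_field, le_div_iff₀ (by linarith)] at this
    linarith
  · simp
  · have := H.convexOn.slope_le_of_hasDerivWithinAt ht hs hgt (H.hasDerivWithinAt s hs)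
    rw [slope_def_field, div_le_iff₀ (by linarith)] at this
    linarith

theorem nonneg (H : IsRadialIntegrand Λ f f' f'') {t : ℝ} (ht : 0 ≤ t) : 0 ≤ f t := by
  simpa [H.map_zero, H.deriv_zero] using H.add_deriv_mul_sub_le le_rfl ht

theorem monotoneOn_deriv (H : IsRadialIntegrand Λ f f' f'') : MonotoneOn f' (Ici 0) := by
  intro s hs t ht hst
  rcases hst.eq_or_lt with rfl | hlt
  · rfl
  · nlinarith [H.add_deriv_mul_sub_le hs ht, H.add_deriv_mul_sub_le ht hs]

theorem deriv_nonneg (H : IsRadialIntegrand Λ f f' f'') {t : ℝ} (ht : 0 ≤ t) : 0 ≤ f' t :=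
  H.deriv_zero ▸ H.monotoneOn_deriv (mem_Ici.2 le_rfl) ht ht

theorem deriv2_nonneg (H : IsRadialIntegrand Λ f f' f'') {t : ℝ} (ht : 0 ≤ t) : 0 ≤ f'' t := by
  have h := H.monotoneOn_deriv.derivWithin_nonneg (x := t)
  rwa [(H.hasDerivWithinAt_deriv t ht).derivWithin (uniqueDiffOn_Ici 0 t ht)] at h

theorem deriv_le_mul (H : IsRadialIntegrand Λ f f' f'') {t : ℝ} (ht : 0 ≤ t) : f' t ≤ Λ * t := by
  have := (convex_Ici (0 : ℝ)).norm_image_sub_le_of_norm_hasDerivWithin_le (C := Λ)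
    H.hasDerivWithinAt_deriv
    (fun s hs => (Real.norm_of_nonneg (H.deriv2_nonneg hs)).trans_le (H.deriv2_le s hs))
    (mem_Ici.2 le_rfl) (mem_Ici.2 ht)
  rwa [H.deriv_zero, sub_zero, sub_zero, Real.norm_of_nonneg (H.deriv_nonneg ht),
    Real.norm_of_nonneg ht] at this

theorem radialSlope_nonneg (H : IsRadialIntegrand Λ f f' f'') {t : ℝ} (ht : 0 ≤ t) :
    0 ≤ radialSlope f' f'' t := by
  unfold radialSlope
  split_ifs
  exacts [H.deriv2_nonneg le_rfl, div_nonneg (H.deriv_nonneg ht) ht]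

theorem radialSlope_le (H : IsRadialIntegrand Λ f f' f'') {t : ℝ} (ht : 0 ≤ t) :
    radialSlope f' f'' t ≤ Λ := by
  unfold radialSlope
  split_ifs with h
  · exact H.deriv2_le 0 (mem_Ici.2 le_rfl)
  · exact (div_le_iff₀ (ht.lt_of_ne' h)).2 (H.deriv_le_mul ht)

theorem radialSlope_mul_self (H : IsRadialIntegrand Λ f f' f'') (t : ℝ) :
    radialSlope f' f'' t * t = f' t := by
  rcases eq_or_ne t 0 with rfl | h
  · simp [H.deriv_zero]
  · rw [radialSlope_of_ne f' f'' h, div_mul_cancel₀ _ h]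

theorem continuousOn_radialSlope (H : IsRadialIntegrand Λ f f' f'') :
    ContinuousOn (radialSlope f' f'') (Ici 0) := by
  intro t ht
  rcases eq_or_ne t 0 with rfl | h
  · have hslope := hasDerivWithinAt_iff_tendsto_slope.1 (H.hasDerivWithinAt_deriv 0 ht)
    have hpunctured : ContinuousWithinAt (radialSlope f' f'') (Ici 0 \ {0}) 0 := by
      rw [ContinuousWithinAt, radialSlope_zero]
      refine hslope.congr' ?_
      filter_upwards [self_mem_nhdsWithin] with s hs
      rw [slope_def_field, H.deriv_zero, sub_zero, sub_zero, radialSlope_of_ne f' f'' hs.2]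
    simpa only [insert_sdiff_singleton, insert_eq_of_mem ht] using hpunctured.insert
  · refine ((H.hasDerivWithinAt_deriv t ht).continuousWithinAt.div
      continuousWithinAt_id h).congr_of_eventuallyEq ?_ (radialSlope_of_ne f' f'' h)
    filter_upwards [mem_nhdsWithin_of_mem_nhds (isOpen_ne.mem_nhds h)] with s hs
    exact radialSlope_of_ne f' f'' hs

theorem continuous_radialSlope_norm {E : Type*} [SeminormedAddCommGroup E]
    (H : IsRadialIntegrand Λ f f' f'') :
    Continuous fun z : E => radialSlope f' f'' ‖z‖ :=
  H.continuousOn_radialSlope.comp_continuous continuous_norm norm_nonneg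

end IsRadialIntegrand

/-- A radial integrand of linear growth: `f t ≤ L (t + 1)` and `f'' t ≤ L / (1 + t)`. -/
structure IsLinearGrowthIntegrand (L : ℝ) (f f' f'' : ℝ → ℝ) : Prop
    extends IsRadialIntegrand L f f' f'' where
  le_linear : ∀ t ∈ Ici (0 : ℝ), f t ≤ L * (t + 1)
  deriv2_mul_le : ∀ t ∈ Ici (0 : ℝ), f'' t * (1 + t) ≤ L

namespace IsLinearGrowthIntegrand

variable {L : ℝ} {f f' f'' : ℝ → ℝ}

theorem of_deriv2_le_mul_inv (hL : 0 ≤ L)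
    (hderiv : ∀ t ∈ Ici (0 : ℝ), HasDerivWithinAt f (f' t) (Ici 0) t)
    (hderiv2 : ∀ t ∈ Ici (0 : ℝ), HasDerivWithinAt f' (f'' t) (Ici 0) t)
    (hcont : ContinuousOn f'' (Ici 0)) (hconv : ConvexOn ℝ (Ici 0) f) (hf : f 0 = 0)
    (hf' : f' 0 = 0) (hle : ∀ t ∈ Ici (0 : ℝ), f t ≤ L * (t + 1))
    (hle2 : ∀ t ∈ Ici (0 : ℝ), f'' t ≤ L * (1 + t)⁻¹) : IsLinearGrowthIntegrand L f f' f'' where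
  hasDerivWithinAt := hderiv
  hasDerivWithinAt_deriv := hderiv2
  continuousOn_deriv2 := hcont
  convexOn := hconv
  map_zero := hf
  deriv_zero := hf'
  deriv2_le t ht := (hle2 t ht).trans
    (mul_le_of_le_one_right hL (inv_le_one_of_one_le₀ (by linarith [mem_Ici.1 ht])))
  le_linear := hle
  deriv2_mul_le t ht :=
    (le_div_iff₀ (by linarith [mem_Ici.1 ht] : 0 < 1 + t)).1 (hle2 t ht)

theorem bound_nonneg (H : IsLinearGrowthIntegrand L f f' f'') : 0 ≤ L :=
  (H.deriv2_nonneg le_rfl).trans (H.deriv2_le 0 (mem_Ici.2 le_rfl))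

theorem deriv_le (H : IsLinearGrowthIntegrand L f f' f'') {t : ℝ} (ht : 0 ≤ t) :
    f' t ≤ 3 * L := by
  rcases le_total t 1 with h | h
  · nlinarith [H.deriv_le_mul ht, H.bound_nonneg]
  · have htangent := H.add_deriv_mul_sub_le ht (t := 2 * t) (by linarith)
    have hgrowth := H.le_linear (2 * t) (mem_Ici.2 (by linarith))
    have hmul : f' t * t ≤ 3 * L * t := by nlinarith [H.nonneg ht, H.bound_nonneg]
    exact le_of_mul_le_mul_right hmul (by linarith)

theorem radialSlope_mul_le (H : IsLinearGrowthIntegrand L f f' f'') {t : ℝ} (ht : 0 ≤ t) :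
    radialSlope f' f'' t * (1 + t) ≤ 4 * L := by
  linarith [H.radialSlope_le ht, H.radialSlope_mul_self t, H.deriv_le ht]

end IsLinearGrowthIntegrand

end RadialIntegrand

section RadialField

variable {V : Type*} [NormedAddCommGroup V] [InnerProductSpace ℝ V]

/-- The gradient `f'(|z|) z / |z|` of `z ↦ f ‖z‖`. -/
noncomputable def radialGrad (f' f'' : ℝ → ℝ) (z : V) : V := radialSlope f' f'' ‖z‖ • z

/-- The Hessian of `z ↦ f ‖z‖`; at `z = 0` the rank-one term vanishes and `f'' 0 • id` is left. -/
noncomputable def radialHess (f' f'' : ℝ → ℝ) (z : V) : V →L[ℝ] V :=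
  radialSlope f' f'' ‖z‖ • ContinuousLinearMap.id ℝ V +
    ((f'' ‖z‖ - radialSlope f' f'' ‖z‖) / ‖z‖ ^ 2) • (innerSL ℝ z).smulRight z

theorem norm_div_smul_smulRight_innerSL_le (c : ℝ) (z : V) :
    ‖(c / ‖z‖ ^ 2) • (innerSL ℝ z).smulRight z‖ ≤ |c| := by
  rw [norm_smul, ContinuousLinearMap.norm_smulRight_apply, innerSL_apply_norm, ← sq, norm_div,
    Real.norm_of_nonneg (sq_nonneg ‖z‖)]
  rw [div_mul_eq_mul_div]
  exact div_le_of_le_mul₀ (sq_nonneg _) (abs_nonneg _) le_rfl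

theorem hasFDerivAt_norm_of_ne_zero {z : V} (hz : z ≠ 0) :
    HasFDerivAt (fun y : V => ‖y‖) (‖z‖⁻¹ • innerSL ℝ z) z := by
  have hsq := (hasStrictFDerivAt_norm_sq z).hasFDerivAt.sqrt (pow_ne_zero 2 (norm_ne_zero_iff.2 hz))
  simp only [Real.sqrt_sq (norm_nonneg _)] at hsq
  refine hsq.congr_fderiv ?_
  rw [← Nat.cast_smul_eq_nsmul ℝ, smul_smul]
  congr 1
  field_simp
  norm_num

theorem inner_radialHess (f' f'' : ℝ → ℝ) (z ξ ζ : V) :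
    ⟪radialHess f' f'' z ξ, ζ⟫ = radialSlope f' f'' ‖z‖ * ⟪ξ, ζ⟫ +
      (f'' ‖z‖ - radialSlope f' f'' ‖z‖) * (⟪z, ξ⟫ * ⟪z, ζ⟫ / ‖z‖ ^ 2) := by
  simp only [radialHess, add_apply, FunLike.coe_smul, Pi.smul_apply,
    ContinuousLinearMap.id_apply, ContinuousLinearMap.smulRight_apply, innerSL_apply_apply,
    inner_add_left, real_inner_smul_left]
  ring

theorem inner_sq_div_norm_sq_le (z ζ : V) : ⟪z, ζ⟫ * ⟪z, ζ⟫ / ‖z‖ ^ 2 ≤ ‖ζ‖ ^ 2 := by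
  refine div_le_of_le_mul₀ (sq_nonneg _) (sq_nonneg _) ?_
  rw [← sq, ← mul_pow, mul_comm]
  exact sq_le_sq.2 ((abs_real_inner_le_norm z ζ).trans (le_abs_self _))

namespace IsRadialIntegrand

variable {Λ : ℝ} {f f' f'' : ℝ → ℝ}

theorem inner_radialHess_self_nonneg (H : IsRadialIntegrand Λ f f' f'') (z ζ : V) :
    0 ≤ ⟪radialHess f' f'' z ζ, ζ⟫ := by
  rw [inner_radialHess, real_inner_self_eq_norm_sq]
  have hproj : 0 ≤ ⟪z, ζ⟫ * ⟪z, ζ⟫ / ‖z‖ ^ 2 := div_nonneg (mul_self_nonneg _) (sq_nonneg _)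
  have := mul_nonneg (H.deriv2_nonneg (norm_nonneg z)) hproj
  have := mul_nonneg (H.radialSlope_nonneg (norm_nonneg z))
    (sub_nonneg.2 (inner_sq_div_norm_sq_le z ζ))
  linarith

theorem norm_radialHess_le (H : IsRadialIntegrand Λ f f' f'') (z : V) :
    ‖radialHess f' f'' z‖ ≤ 2 * Λ := by
  have hz := norm_nonneg z
  have hslope := H.radialSlope_nonneg hz
  have hdiff : |f'' ‖z‖ - radialSlope f' f'' ‖z‖| ≤ Λ :=
    abs_sub_le_of_nonneg_of_le (H.deriv2_nonneg hz) (H.deriv2_le _ hz) hslope (H.radialSlope_le hz)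
  have hid : ‖radialSlope f' f'' ‖z‖ • ContinuousLinearMap.id ℝ V‖ ≤ radialSlope f' f'' ‖z‖ := by
    rw [norm_smul, Real.norm_of_nonneg hslope]
    exact mul_le_of_le_one_right hslope ContinuousLinearMap.norm_id_le
  calc ‖radialHess f' f'' z‖
      ≤ radialSlope f' f'' ‖z‖ + |f'' ‖z‖ - radialSlope f' f'' ‖z‖| :=
        (norm_add_le _ _).trans (add_le_add hid (norm_div_smul_smulRight_innerSL_le _ z))
    _ ≤ 2 * Λ := by linarith [H.radialSlope_le hz]

theorem continuous_radialHess (H : IsRadialIntegrand Λ f f' f'') :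
    Continuous (radialHess f' f'' : V → V →L[ℝ] V) := by
  have hdiff : Continuous fun z : V => f'' ‖z‖ - radialSlope f' f'' ‖z‖ :=
    (H.continuousOn_deriv2.comp_continuous continuous_norm norm_nonneg).sub
      H.continuous_radialSlope_norm
  have hrank : Continuous fun z : V => (innerSL ℝ z).smulRight z :=
    ((ContinuousLinearMap.smulRightL ℝ V V).continuous.comp (innerSL ℝ).continuous).clm_apply
      continuous_id
  refine (H.continuous_radialSlope_norm.smul continuous_const).add
    (continuous_iff_continuousAt.2 fun z => ?_)
  rcases eq_or_ne z 0 with rfl | hz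
  · have hzero : Tendsto (fun z : V => |f'' ‖z‖ - radialSlope f' f'' ‖z‖|) (𝓝 0) (𝓝 0) := by
      simpa [radialSlope_zero] using hdiff.abs.tendsto 0
    simp only [ContinuousAt, smul_zero, ContinuousLinearMap.smulRight_zero]
    exact squeeze_zero_norm (fun z => norm_div_smul_smulRight_innerSL_le _ z) hzero
  · exact (hdiff.continuousAt.div (by fun_prop) (by simpa using hz)).smul hrank.continuousAt

theorem hasDerivAt_radialSlope (H : IsRadialIntegrand Λ f f' f'') {t : ℝ} (ht : 0 < t) :
    HasDerivAt (radialSlope f' f'') ((f'' t - radialSlope f' f'' t) / t) t := by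
  have hquot := ((H.hasDerivWithinAt_deriv t ht.le).hasDerivAt (Ici_mem_nhds ht)).div
    (hasDerivAt_id t) ht.ne'
  refine (hquot.congr_of_eventuallyEq ?_).congr_deriv ?_
  · filter_upwards [isOpen_ne.mem_nhds ht.ne'] with s hs
    exact radialSlope_of_ne f' f'' hs
  · rw [radialSlope_of_ne f' f'' ht.ne', id]
    field_simp

theorem hasFDerivAt_radialGrad (H : IsRadialIntegrand Λ f f' f'') (z : V) :
    HasFDerivAt (radialGrad f' f'') (radialHess f' f'' z) z := by
  rcases eq_or_ne z 0 with rfl | hz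
  · have hzero : Tendsto (fun y : V => radialSlope f' f'' ‖y‖ - f'' 0) (𝓝 0) (𝓝 0) := by
      simpa using (H.continuous_radialSlope_norm.tendsto' (0 : V) (f'' 0)
        (by simp [radialSlope_zero])).sub_const (f'' 0)
    refine .of_isLittleO ?_
    have := ((Asymptotics.isLittleO_one_iff ℝ).2 hzero).smul_isBigO
      (Asymptotics.isBigO_refl (fun y : V => y) (𝓝 0))
    simpa [radialGrad, radialHess, radialSlope_zero, sub_smul] using this
  · refine (((H.hasDerivAt_radialSlope (norm_pos_iff.2 hz)).comp_hasFDerivAt z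
      (hasFDerivAt_norm_of_ne_zero hz)).smul (hasFDerivAt_id z)).congr_fderiv ?_
    ext ζ
    simp [radialHess, smul_smul, div_eq_mul_inv, sq]
    ring_nf

theorem isEllipticField_radialGrad (H : IsRadialIntegrand Λ f f' f'') :
    IsEllipticField 0 (2 * Λ) (radialGrad f' f'' : V → V) (radialHess f' f'') where
  map_zero := by simp [radialGrad]
  hasFDerivAt := H.hasFDerivAt_radialGrad
  continuous_deriv := H.continuous_radialHess
  elliptic z :=
    { nonneg := le_rfl
      symm := fun ξ ζ => by rw [inner_radialHess, inner_radialHess, real_inner_comm ξ ζ]; ring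
      le_inner := fun ζ => by simpa using H.inner_radialHess_self_nonneg z ζ
      norm_le := H.norm_radialHess_le z }

theorem hasGradientAt_comp_norm [CompleteSpace V] (H : IsRadialIntegrand Λ f f' f'') (z : V) :
    HasGradientAt (fun y => f ‖y‖) (radialGrad f' f'' z) z := by
  rw [hasGradientAt_iff_hasFDerivAt]
  rcases eq_or_ne z 0 with rfl | hz
  · have hquad : (fun y : V => f ‖y‖) =O[𝓝 0] fun y => ‖y - 0‖ ^ 2 := by
      refine .of_bound Λ (.of_forall fun y => ?_)
      have htangent := H.add_deriv_mul_sub_le (norm_nonneg y) le_rfl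
      rw [Real.norm_of_nonneg (H.nonneg (norm_nonneg y)), sub_zero,
        Real.norm_of_nonneg (sq_nonneg _)]
      nlinarith [H.deriv_le_mul (norm_nonneg y), norm_nonneg y, H.map_zero]
    simpa [radialGrad] using hquad.hasFDerivAt one_lt_two
  · have hpos := norm_pos_iff.2 hz
    refine (((H.hasDerivWithinAt _ hpos.le).hasDerivAt (Ici_mem_nhds hpos)).comp_hasFDerivAt z
      (hasFDerivAt_norm_of_ne_zero hz)).congr_fderiv ?_
    ext ζ
    simp [radialGrad, radialSlope_of_ne f' f'' hpos.ne', div_eq_mul_inv, mul_assoc]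

end IsRadialIntegrand

theorem IsLinearGrowthIntegrand.inner_radialHess_self_mul_le {L : ℝ} {f f' f'' : ℝ → ℝ}
    (H : IsLinearGrowthIntegrand L f f' f'') (z ζ : V) :
    ⟪radialHess f' f'' z ζ, ζ⟫ * (1 + ‖z‖) ≤ 4 * L * ‖ζ‖ ^ 2 := by
  have hz := norm_nonneg z
  rw [inner_radialHess, real_inner_self_eq_norm_sq]
  set p := ⟪z, ζ⟫ * ⟪z, ζ⟫ / ‖z‖ ^ 2
  have hp : 0 ≤ p := div_nonneg (mul_self_nonneg _) (sq_nonneg _)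
  have htangential := mul_le_mul_of_nonneg_right (H.radialSlope_mul_le hz)
    (sub_nonneg.2 (inner_sq_div_norm_sq_le z ζ))
  have hradial := mul_le_mul_of_nonneg_right (H.deriv2_mul_le _ hz) hp
  nlinarith [mul_nonneg H.bound_nonneg hp]

end RadialField

/-! ### Minimisers of the regularised functionals -/

section RegularisedField

variable {V : Type*} [NormedAddCommGroup V]

/-- The integrand `f ‖z‖ + (2k)⁻¹ ‖z‖²` of the regularised functional `𝔉_k`. -/
noncomputable def regIntegrand (f : ℝ → ℝ) (k : ℕ) (z : V) : ℝ :=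
  f ‖z‖ + (2 * (k : ℝ))⁻¹ * ‖z‖ ^ 2

theorem regIntegrand_zero {f : ℝ → ℝ} (hf : f 0 = 0) (k : ℕ) : regIntegrand f k (0 : V) = 0 := by
  simp [regIntegrand, hf]

variable [InnerProductSpace ℝ V]

/-- The gradient of `regIntegrand f k`. -/
noncomputable def regGrad (f' f'' : ℝ → ℝ) (k : ℕ) (z : V) : V :=
  radialGrad f' f'' z + (k : ℝ)⁻¹ • z

/-- The Hessian of `regIntegrand f k`. -/
noncomputable def regHess (f' f'' : ℝ → ℝ) (k : ℕ) (z : V) : V →L[ℝ] V :=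
  radialHess f' f'' z + (k : ℝ)⁻¹ • ContinuousLinearMap.id ℝ V

theorem IsRadialIntegrand.isEllipticField_regGrad {Λ : ℝ} {f f' f'' : ℝ → ℝ}
    (H : IsRadialIntegrand Λ f f' f'') (k : ℕ) :
    IsEllipticField (k : ℝ)⁻¹ (2 * Λ + (k : ℝ)⁻¹) (regGrad f' f'' k : V → V)
      (regHess f' f'' k) := by
  have := H.isEllipticField_radialGrad.add_smul_id (V := V) (inv_nonneg.2 (Nat.cast_nonneg k))
  rwa [zero_add] at this

end RegularisedField

section Potential

variable {V : Type*} [NormedAddCommGroup V] [InnerProductSpace ℝ V] [CompleteSpace V]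
  {κ Λ : ℝ} {A : V → V} {DA : V → V →L[ℝ] V} {Φ : V → ℝ}

namespace IsEllipticField

theorem abs_potential_sub_le (hA : IsEllipticField κ Λ A DA) (hΦ : ∀ z, HasGradientAt Φ (A z) z)
    (w z : V) : |Φ w - Φ z - ⟪A z, w - z⟫| ≤ Λ * ‖w - z‖ ^ 2 := by
  have hball (y : V) (hy : y ∈ Metric.closedBall z ‖w - z‖) :
      ‖innerSL ℝ (A y) - innerSL ℝ (A z)‖ ≤ Λ * ‖w - z‖ := by
    have hΛ : 0 ≤ Λ := (norm_nonneg _).trans (hA.elliptic z).norm_le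
    rw [← map_sub, innerSL_apply_norm]
    exact (hA.norm_sub_le y z).trans (by gcongr; exact mem_closedBall_iff_norm.1 hy)
  have := (convex_closedBall z ‖w - z‖).norm_image_sub_le_of_norm_hasFDerivWithin_le
    (f := fun y => Φ y - innerSL ℝ (A z) y)
    (fun y _ => ((hasGradientAt_iff_hasFDerivAt.1 (hΦ y)).sub
      (innerSL ℝ (A z)).hasFDerivAt).hasFDerivWithinAt) hball
    (Metric.mem_closedBall_self (norm_nonneg _)) (mem_closedBall_iff_norm.2 le_rfl)
  rw [Real.norm_eq_abs] at this
  simp only [innerSL_apply_apply] at this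
  rw [inner_sub_right, sq, ← mul_assoc]
  convert this using 2
  ring

variable {α : Type*} [MeasurableSpace α] {μ : Measure α} {T Z W : α → V}

theorem integrable_potential_comp (hA : IsEllipticField κ Λ A DA)
    (hΦ : ∀ z, HasGradientAt Φ (A z) z) (hΦ0 : Φ 0 = 0) (hZ : MemLp Z 2 μ) :
    Integrable (fun x => Φ (Z x)) μ := by
  have hcont : Continuous Φ :=
    continuous_iff_continuousAt.2 fun z => (hΦ z).continuousAt
  refine ((hZ.integrable_norm_pow two_ne_zero).const_mul Λ).mono'
    (hcont.comp_aestronglyMeasurable hZ.1) (ae_of_all _ fun x => ?_)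
  simpa [hA.map_zero, hΦ0] using hA.abs_potential_sub_le hΦ (Z x) 0

theorem integral_potential_add_le (hA : IsEllipticField κ Λ A DA)
    (hΦ : ∀ z, HasGradientAt Φ (A z) z) (hΦ0 : Φ 0 = 0) (hZ : MemLp Z 2 μ) (hW : MemLp W 2 μ) :
    ∫ x, Φ (Z x + W x) ∂μ ≤
      ∫ x, Φ (Z x) ∂μ + ∫ x, ⟪A (Z x), W x⟫ ∂μ + Λ * ∫ x, ‖W x‖ ^ 2 ∂μ := by
  have hΦZ := hA.integrable_potential_comp hΦ hΦ0 hZ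
  have hAW := integrable_inner_of_memLp (hA.memLp_comp hZ) hW
  have hWW := (hW.integrable_norm_pow two_ne_zero).const_mul Λ
  have hsum : Integrable (fun x => Φ (Z x) + ⟪A (Z x), W x⟫) μ := hΦZ.add hAW
  rw [← integral_const_mul, ← integral_add hΦZ hAW, ← integral_add hsum hWW]
  refine integral_mono (hA.integrable_potential_comp hΦ hΦ0 (hZ.add hW)) (hsum.add hWW) fun x => ?_
  have := (abs_le.1 (hA.abs_potential_sub_le hΦ (Z x + W x) (Z x))).2
  simp only [add_sub_cancel_left] at this ⊢
  linarith

theorem integral_inner_eq_of_forall_potential_le (hA : IsEllipticField κ Λ A DA)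
    (hΦ : ∀ z, HasGradientAt Φ (A z) z) (hΦ0 : Φ 0 = 0)
    (hT : MemLp T 2 μ) (hZ : MemLp Z 2 μ) (hW : MemLp W 2 μ)
    (hmin : ∀ ε : ℝ, ∫ x, (Φ (Z x) - ⟪T x, Z x⟫) ∂μ ≤
      ∫ x, (Φ (Z x + ε • W x) - ⟪T x, Z x + ε • W x⟫) ∂μ) :
    ∫ x, ⟪A (Z x), W x⟫ ∂μ = ∫ x, ⟪T x, W x⟫ ∂μ := by
  set a := ∫ x, ⟪A (Z x), W x⟫ ∂μ - ∫ x, ⟪T x, W x⟫ ∂μ with ha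
  set b := ∫ x, ‖W x‖ ^ 2 ∂μ with hb
  -- The first variation `a` is the linear coefficient of a quadratic polynomial without constant
  -- term that is nonnegative on `ℝ`, so its discriminant `a ^ 2` vanishes.
  have hvar (ε : ℝ) : 0 ≤ (Λ * b) * (ε * ε) + a * ε + 0 := by
    have hεW : MemLp (fun x => ε • W x) 2 μ := hW.const_smul ε
    have hZεW : MemLp (fun x => Z x + ε • W x) 2 μ := hZ.add hεW
    have htaylor := hA.integral_potential_add_le hΦ hΦ0 hZ hεW
    have hle := hmin ε
    rw [integral_sub (hA.integrable_potential_comp hΦ hΦ0 hZ) (integrable_inner_of_memLp hT hZ),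
      integral_sub (hA.integrable_potential_comp hΦ hΦ0 hZεW)
        (integrable_inner_of_memLp hT hZεW)] at hle
    simp only [inner_add_right] at hle
    rw [integral_add (integrable_inner_of_memLp hT hZ) (integrable_inner_of_memLp hT hεW)] at hle
    simp only [real_inner_smul_right, norm_smul, mul_pow, Real.norm_eq_abs, sq_abs,
      integral_const_mul, ← hb] at hle htaylor
    rw [ha]
    linarith
  have hdiscrim := discrim_le_zero hvar
  rw [discrim, mul_zero, sub_zero] at hdiscrim
  exact sub_eq_zero.1 (pow_eq_zero_iff two_ne_zero |>.1 (hdiscrim.antisymm (sq_nonneg a)))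

end IsEllipticField

theorem hasGradientAt_norm_sq (z : V) : HasGradientAt (fun y : V => ‖y‖ ^ 2) ((2 : ℝ) • z) z := by
  rw [hasGradientAt_iff_hasFDerivAt]
  refine (hasStrictFDerivAt_norm_sq z).hasFDerivAt.congr_fderiv ?_
  ext ζ
  simp

namespace IsRadialIntegrand

variable {f f' f'' : ℝ → ℝ}

theorem hasGradientAt_regIntegrand (H : IsRadialIntegrand Λ f f' f'') (k : ℕ) (z : V) :
    HasGradientAt (regIntegrand f k) (regGrad f' f'' k z) z := by
  rw [hasGradientAt_iff_hasFDerivAt]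
  refine ((H.hasGradientAt_comp_norm z).hasFDerivAt.add
    ((hasGradientAt_norm_sq z).hasFDerivAt.const_mul (2 * (k : ℝ))⁻¹)).congr_fderiv ?_
  ext ζ
  simp [regGrad]
  ring

end IsRadialIntegrand

end Potential

section Coordinates

variable {n : ℕ} {ι : Type*} [Fintype ι] {U : Set (EVec n)}

theorem IsTestFunction.integral_mul_eq_setIntegral {φ : EVec n → ℝ} (hφ : IsTestFunction U φ)
    (g : EVec n → ℝ) : ∫ x in U, g x * φ x = ∫ x, g x * φ x :=
  setIntegral_eq_integral_of_forall_compl_eq_zero fun x hx => by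
    rw [hφ.eq_zero_of_notMem hx, mul_zero]

theorem IsTestFunction.integral_mul_fderiv_eq_setIntegral {φ : EVec n → ℝ}
    (hφ : IsTestFunction U φ) (g : EVec n → ℝ) (e : EVec n) :
    ∫ x in U, g x * fderiv ℝ φ x e = ∫ x, g x * fderiv ℝ φ x e :=
  setIntegral_eq_integral_of_forall_compl_eq_zero fun x hx => by
    rw [hφ.fderiv_eq_zero_of_notMem hx, zero_apply, mul_zero]

theorem integral_inner_eq_sum_of_tsupport_subset {g ψ : EVec n → EuclideanSpace ℝ ι}
    (hg : LocallyIntegrableOn g U) (hψ : Continuous ψ) (hψc : HasCompactSupport ψ)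
    (hψU : tsupport ψ ⊆ U) : ∫ x, ⟪g x, ψ x⟫ = ∑ a, ∫ x, g x a * ψ x a := by
  have hinteg (a : ι) : Integrable fun x => g x a * ψ x a := by
    simp only [mul_comm (g _ a)]
    exact integrable_inner_of_tsupport_subset
      (locallyIntegrableOn_clm_comp (EuclideanSpace.proj (𝕜 := ℝ) a) hg)
      ((EuclideanSpace.proj (𝕜 := ℝ) a).continuous.comp hψ)
      (hψc.comp_left (g := fun y : EuclideanSpace ℝ ι => y a) rfl)
      ((tsupport_comp_subset (g := fun y : EuclideanSpace ℝ ι => y a) rfl ψ).trans hψU)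
  rw [← integral_finsetSum _ fun a _ => hinteg a]
  simp [PiLp.inner_apply, mul_comm]

theorem hasWeakDirDerivOn_euclidean_iff {e : EVec n} {g g' : EVec n → EuclideanSpace ℝ ι}
    (hg : LocallyIntegrableOn g U) (hg' : LocallyIntegrableOn g' U) :
    HasWeakDirDerivOn volume U e g g' ↔
      ∀ φ : EVec n → ℝ, IsTestFunction U φ → ∀ a,
        ∫ x in U, g x a * fderiv ℝ φ x e = -∫ x in U, g' x a * φ x := by
  classical
  refine ⟨fun h φ hφ a => ?_, fun h φ hφ => ?_⟩
  · have hφa := h _ (hφ.smul (contDiff_const (c := EuclideanSpace.single a (1 : ℝ))))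
    have hderiv (x : EVec n) : fderiv ℝ (fun y => φ y • EuclideanSpace.single a (1 : ℝ)) x e =
        fderiv ℝ φ x e • EuclideanSpace.single a 1 := by
      rw [fderiv_smul_const (hφ.differentiable x)]
      rfl
    simp only [hderiv, real_inner_smul_right, EuclideanSpace.inner_single_right, one_mul,
      conj_trivial] at hφa
    rw [hφ.integral_mul_eq_setIntegral, hφ.integral_mul_fderiv_eq_setIntegral]
    simpa only [mul_comm] using hφa
  · rw [integral_inner_eq_sum_of_tsupport_subset hg (hφ.continuous_fderiv_apply e)
        (hφ.hasCompactSupport.fderiv_apply ℝ e)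
        ((tsupport_fderiv_apply_subset ℝ e).trans hφ.tsupport_subset),
      integral_inner_eq_sum_of_tsupport_subset hg' hφ.continuous hφ.hasCompactSupport
        hφ.tsupport_subset, ← Finset.sum_neg_distrib]
    refine Finset.sum_congr rfl fun a _ => ?_
    have hφa : IsTestFunction U fun x => φ x a := hφ.clm_comp (EuclideanSpace.proj (𝕜 := ℝ) a)
    have hderiv (x : EVec n) : fderiv ℝ (fun y => φ y a) x e = fderiv ℝ φ x e a :=
      hφ.fderiv_clm_comp (EuclideanSpace.proj (𝕜 := ℝ) a) x e
    have := h _ hφa a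
    rw [hφa.integral_mul_eq_setIntegral, hφa.integral_mul_fderiv_eq_setIntegral] at this
    simpa only [hderiv] using this

end Coordinates

section Flatten

variable {n N : ℕ}

/-- The identification of `N × n` matrices, given as functions of two indices, with the Euclidean
space `EMat N n`; it carries `mdot` and `mnorm` to the inner product and the norm. -/
noncomputable def flatten : (Fin N → Fin n → ℝ) ≃L[ℝ] EMat N n :=
  ((LinearEquiv.curry ℝ ℝ (Fin N) (Fin n)).symm.trans
    (WithLp.linearEquiv 2 ℝ (Fin N × Fin n → ℝ)).symm).toContinuousLinearEquiv

@[simp]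
theorem flatten_apply (z : Fin N → Fin n → ℝ) (q : Fin N × Fin n) : flatten z q = z q.1 q.2 := rfl

theorem inner_flatten (z w : Fin N → Fin n → ℝ) : ⟪flatten z, flatten w⟫ = mdot z w := by
  simp [PiLp.inner_apply, flatten_apply, Fintype.sum_prod_type, mdot, mul_comm]

theorem norm_flatten (z : Fin N → Fin n → ℝ) : ‖flatten z‖ = mnorm z := by
  rw [mnorm, ← inner_flatten, real_inner_self_eq_norm_sq, Real.sqrt_sq (norm_nonneg _)]

theorem norm_toLp_two_eq_vnorm {ι : Type*} [Fintype ι] (v : ι → ℝ) :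
    ‖WithLp.toLp 2 v‖ = vnorm v := by
  simp [EuclideanSpace.norm_eq, vnorm]

theorem QA_eq_inner_radialHess (f' f'' : ℝ → ℝ) (z ζ : Fin N → Fin n → ℝ) :
    QA f' f'' z ζ = ⟪radialHess f' f'' (flatten z) (flatten ζ), flatten ζ⟫ := by
  rw [inner_radialHess, inner_flatten, inner_flatten, norm_flatten, QA, radialSlope]
  have hζ : mdot ζ ζ = mnorm ζ ^ 2 := by
    rw [← inner_flatten, real_inner_self_eq_norm_sq, norm_flatten]
  split_ifs with hz
  · simp [hz, hζ]
  · rw [hζ]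
    field_simp
    ring

end Flatten

theorem HasWeakDirDerivOn.add_const_smul {E F : Type*} [NormedAddCommGroup E] [NormedSpace ℝ E]
    [FiniteDimensional ℝ E] [MeasurableSpace E] [BorelSpace E] {μ : Measure E}
    [NormedAddCommGroup F] [InnerProductSpace ℝ F] {U : Set E} {e : E} {g g' g₁ g₁' : E → F}
    (h : HasWeakDirDerivOn μ U e g g') (h₁ : HasWeakDirDerivOn μ U e g₁ g₁')
    (hg : LocallyIntegrableOn g U μ) (hg' : LocallyIntegrableOn g' U μ)
    (hg₁ : LocallyIntegrableOn g₁ U μ) (hg₁' : LocallyIntegrableOn g₁' U μ) (c : ℝ) :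
    HasWeakDirDerivOn μ U e (fun x => g x + c • g₁ x) (fun x => g' x + c • g₁' x) := by
  intro φ hφ
  have hinteg {w : E → F} (hw : LocallyIntegrableOn w U μ) : Integrable (fun x => ⟪w x, φ x⟫) μ :=
    integrable_inner_of_tsupport_subset hw hφ.continuous hφ.hasCompactSupport hφ.tsupport_subset
  have hintd {w : E → F} (hw : LocallyIntegrableOn w U μ) :
      Integrable (fun x => ⟪w x, fderiv ℝ φ x e⟫) μ :=
    integrable_inner_of_tsupport_subset hw (hφ.continuous_fderiv_apply e)
      (hφ.hasCompactSupport.fderiv_apply ℝ e)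
      ((tsupport_fderiv_apply_subset ℝ e).trans hφ.tsupport_subset)
  simp only [inner_add_left, real_inner_smul_left]
  rw [integral_add (hintd hg) ((hintd hg₁).const_mul c),
    integral_add (hinteg hg') ((hinteg hg₁').const_mul c), integral_const_mul, integral_const_mul,
    h φ hφ, h₁ φ hφ]
  ring

section Minimiser

variable {n N : ℕ} {Ω : Set (EVec n)} {f f' f'' : ℝ → ℝ} {Λ : ℝ} {k : ℕ}
  {T₀ : EVec n → Fin N → Fin n → ℝ} {u : EVec n → Fin N → ℝ} {Du : EVec n → Fin N → Fin n → ℝ}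

theorem hasWeakGradOn_toLp_flatten_iff (hu : IntegrableOn u Ω) (hDu : IntegrableOn Du Ω) :
    HasWeakGradOn Ω (fun x => WithLp.toLp 2 (u x)) (fun x => flatten (Du x)) ↔
      ∀ φ : EVec n → ℝ, IsTestFunction Ω φ → ∀ (a : Fin N) (i : Fin n),
        ∫ x in Ω, u x a * fderiv ℝ φ x (EuclideanSpace.single i 1) =
          -∫ x in Ω, Du x a i * φ x := by
  have huE : IntegrableOn (fun x => WithLp.toLp 2 (u x)) Ω :=
    (PiLp.continuousLinearEquiv 2 ℝ fun _ : Fin N => ℝ).symm.toContinuousLinearMap.integrable_comp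
      hu
  have hcol (i : Fin n) : IntegrableOn (fun x => matCol i (flatten (Du x))) Ω :=
    ((matCol i).comp flatten.toContinuousLinearMap).integrable_comp hDu
  have hiff (i : Fin n) := hasWeakDirDerivOn_euclidean_iff (e := EuclideanSpace.single i 1)
    huE.locallyIntegrableOn (hcol i).locallyIntegrableOn
  exact ⟨fun h φ hφ a i => (hiff i).1 (h i) φ hφ a,
    fun h i => (hiff i).2 fun φ hφ a => h φ hφ a i⟩

theorem memW12_iff [IsFiniteMeasure (volume.restrict Ω)] :
    MemW12 Ω u Du ↔ MemLp (fun x => WithLp.toLp 2 (u x)) 2 (volume.restrict Ω) ∧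
      MemLp (fun x => flatten (Du x)) 2 (volume.restrict Ω) ∧
      HasWeakGradOn Ω (fun x => WithLp.toLp 2 (u x)) (fun x => flatten (Du x)) := by
  let toE := PiLp.continuousLinearEquiv 2 ℝ fun _ : Fin N => ℝ
  have hL2u (hu : AEStronglyMeasurable u (volume.restrict Ω)) :
      IntegrableOn (fun x => vnorm (u x) ^ 2) Ω ↔
        MemLp (fun x => WithLp.toLp 2 (u x)) 2 (volume.restrict Ω) := by
    have huE : AEStronglyMeasurable (fun x => WithLp.toLp 2 (u x)) (volume.restrict Ω) :=
      toE.symm.continuous.comp_aestronglyMeasurable hu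
    rw [memLp_two_iff_integrable_sq_norm huE]
    simp only [norm_toLp_two_eq_vnorm, IntegrableOn]
  have hL2D (hDu : AEStronglyMeasurable Du (volume.restrict Ω)) :
      IntegrableOn (fun x => mnorm (Du x) ^ 2) Ω ↔
        MemLp (fun x => flatten (Du x)) 2 (volume.restrict Ω) := by
    rw [memLp_two_iff_integrable_sq_norm (flatten.continuous.comp_aestronglyMeasurable hDu)]
    simp only [norm_flatten, IntegrableOn]
  constructor
  · rintro ⟨⟨hu, hDu, hweak⟩, hu2, hDu2⟩
    exact ⟨(hL2u hu.1).1 hu2, (hL2D hDu.1).1 hDu2, (hasWeakGradOn_toLp_flatten_iff hu hDu).2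
      fun φ hφ => hweak φ hφ.contDiff hφ.hasCompactSupport hφ.tsupport_subset⟩
  · rintro ⟨hu2, hDu2, hweak⟩
    have hu : IntegrableOn u Ω :=
      toE.toContinuousLinearMap.integrable_comp (hu2.integrable one_le_two)
    have hDu : IntegrableOn Du Ω := by
      simpa [IntegrableOn] using
        flatten.symm.toContinuousLinearMap.integrable_comp (hDu2.integrable one_le_two)
    exact ⟨⟨hu, hDu, fun φ hφ hφc hφΩ => (hasWeakGradOn_toLp_flatten_iff hu hDu).1 hweak φ
      ⟨hφ, hφc, hφΩ⟩⟩, (hL2u hu.1).2 hu2, (hL2D hDu.1).2 hDu2⟩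

theorem IsRadialIntegrand.FFk_eq_integral (H : IsRadialIntegrand Λ f f' f'')
    {Z : EVec n → Fin N → Fin n → ℝ}
    (hT : MemLp (fun x => flatten (T₀ x)) 2 (volume.restrict Ω))
    (hZ : MemLp (fun x => flatten (Z x)) 2 (volume.restrict Ω)) :
    FFk Ω f T₀ k Z = ∫ x in Ω,
      (regIntegrand f k (flatten (Z x)) - ⟪flatten (T₀ x), flatten (Z x)⟫) := by
  have hf : Integrable (fun x => f ‖flatten (Z x)‖) (volume.restrict Ω) :=
    H.isEllipticField_radialGrad.integrable_potential_comp (Φ := fun z : EMat N n => f ‖z‖)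
      H.hasGradientAt_comp_norm
      (by rw [norm_zero, H.map_zero]) hZ
  have hTZ := integrable_inner_of_memLp hT hZ
  have hsq := (hZ.integrable_norm_pow two_ne_zero).const_mul (2 * (k : ℝ))⁻¹
  have hsum : Integrable (fun x => f ‖flatten (Z x)‖ - ⟪flatten (T₀ x), flatten (Z x)⟫)
      (volume.restrict Ω) := hf.sub hTZ
  simp only [FFk, FF, ← norm_flatten, ← inner_flatten]
  rw [← integral_const_mul, ← integral_add hsum hsq]
  refine integral_congr_ae (ae_of_all _ fun x => ?_)
  simp only [regIntegrand]
  ring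

/-- `u`, with weak gradient `Du`, minimises the regularised functional `𝔉_k` over `W^{1,2}(Ω)`. -/
structure IsRegMinimiser (Ω : Set (EVec n)) (f : ℝ → ℝ) (T₀ : EVec n → Fin N → Fin n → ℝ) (k : ℕ)
    (u : EVec n → Fin N → ℝ) (Du : EVec n → Fin N → Fin n → ℝ) : Prop where
  memW12 : MemW12 Ω u Du
  FFk_le : ∀ w Dw, MemW12 Ω w Dw → FFk Ω f T₀ k Du ≤ FFk Ω f T₀ k Dw

namespace IsRegMinimiser

variable [IsFiniteMeasure (volume.restrict Ω)]

theorem integral_inner_regGrad_eq (hu : IsRegMinimiser Ω f T₀ k u Du)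
    (H : IsRadialIntegrand Λ f f' f'')
    (hT : MemLp (fun x => flatten (T₀ x)) 2 (volume.restrict Ω))
    {w : EVec n → EVec N} {Dw : EVec n → EMat N n} (hw : MemLp w 2 (volume.restrict Ω))
    (hDw : MemLp Dw 2 (volume.restrict Ω)) (hgrad : HasWeakGradOn Ω w Dw) :
    ∫ x in Ω, ⟪regGrad f' f'' k (flatten (Du x)), Dw x⟫ =
      ∫ x in Ω, ⟪flatten (T₀ x), Dw x⟫ := by
  obtain ⟨hu2, hDu2, hgradu⟩ := memW12_iff.1 hu.memW12
  refine (H.isEllipticField_regGrad k).integral_inner_eq_of_forall_potential_le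
    (H.hasGradientAt_regIntegrand k) (regIntegrand_zero H.map_zero k) hT hDu2 hDw fun ε => ?_
  have hloc {V : Type} [NormedAddCommGroup V] {g : EVec n → V}
      (hg : MemLp g 2 (volume.restrict Ω)) : LocallyIntegrableOn g Ω :=
    IntegrableOn.locallyIntegrableOn (hg.integrable one_le_two)
  have hcomp : MemW12 Ω (fun x => u x + ε • (w x).ofLp)
      (fun x => Du x + ε • flatten.symm (Dw x)) := by
    rw [memW12_iff]
    simp only [map_add, map_smul, ContinuousLinearEquiv.apply_symm_apply, WithLp.toLp_add,
      WithLp.toLp_smul, WithLp.toLp_ofLp]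
    refine ⟨hu2.add (hw.const_smul ε), hDu2.add (hDw.const_smul ε), fun i => ?_⟩
    simp only [map_add, map_smul]
    exact (hgradu i).add_const_smul (hgrad i) (hloc hu2) (hloc ((matCol i).comp_memLp' hDu2))
      (hloc hw) (hloc ((matCol i).comp_memLp' hDw)) ε
  have hle := hu.FFk_le _ _ hcomp
  rw [H.FFk_eq_integral hT hDu2, H.FFk_eq_integral hT (memW12_iff.1 hcomp).2.1] at hle
  simpa only [map_add, map_smul, ContinuousLinearEquiv.apply_symm_apply] using hle

theorem integral_regIntegrand_sub_nonpos (hu : IsRegMinimiser Ω f T₀ k u Du)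
    (H : IsRadialIntegrand Λ f f' f'')
    (hT : MemLp (fun x => flatten (T₀ x)) 2 (volume.restrict Ω)) :
    ∫ x in Ω, (regIntegrand f k (flatten (Du x)) - ⟪flatten (T₀ x), flatten (Du x)⟫) ≤ 0 := by
  have hzero : MemW12 Ω (fun _ => (0 : Fin N → ℝ)) (fun _ => (0 : Fin N → Fin n → ℝ)) := by
    rw [memW12_iff]
    simp only [map_zero, WithLp.toLp_zero]
    exact ⟨MemLp.zero', MemLp.zero', fun i φ _ => by simp⟩
  have hle := hu.FFk_le _ _ hzero
  rw [H.FFk_eq_integral hT (memW12_iff.1 hu.memW12).2.1,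
    H.FFk_eq_integral hT (memW12_iff.1 hzero).2.1] at hle
  simpa [regIntegrand_zero H.map_zero] using hle

end IsRegMinimiser

theorem exists_forall_mul_sub_le_of_tendsto_div {f : ℝ → ℝ} {c ℓ : ℝ} (hf : ∀ t, 0 ≤ t → 0 ≤ f t)
    (hlim : Tendsto (fun t => f t / t) atTop (𝓝 ℓ)) (hc : 0 ≤ c) (hcℓ : c < ℓ) :
    ∃ C, ∀ t, 0 ≤ t → c * t - C ≤ f t := by
  obtain ⟨t₀, ht₀⟩ := eventually_atTop.1
    ((hlim.eventually (lt_mem_nhds hcℓ)).and (eventually_gt_atTop 0))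
  refine ⟨c * t₀, fun t ht => ?_⟩
  rcases le_total t t₀ with htt₀ | htt₀
  · nlinarith [hf t ht]
  · obtain ⟨hlt, htpos⟩ := ht₀ t htt₀
    rw [lt_div_iff₀ htpos] at hlt
    nlinarith [(ht₀ t₀ le_rfl).2]

theorem ae_norm_flatten_le_linfNormOn (hT : linfNormOn Ω T₀ ≠ ∞) :
    ∀ᵐ x ∂volume.restrict Ω, ‖flatten (T₀ x)‖ ≤ (linfNormOn Ω T₀).toReal := by
  filter_upwards [ENNReal.ae_le_essSup (μ := volume.restrict Ω)
    fun x => ENNReal.ofReal (mnorm (T₀ x))] with x hx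
  rw [norm_flatten]
  exact (ENNReal.ofReal_le_iff_le_toReal hT).1 hx

theorem IsRegMinimiser.integral_norm_add_le [IsFiniteMeasure (volume.restrict Ω)]
    (hu : IsRegMinimiser Ω f T₀ k u Du) (H : IsRadialIntegrand Λ f f' f'')
    (hT : MemLp (fun x => flatten (T₀ x)) 2 (volume.restrict Ω)) {m c C : ℝ}
    (hTm : ∀ᵐ x ∂volume.restrict Ω, ‖flatten (T₀ x)‖ ≤ m) (hf : ∀ t, 0 ≤ t → c * t - C ≤ f t) :
    (c - m) * (∫ x in Ω, ‖flatten (Du x)‖) + (2 * (k : ℝ))⁻¹ * ∫ x in Ω, ‖flatten (Du x)‖ ^ 2 ≤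
      C * volume.real Ω := by
  obtain ⟨-, hDu2, -⟩ := memW12_iff.1 hu.memW12
  have hnorm := (hDu2.norm.integrable one_le_two).const_mul (c - m)
  have hsq := (hDu2.integrable_norm_pow two_ne_zero).const_mul (2 * (k : ℝ))⁻¹
  have hreg : Integrable (fun x => regIntegrand f k (flatten (Du x))) (volume.restrict Ω) :=
    (H.isEllipticField_regGrad k).integrable_potential_comp (H.hasGradientAt_regIntegrand k)
      (regIntegrand_zero H.map_zero k) hDu2
  have hlin : Integrable (fun x => (c - m) * ‖flatten (Du x)‖ +
      (2 * (k : ℝ))⁻¹ * ‖flatten (Du x)‖ ^ 2) (volume.restrict Ω) := hnorm.add hsq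
  have hmono : ∫ x in Ω, ((c - m) * ‖flatten (Du x)‖ + (2 * (k : ℝ))⁻¹ * ‖flatten (Du x)‖ ^ 2 - C) ≤
      ∫ x in Ω, (regIntegrand f k (flatten (Du x)) - ⟪flatten (T₀ x), flatten (Du x)⟫) := by
    refine integral_mono_ae (hlin.sub (integrable_const C))
      (hreg.sub (integrable_inner_of_memLp hT hDu2)) ?_
    filter_upwards [hTm] with x hx
    have hTDu : ⟪flatten (T₀ x), flatten (Du x)⟫ ≤ m * ‖flatten (Du x)‖ :=
      (real_inner_le_norm _ _).trans (by gcongr)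
    have := hf _ (norm_nonneg (flatten (Du x)))
    simp only [regIntegrand]
    linarith
  rw [integral_sub hlin (integrable_const C), integral_add hnorm hsq, integral_const_mul,
    integral_const_mul, setIntegral_const, smul_eq_mul] at hmono
  linarith [hmono.trans (hu.integral_regIntegrand_sub_nonpos H hT)]

theorem exists_forall_isRegMinimiser_integral_norm_le [IsFiniteMeasure (volume.restrict Ω)]
    (H : IsRadialIntegrand Λ f f' f'')
    (hT : MemLp (fun x => flatten (T₀ x)) 2 (volume.restrict Ω)) {ℓ : ℝ}
    (hlim : Tendsto (fun t => f t / t) atTop (𝓝 ℓ))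
    (hsmall : linfNormOn Ω T₀ < ENNReal.ofReal ℓ) :
    ∃ C, ∀ k u Du, IsRegMinimiser Ω f T₀ k u Du →
      ∫ x in Ω, ‖flatten (Du x)‖ ≤ C ∧ (k : ℝ)⁻¹ * ∫ x in Ω, ‖flatten (Du x)‖ ^ 2 ≤ C := by
  have hfin : linfNormOn Ω T₀ ≠ ∞ := hsmall.ne_top
  obtain ⟨c, hmc, hcℓ⟩ := exists_between ((ENNReal.lt_ofReal_iff_toReal_lt hfin).1 hsmall)
  obtain ⟨C, hC⟩ := exists_forall_mul_sub_le_of_tendsto_div (fun t ht => H.nonneg ht) hlim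
    (ENNReal.toReal_nonneg.trans hmc.le) hcℓ
  set m := (linfNormOn Ω T₀).toReal
  refine ⟨max (C * volume.real Ω / (c - m)) (2 * (C * volume.real Ω)), fun k u Du hu => ?_⟩
  have hle := hu.integral_norm_add_le H hT (ae_norm_flatten_le_linfNormOn hfin) hC
  have hcm : 0 < c - m := sub_pos.2 hmc
  have hL1 : 0 ≤ ∫ x in Ω, ‖flatten (Du x)‖ := by positivity
  have hL2 : 0 ≤ (k : ℝ)⁻¹ * ∫ x in Ω, ‖flatten (Du x)‖ ^ 2 := by positivity
  rw [mul_inv, mul_assoc] at hle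
  constructor
  · refine le_max_of_le_left ((le_div_iff₀ hcm).2 ?_)
    linarith
  · refine le_max_of_le_right ?_
    linarith [mul_nonneg hcm.le hL1]

end Minimiser

/-! ### Localisation of the Euler–Lagrange equation -/

theorem HasWeakDirDerivOn.mono {E F : Type*} [NormedAddCommGroup E] [NormedSpace ℝ E]
    [MeasurableSpace E] {μ : Measure E} [NormedAddCommGroup F] [InnerProductSpace ℝ F]
    {U U' : Set E} {e : E} {g g' : E → F} (h : HasWeakDirDerivOn μ U e g g') (hU : U' ⊆ U) :
    HasWeakDirDerivOn μ U' e g g' := fun φ hφ => h φ (hφ.mono hU)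

theorem HasWeakGradOn.mono {n N : ℕ} {U U' : Set (EVec n)} {v : EVec n → EVec N}
    {Dv : EVec n → EMat N n} (h : HasWeakGradOn U v Dv) (hU : U' ⊆ U) : HasWeakGradOn U' v Dv :=
  fun i => (h i).mono hU

section Divergence

variable {n N : ℕ}

/-- The linear operation taking the derivative of a matrix field at a point to the row-wise
divergence of the field there. -/
noncomputable def divOp : (EVec n →L[ℝ] EMat N n) →L[ℝ] EVec N :=
  ∑ i, (matCol i).comp (ContinuousLinearMap.apply ℝ (EMat N n) (EuclideanSpace.single i 1))

theorem divOp_apply (ℓ : EVec n →L[ℝ] EMat N n) :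
    divOp ℓ = ∑ i, matCol i (ℓ (EuclideanSpace.single i 1)) := by
  simp [divOp]

/-- The row-wise divergence of a matrix field. -/
noncomputable def divergence (S : EVec n → EMat N n) (x : EVec n) : EVec N :=
  divOp (fderiv ℝ S x)

theorem IsTestFunction.memLp_divergence {U : Set (EVec n)} {S : EVec n → EMat N n}
    (hS : IsTestFunction U S) (p : ℝ≥0∞) : MemLp (divergence S) p :=
  (divOp.continuous.comp hS.continuous_fderiv).memLp_of_hasCompactSupport
    ((hS.hasCompactSupport.fderiv ℝ).comp_left divOp.map_zero)

theorem HasWeakGradOn.integral_inner_eq_neg_divergence {U : Set (EVec n)} {w : EVec n → EVec N}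
    {Dw : EVec n → EMat N n} {S : EVec n → EMat N n} (h : HasWeakGradOn U w Dw)
    (hw : LocallyIntegrableOn w U) (hDw : LocallyIntegrableOn Dw U) (hS : IsTestFunction U S) :
    ∫ x, ⟪S x, Dw x⟫ = -∫ x, ⟪divergence S x, w x⟫ := by
  have hcol (i : Fin n) : IsTestFunction U fun x => matCol i (S x) := hS.clm_comp (matCol i)
  have hinteg (i : Fin n) : Integrable fun x => ⟪matCol i (Dw x), matCol i (S x)⟫ :=
    integrable_inner_of_tsupport_subset (locallyIntegrableOn_clm_comp (matCol i) hDw)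
      (hcol i).continuous (hcol i).hasCompactSupport (hcol i).tsupport_subset
  have hinteg' (i : Fin n) :
      Integrable fun x => ⟪w x, matCol i (fderiv ℝ S x (EuclideanSpace.single i 1))⟫ := by
    simp only [← hS.fderiv_clm_comp]
    exact integrable_inner_of_tsupport_subset hw ((hcol i).continuous_fderiv_apply _)
      ((hcol i).hasCompactSupport.fderiv_apply ℝ _)
      ((tsupport_fderiv_apply_subset ℝ _).trans (hcol i).tsupport_subset)
  calc ∫ x, ⟪S x, Dw x⟫ = ∑ i, ∫ x, ⟪matCol i (Dw x), matCol i (S x)⟫ := by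
        simp only [real_inner_comm (Dw _), inner_eq_sum_inner_matCol (Dw _)]
        exact integral_finsetSum _ fun i _ => hinteg i
    _ = ∑ i, -∫ x, ⟪w x, matCol i (fderiv ℝ S x (EuclideanSpace.single i 1))⟫ := by
        refine Finset.sum_congr rfl fun i _ => ?_
        simp only [← hS.fderiv_clm_comp]
        rw [h i _ (hcol i), neg_neg]
    _ = -∫ x, ⟪divergence S x, w x⟫ := by
        rw [Finset.sum_neg_distrib, ← integral_finsetSum _ fun i _ => hinteg' i]
        simp only [divergence, divOp_apply, real_inner_comm (w _), inner_sum]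

end Divergence

section Datum

variable {n N : ℕ} {Ω : Set (EVec n)} {T₀ : EVec n → Fin N → Fin n → ℝ} {χ : EVec n → ℝ}

theorem MemW2inf.memLp_flatten [IsFiniteMeasure (volume.restrict Ω)] (hT : MemW2inf Ω T₀)
    (hΩ : MeasurableSet Ω) (p : ℝ≥0∞) : MemLp (fun x => flatten (T₀ x)) p (volume.restrict Ω) := by
  obtain ⟨C, DT, hbound, hderiv, -, -⟩ := hT
  have hcont : ContinuousOn T₀ Ω := fun x hx => (hderiv x hx).continuousWithinAt
  exact flatten.toContinuousLinearMap.comp_memLp' <|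
    MemLp.of_bound (hcont.aestronglyMeasurable hΩ) C <|
      (ae_restrict_iff' hΩ).2 (ae_of_all _ hbound)

theorem MemW2inf.contDiffOn (hT : MemW2inf Ω T₀) (hΩ : IsOpen Ω) : ContDiffOn ℝ 1 T₀ Ω := by
  obtain ⟨C, DT, -, hderiv, -, hlip⟩ := hT
  rw [show (1 : WithTop ℕ∞) = 0 + 1 from rfl, contDiffOn_succ_iff_fderiv_of_isOpen hΩ]
  refine ⟨fun x hx => (hderiv x hx).differentiableWithinAt, by simp, contDiffOn_zero.2 ?_⟩
  exact hlip.continuousOn.congr fun x hx => ((hderiv x hx).hasFDerivAt (hΩ.mem_nhds hx)).fderiv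

theorem IsTestFunction.smul_contDiffOn {E F : Type*} [NormedAddCommGroup E] [NormedSpace ℝ E]
    [NormedAddCommGroup F] [NormedSpace ℝ F] {U : Set E} {η : E → ℝ} {φ : E → F}
    (hη : IsTestFunction U η) (hU : IsOpen U) (hφ : ContDiffOn ℝ 1 φ U) :
    IsTestFunction U fun x => η x • φ x where
  contDiff := by
    refine contMDiff_iff_contDiff.1 (contMDiff_of_tsupport fun x hx => ?_)
    have hxU := hη.tsupport_subset (tsupport_smul_subset_left η φ hx)
    exact (hη.contDiff.contDiffAt.smul (hφ.contDiffAt (hU.mem_nhds hxU))).contMDiffAt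
  hasCompactSupport := hη.hasCompactSupport.smul_right
  tsupport_subset := (tsupport_smul_subset_left η φ).trans hη.tsupport_subset

theorem IsTestFunction.interior_eq_one_subset {E : Type*} [NormedAddCommGroup E] [NormedSpace ℝ E]
    {U : Set E} {η : E → ℝ} (hη : IsTestFunction U η) : interior {x | η x = 1} ⊆ U := fun x hx => by
  have hx1 : η x = 1 := (interior_subset hx : x ∈ {x | η x = 1})
  by_contra hxU
  simp [hη.eq_zero_of_notMem hxU] at hx1

theorem MemW2inf.exists_lipschitzOnWith_divergence (hT : MemW2inf Ω T₀) (hΩ : IsOpen Ω)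
    (hχ : IsTestFunction Ω χ) : ∃ CT : NNReal,
      LipschitzOnWith CT (divergence fun x => χ x • flatten (T₀ x)) (interior {x | χ x = 1}) := by
  obtain ⟨C, DT, -, hderiv, -, hlip⟩ := hT
  have hsub := hχ.interior_eq_one_subset
  let ℓ : (EVec n →L[ℝ] (Fin N → Fin n → ℝ)) →L[ℝ] EVec N :=
    divOp.comp (ContinuousLinearMap.compL ℝ _ _ _ flatten.toContinuousLinearMap)
  have hfderiv (x : EVec n) (hx : x ∈ interior {x | χ x = 1}) :
      divergence (fun x => χ x • flatten (T₀ x)) x = ℓ (DT x) := by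
    have hloc : (fun y => χ y • flatten (T₀ y)) =ᶠ[𝓝 x] fun y => flatten (T₀ y) := by
      filter_upwards [mem_interior_iff_mem_nhds.1 hx] with y hy
      rw [show χ y = 1 from hy, one_smul]
    have hT' := (hderiv x (hsub hx)).hasFDerivAt (hΩ.mem_nhds (hsub hx))
    exact congrArg divOp
      (hloc.fderiv_eq.trans (flatten.toContinuousLinearMap.hasFDerivAt.comp x hT').fderiv)
  refine ⟨‖ℓ‖₊ * C, fun x hx y hy => ?_⟩
  rw [hfderiv x hx, hfderiv y hy]
  exact ℓ.lipschitz.comp_lipschitzOnWith (hlip.mono hsub) hx hy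

end Datum

theorem exists_isTestFunction_eq_one {E : Type*} [NormedAddCommGroup E] [NormedSpace ℝ E]
    [FiniteDimensional ℝ E] {K U : Set E} (hK : IsCompact K) (hU : IsOpen U) (hKU : K ⊆ U) :
    ∃ χ : E → ℝ, IsTestFunction U χ ∧ K ⊆ interior {x | χ x = 1} := by
  obtain ⟨M, hM, hKM, hMU⟩ := exists_compact_between hK hU hKU
  obtain ⟨χ, hχ1, hχ0, -⟩ := exists_contMDiffMap_one_nhds_of_subset_interior (n := 1)
    (modelWithCornersSelf ℝ E) hK.isClosed hKM
  have hsupp : tsupport χ ⊆ M :=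
    closure_minimal (fun x hx => not_not.1 fun hxM => hx (hχ0 x hxM)) hM.isClosed
  exact ⟨χ, ⟨χ.contMDiff.contDiff, hM.of_isClosed_subset (isClosed_tsupport χ) hsupp,
    hsupp.trans hMU⟩, subset_interior_iff_mem_nhdsSet.2 hχ1⟩

section Localisation

variable {n N : ℕ} {Ω : Set (EVec n)} {f f' f'' : ℝ → ℝ} {Λ : ℝ} {k : ℕ}
  {T₀ : EVec n → Fin N → Fin n → ℝ} {u : EVec n → Fin N → ℝ} {Du : EVec n → Fin N → Fin n → ℝ}
  {χ : EVec n → ℝ}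

theorem integral_eq_setIntegral_of_eqOn {α F : Type*} [MeasurableSpace α] {μ : Measure α}
    [NormedAddCommGroup F] [NormedSpace ℝ F] {U V : Set α} {g g' : α → F} (hVU : V ⊆ U)
    (heq : EqOn g g' V) (hg : ∀ x ∉ V, g x = 0) (hg' : ∀ x ∉ V, g' x = 0) :
    ∫ x, g x ∂μ = ∫ x in U, g' x ∂μ := by
  have hfun : g = g' := by
    funext x
    by_cases hx : x ∈ V
    · exact heq hx
    · rw [hg x hx, hg' x hx]
  rw [hfun]
  exact (setIntegral_eq_integral_of_forall_compl_eq_zero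
    fun x hx => hg' x fun hxV => hx (hVU hxV)).symm

theorem integral_inner_eq_setIntegral_of_eqOn {α F : Type*} [MeasurableSpace α] {μ : Measure α}
    [NormedAddCommGroup F] [InnerProductSpace ℝ F] {U V : Set α} {g g' D : α → F} (hVU : V ⊆ U)
    (hg : EqOn g g' V) (hD : ∀ x ∉ V, D x = 0) :
    ∫ x, ⟪g x, D x⟫ ∂μ = ∫ x in U, ⟪g' x, D x⟫ ∂μ :=
  integral_eq_setIntegral_of_eqOn hVU (fun x hx => by simp only [hg hx])
    (fun x hx => by rw [hD x hx, inner_zero_right]) (fun x hx => by rw [hD x hx, inner_zero_right])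

theorem smul_add_outer_fderiv_eq {x : EVec n} (hx : x ∈ interior {x | χ x = 1}) (z : EMat N n)
    (y : EVec N) : χ x • z + outer y (fderiv ℝ χ x) = z := by
  have hloc : χ =ᶠ[𝓝 x] fun _ => 1 := mem_interior_iff_mem_nhds.1 hx
  rw [hloc.fderiv_eq, hloc.self_of_nhds, fderiv_const_apply, outer_zero_right, one_smul, add_zero]

theorem IsTestFunction.memLp_outer_fderiv_of_restrict {y : EVec n → EVec N} {p : ℝ≥0∞}
    (hχ : IsTestFunction Ω χ) (hΩ : MeasurableSet Ω) (hy : MemLp y p (volume.restrict Ω)) :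
    MemLp (fun x => outer (y x) (fderiv ℝ χ x)) p := by
  have hind : (fun x => outer (y x) (fderiv ℝ χ x)) =
      Ω.indicator fun x => outer (y x) (fderiv ℝ χ x) := by
    refine (indicator_eq_self.2 fun x hx => ?_).symm
    by_contra hxΩ
    exact hx (by simp only [hχ.fderiv_eq_zero_of_notMem hxΩ, outer_zero_right])
  rw [hind, memLp_indicator_iff_restrict hΩ]
  exact hχ.memLp_outer_fderiv hy

theorem IsRegMinimiser.isLocalSolution_smul [IsFiniteMeasure (volume.restrict Ω)]
    (hu : IsRegMinimiser Ω f T₀ k u Du) (H : IsRadialIntegrand Λ f f' f'') (hΩ : IsOpen Ω)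
    (hT : MemW2inf Ω T₀) (hχ : IsTestFunction Ω χ) :
    IsLocalSolution (regGrad f' f'' k) (interior {x | χ x = 1})
      (-divergence fun x => χ x • flatten (T₀ x)) (fun x => χ x • WithLp.toLp 2 (u x))
      (fun x => χ x • flatten (Du x) + outer (WithLp.toLp 2 (u x)) (fderiv ℝ χ x)) := by
  obtain ⟨hu2, hDu2, hgrad⟩ := memW12_iff.1 hu.memW12
  have hχT : IsTestFunction Ω fun x => χ x • flatten (T₀ x) := hχ.smul_contDiffOn hΩ
    (flatten.contDiff.comp_contDiffOn (hT.contDiffOn hΩ))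
  refine ⟨hχ.memLp_smul_of_restrict hΩ.measurableSet hu2,
    (hχ.memLp_smul_of_restrict hΩ.measurableSet hDu2).add
      (hχ.memLp_outer_fderiv_of_restrict hΩ.measurableSet hu2),
    (hχT.memLp_divergence 2).neg,
    hgrad.smul (IntegrableOn.locallyIntegrableOn (hu2.integrable one_le_two))
      (IntegrableOn.locallyIntegrableOn (hDu2.integrable one_le_two)) hχ,
    fun w Dw hw hDw hwgrad _ hDw0 => ?_⟩
  have hsub := hχ.interior_eq_one_subset
  calc ∫ x, ⟪regGrad f' f'' k
        (χ x • flatten (Du x) + outer (WithLp.toLp 2 (u x)) (fderiv ℝ χ x)), Dw x⟫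
      = ∫ x in Ω, ⟪regGrad f' f'' k (flatten (Du x)), Dw x⟫ :=
        integral_inner_eq_setIntegral_of_eqOn hsub
          (fun x hx => by simp only [smul_add_outer_fderiv_eq hx]) hDw0
    _ = ∫ x in Ω, ⟪flatten (T₀ x), Dw x⟫ :=
        hu.integral_inner_regGrad_eq H (hT.memLp_flatten hΩ.measurableSet 2) (hw.restrict Ω)
          (hDw.restrict Ω) (hwgrad.mono (subset_univ Ω))
    _ = ∫ x, ⟪χ x • flatten (T₀ x), Dw x⟫ :=
        (integral_inner_eq_setIntegral_of_eqOn hsub (fun x hx => by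
          simp only [(interior_subset hx : x ∈ {x | χ x = 1}).out, one_smul]) hDw0).symm
    _ = ∫ x, ⟪(-divergence fun x => χ x • flatten (T₀ x)) x, w x⟫ := by
        rw [hwgrad.integral_inner_eq_neg_divergence
          ((hw.locallyIntegrable one_le_two).locallyIntegrableOn univ)
          ((hDw.locallyIntegrable one_le_two).locallyIntegrableOn univ)
          (hχT.mono (subset_univ Ω))]
        simp only [Pi.neg_apply, inner_neg_left, integral_neg]

end Localisation

/-! ### Uniform local estimates -/

namespace IsLinearGrowthIntegrand

variable {V : Type*} [NormedAddCommGroup V] [InnerProductSpace ℝ V] {L M : ℝ} {f f' f'' : ℝ → ℝ}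
  {k : ℕ}

theorem inner_regHess_self_le (H : IsLinearGrowthIntegrand L f f' f'') {z ζ : V}
    (hζ : ‖ζ‖ ≤ M * ‖z‖) :
    ⟪regHess f' f'' k z ζ, ζ⟫ ≤ 4 * L * M ^ 2 * ‖z‖ + M ^ 2 * ((k : ℝ)⁻¹ * ‖z‖ ^ 2) := by
  have hL := H.bound_nonneg
  have hζsq : ‖ζ‖ ^ 2 ≤ M ^ 2 * ‖z‖ ^ 2 := by
    rw [← mul_pow]
    exact pow_le_pow_left₀ (norm_nonneg ζ) hζ 2
  have hradial : ⟪radialHess f' f'' z ζ, ζ⟫ ≤ 4 * L * M ^ 2 * ‖z‖ := by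
    refine le_of_mul_le_mul_right (a := 1 + ‖z‖) ?_ (by positivity)
    calc ⟪radialHess f' f'' z ζ, ζ⟫ * (1 + ‖z‖) ≤ 4 * L * ‖ζ‖ ^ 2 :=
          H.inner_radialHess_self_mul_le z ζ
      _ ≤ 4 * L * (M ^ 2 * ‖z‖ ^ 2) := by gcongr
      _ = 4 * L * M ^ 2 * ‖z‖ * ‖z‖ := by ring
      _ ≤ 4 * L * M ^ 2 * ‖z‖ * (1 + ‖z‖) := by gcongr; linarith
  have hquad : (k : ℝ)⁻¹ * ‖ζ‖ ^ 2 ≤ (k : ℝ)⁻¹ * (M ^ 2 * ‖z‖ ^ 2) := by gcongr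
  simp only [regHess, add_apply, smul_apply, ContinuousLinearMap.id_apply, inner_add_left,
    real_inner_smul_left, real_inner_self_eq_norm_sq]
  linarith

theorem integral_inner_regHess_self_le (H : IsLinearGrowthIntegrand L f f' f'')
    {α : Type*} [MeasurableSpace α] {μ : Measure α} [IsFiniteMeasure μ] {Z ζ : α → V}
    (hZ : MemLp Z 2 μ) (hζ : ∀ x, ‖ζ x‖ ≤ M * ‖Z x‖) :
    ∫ x, ⟪regHess f' f'' k (Z x) (ζ x), ζ x⟫ ∂μ ≤
      4 * L * M ^ 2 * (∫ x, ‖Z x‖ ∂μ) + M ^ 2 * ((k : ℝ)⁻¹ * ∫ x, ‖Z x‖ ^ 2 ∂μ) := by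
  have hinteg₁ : Integrable (fun x => 4 * L * M ^ 2 * ‖Z x‖) μ :=
    (hZ.integrable one_le_two).norm.const_mul _
  have hinteg₂ : Integrable (fun x => M ^ 2 * ((k : ℝ)⁻¹ * ‖Z x‖ ^ 2)) μ :=
    ((hZ.integrable_norm_pow two_ne_zero).const_mul _).const_mul _
  simp only [← integral_const_mul]
  rw [← integral_add hinteg₁ hinteg₂]
  exact integral_mono_of_nonneg
    (ae_of_all _ fun x => ((H.isEllipticField_regGrad k).elliptic (Z x)).inner_self_nonneg (ζ x))
    (hinteg₁.add hinteg₂) (ae_of_all _ fun x => H.inner_regHess_self_le (hζ x))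

end IsLinearGrowthIntegrand

section LocalEstimate

variable {n N : ℕ} {Ω : Set (EVec n)} {f f' f'' : ℝ → ℝ} {L Λ : ℝ} {k : ℕ}
  {T₀ : EVec n → Fin N → Fin n → ℝ} {u : EVec n → Fin N → ℝ} {Du : EVec n → Fin N → Fin n → ℝ}
  {η χ : EVec n → ℝ}

theorem IsTestFunction.cutoffTerm_eq_zero_of_notMem {U : Set (EVec n)} (hη : IsTestFunction U η)
    (y : EVec n → EVec N) {x : EVec n} (hx : x ∉ U) : cutoffTerm η y x = 0 := by
  rw [cutoffTerm, hη.fderiv_eq_zero_of_notMem hx, outer_zero_right, smul_zero]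

theorem IsRegMinimiser.exists_hasWeakDirDerivOn_smul [IsFiniteMeasure (volume.restrict Ω)]
    (hu : IsRegMinimiser Ω f T₀ k u Du) (H : IsRadialIntegrand Λ f f' f'') (hk : 0 < k)
    (hΩ : IsOpen Ω) (hT : MemW2inf Ω T₀) (hχ : IsTestFunction Ω χ) {CT : NNReal}
    (hCT : LipschitzOnWith CT (divergence fun x => χ x • flatten (T₀ x)) (interior {x | χ x = 1}))
    (hη : IsTestFunction (interior {x | χ x = 1}) η) (s : Fin n) :
    ∃ G, MemLp G 2 ∧
      HasWeakDirDerivOn volume univ (EuclideanSpace.single s 1) (fun x => η x • flatten (Du x)) G ∧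
      ∀ K, IsCompact K → K ⊆ interior {x | η x = 1} →
        ∫ x in K, ⟪regHess f' f'' k (flatten (Du x)) (G x), G x⟫ ≤
          (∫ x in Ω, ⟪regHess f' f'' k (flatten (Du x))
              (cutoffTerm η (fun y => matCol s (flatten (Du y))) x),
            cutoffTerm η (fun y => matCol s (flatten (Du y))) x⟫) +
          2 * CT * ∫ x in Ω, η x ^ 2 * ‖matCol s (flatten (Du x))‖ := by
  set V := interior {x | χ x = 1}
  set Z : EVec n → EMat N n := fun x => flatten (Du x)
  set Dv : EVec n → EMat N n := fun x => χ x • Z x + outer (WithLp.toLp 2 (u x)) (fderiv ℝ χ x)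
  have hv := hu.isLocalSolution_smul H hΩ hT hχ
  have hA := H.isEllipticField_regGrad (V := EMat N n) k
  have hDv (x : EVec n) (hx : x ∈ V) : Dv x = Z x := smul_add_outer_fderiv_eq hx _ _
  have hηDv : (fun x => η x • Dv x) = fun x => η x • Z x := by
    funext x
    by_cases hx : x ∈ V
    · rw [hDv x hx]
    · rw [hη.eq_zero_of_notMem hx, zero_smul, zero_smul]
  obtain ⟨G, hG, hGη⟩ := hv.exists_hasWeakDirDerivOn_smul_grad hA (by positivity) isOpen_interior
    hCT.neg hη s
  refine ⟨G, hG, hηDv ▸ hGη, fun K hK hKη => ?_⟩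
  have hVΩ : V ⊆ Ω := hχ.interior_eq_one_subset
  have hKV : K ⊆ V := hKη.trans hη.interior_eq_one_subset
  let Q (W : EVec n → EMat N n) (x : EVec n) : ℝ :=
    ⟪regHess f' f'' k (W x) (cutoffTerm η (fun y => matCol s (W y)) x),
      cutoffTerm η (fun y => matCol s (W y)) x⟫
  have hQ0 (W : EVec n → EMat N n) (x : EVec n) (hx : x ∉ V) : Q W x = 0 := by
    simp only [Q, hη.cutoffTerm_eq_zero_of_notMem _ hx, inner_zero_right]
  have hη0 (W : EVec n → EMat N n) (x : EVec n) (hx : x ∉ V) : η x ^ 2 * ‖matCol s (W x)‖ = 0 := by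
    rw [hη.eq_zero_of_notMem hx, zero_pow two_ne_zero, zero_mul]
  calc ∫ x in K, ⟪regHess f' f'' k (Z x) (G x), G x⟫
      = ∫ x in K, ⟪regHess f' f'' k (Dv x) (G x), G x⟫ :=
        setIntegral_congr_fun hK.measurableSet fun x hx => by simp only [hDv x (hKV hx)]
    _ ≤ (∫ x, Q Dv x) + 2 * CT * ∫ x, η x ^ 2 * ‖matCol s (Dv x)‖ :=
        hv.setIntegral_deriv_le hA isOpen_interior hCT.neg hη s hG hGη hK hKη
    _ = (∫ x in Ω, Q Z x) + 2 * CT * ∫ x in Ω, η x ^ 2 * ‖matCol s (Z x)‖ := by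
        rw [integral_eq_setIntegral_of_eqOn hVΩ
            (fun x hx => by simp only [Q, cutoffTerm, hDv x hx]) (hQ0 Dv) (hQ0 Z),
          integral_eq_setIntegral_of_eqOn hVΩ
            (fun x hx => by simp only [hDv x hx]) (hη0 Dv) (hη0 Z)]

theorem integral_sq_mul_norm_matCol_le {B : ℝ} (hB : ∀ x, ‖η x‖ ≤ B) {μ : Measure (EVec n)}
    {Z : EVec n → EMat N n} (hZ : Integrable Z μ) (s : Fin n) :
    ∫ x, η x ^ 2 * ‖matCol s (Z x)‖ ∂μ ≤ B ^ 2 * ∫ x, ‖Z x‖ ∂μ := by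
  rw [← integral_const_mul]
  refine integral_mono_of_nonneg (ae_of_all _ fun x => by positivity) (hZ.norm.const_mul _)
    (ae_of_all _ fun x => ?_)
  have hηB : η x ^ 2 ≤ B ^ 2 := sq_le_sq' (abs_le.1 (hB x)).1 (abs_le.1 (hB x)).2
  simp only
  gcongr
  exact norm_matCol_le s (Z x)

theorem exists_forall_isRegMinimiser_hasWeakDirDerivOn_smul [IsFiniteMeasure (volume.restrict Ω)]
    (H : IsLinearGrowthIntegrand L f f' f'') (hΩ : IsOpen Ω) (hT : MemW2inf Ω T₀) {ℓ : ℝ}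
    (hlim : Tendsto (fun t => f t / t) atTop (𝓝 ℓ)) (hsmall : linfNormOn Ω T₀ < ENNReal.ofReal ℓ)
    (hη : IsTestFunction Ω η) :
    ∃ C, ∀ k u Du, 0 < k → IsRegMinimiser Ω f T₀ k u Du → ∀ s, ∃ G, MemLp G 2 ∧
      HasWeakDirDerivOn volume univ (EuclideanSpace.single s 1) (fun x => η x • flatten (Du x)) G ∧
      ∀ K, IsCompact K → K ⊆ interior {x | η x = 1} →
        ∫ x in K, ⟪regHess f' f'' k (flatten (Du x)) (G x), G x⟫ ≤ C := by
  obtain ⟨χ, hχ, hηχ⟩ :=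
    exists_isTestFunction_eq_one hη.hasCompactSupport.isCompact hΩ hη.tsupport_subset
  obtain ⟨CT, hCT⟩ := hT.exists_lipschitzOnWith_divergence hΩ hχ
  obtain ⟨M, hM⟩ := hη.exists_norm_fderiv_le
  obtain ⟨B, hB⟩ := hη.hasCompactSupport.exists_bound_of_continuous hη.continuous
  obtain ⟨C, hC⟩ := exists_forall_isRegMinimiser_integral_norm_le H.toIsRadialIntegrand
    (hT.memLp_flatten hΩ.measurableSet 2) hlim hsmall
  refine ⟨4 * L * (2 * M) ^ 2 * C + (2 * M) ^ 2 * C + 2 * CT * (B ^ 2 * C),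
    fun k u Du hk hu s => ?_⟩
  obtain ⟨G, hG, hGη, hGK⟩ := hu.exists_hasWeakDirDerivOn_smul H.toIsRadialIntegrand hk hΩ hT hχ hCT
    ⟨hη.contDiff, hη.hasCompactSupport, hηχ⟩ s
  refine ⟨G, hG, hGη, fun K hK hKη => (hGK K hK hKη).trans ?_⟩
  have hL := H.bound_nonneg
  have hZ : MemLp (fun x => flatten (Du x)) 2 (volume.restrict Ω) := (memW12_iff.1 hu.memW12).2.1
  have hM0 : 0 ≤ M := (norm_nonneg _).trans (hM 0)
  have hcutoff (x : EVec n) : ‖cutoffTerm η (fun y => matCol s (flatten (Du y))) x‖ ≤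
      2 * M * ‖flatten (Du x)‖ := by
    rw [norm_cutoffTerm]
    gcongr
    exacts [hM x, norm_matCol_le s _]
  obtain ⟨hC₁, hC₂⟩ := hC k u Du hu
  refine (add_le_add (H.integral_inner_regHess_self_le hZ hcutoff)
    (mul_le_mul_of_nonneg_left
      (integral_sq_mul_norm_matCol_le hB (hZ.integrable one_le_two) s) (by positivity))).trans ?_
  gcongr

end LocalEstimate

section Exhaustion

variable {E F : Type*} [NormedAddCommGroup E] [NormedSpace ℝ E]

/-- A sequence of cutoff functions on the open set `Ω` whose sets `{η j = 1}` exhaust it: every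
compact subset of `Ω` lies in the interior of one of them. -/
structure IsCutoffExhaustion (Ω : Set E) (η : ℕ → E → ℝ) : Prop where
  isTestFunction : ∀ j, IsTestFunction Ω (η j)
  exists_subset : ∀ K, IsCompact K → K ⊆ Ω → ∃ j, K ⊆ interior {x | η j x = 1}

theorem exists_isCutoffExhaustion [FiniteDimensional ℝ E] {Ω : Set E} (hΩ : IsOpen Ω) :
    ∃ η, IsCutoffExhaustion Ω η := by
  have : LocallyCompactSpace E := have := FiniteDimensional.proper_real E
    inferInstance
  have : LocallyCompactSpace Ω := hΩ.locallyCompactSpace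
  let X : CompactExhaustion Ω := default
  choose η hη hηX using fun j => exists_isTestFunction_eq_one
    ((X.isCompact j).image continuous_subtype_val) hΩ (Subtype.coe_image_subset Ω (X j))
  refine ⟨η, hη, fun K hK hKΩ => ?_⟩
  have hKX : IsCompact ((↑) ⁻¹' K : Set Ω) := by
    rwa [Subtype.isCompact_iff, Subtype.image_preimage_coe, inter_eq_right.2 hKΩ]
  obtain ⟨j, hj⟩ := X.exists_superset_of_isCompact hKX
  exact ⟨j, fun x hx => hηX j ⟨⟨x, hKΩ hx⟩, hj hx, rfl⟩⟩

theorem exists_forall_ae_eq_of_ae_eq_inter {α β : Type*} [MeasurableSpace α] {μ : Measure α}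
    {U : ℕ → Set α} {g : ℕ → α → β} (h : ∀ i j, ∀ᵐ x ∂μ, x ∈ U i ∩ U j → g i x = g j x) :
    ∃ D : α → β, ∀ j, ∀ᵐ x ∂μ, x ∈ U j → D x = g j x := by
  classical
  refine ⟨fun x => if hx : ∃ j, x ∈ U j then g (Nat.find hx) x else g 0 x, fun j => ?_⟩
  filter_upwards [ae_all_iff.2 fun i => h i j] with x hx hxj
  have hex : ∃ j, x ∈ U j := ⟨j, hxj⟩
  simp only [dif_pos hex]
  exact hx _ ⟨Nat.find_spec hex, hxj⟩

variable [MeasurableSpace E] {μ : Measure E} [NormedAddCommGroup F] [InnerProductSpace ℝ F]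
  {U Ω : Set E} {e : E} {g g₁ g' g₁' : E → F}

theorem HasWeakDirDerivOn.congr (h : HasWeakDirDerivOn μ U e g g') (hg : EqOn g₁ g U)
    (hg' : ∀ᵐ x ∂μ, x ∈ U → g₁' x = g' x) : HasWeakDirDerivOn μ U e g₁ g₁' := by
  intro φ hφ
  have hleft (x : E) : ⟪g₁ x, fderiv ℝ φ x e⟫ = ⟪g x, fderiv ℝ φ x e⟫ := by
    by_cases hx : x ∈ U
    · rw [hg hx]
    · rw [hφ.fderiv_eq_zero_of_notMem hx, zero_apply, inner_zero_right, inner_zero_right]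
  have hright : ∀ᵐ x ∂μ, ⟪g₁' x, φ x⟫ = ⟪g' x, φ x⟫ := by
    filter_upwards [hg'] with x hx
    by_cases hxU : x ∈ U
    · rw [hx hxU]
    · rw [hφ.eq_zero_of_notMem hxU, inner_zero_right, inner_zero_right]
  rw [integral_congr_ae hright, ← h φ hφ]
  simp only [hleft]

theorem IsCutoffExhaustion.exists_hasWeakDirDerivOn [FiniteDimensional ℝ E] [BorelSpace E]
    [CompleteSpace F] {η : ℕ → E → ℝ} {G : ℕ → E → F} (hη : IsCutoffExhaustion Ω η)
    (hG : ∀ j, LocallyIntegrable (G j) μ)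
    (hGη : ∀ j, HasWeakDirDerivOn μ univ e (fun x => η j x • g x) (G j)) :
    ∃ D, HasWeakDirDerivOn μ Ω e g D ∧
      ∀ j, ∀ᵐ x ∂μ, x ∈ interior {x | η j x = 1} → D x = G j x := by
  have hηg (j : ℕ) : EqOn (fun x => η j x • g x) g (interior {x | η j x = 1}) := fun x hx => by
    simp only [(interior_subset hx : x ∈ {x | η j x = 1}).out, one_smul]
  obtain ⟨D, hD⟩ := exists_forall_ae_eq_of_ae_eq_inter (μ := μ) (g := G)
    (U := fun j => interior {x | η j x = 1}) fun i j =>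
      ((hGη i).mono (subset_univ _)).ae_eq_of_eqOn (isOpen_interior.inter isOpen_interior)
        ((hGη j).mono (subset_univ _)) ((hG i).locallyIntegrableOn _)
        ((hG j).locallyIntegrableOn _)
        (((hηg i).mono inter_subset_left).trans ((hηg j).mono inter_subset_right).symm)
  refine ⟨D, fun φ hφ => ?_, hD⟩
  obtain ⟨j, hj⟩ := hη.exists_subset _ hφ.hasCompactSupport.isCompact hφ.tsupport_subset
  exact ((hGη j).mono (subset_univ _)).congr (hηg j).symm (hD j) φ
    ⟨hφ.contDiff, hφ.hasCompactSupport, hj⟩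

end Exhaustion

section UniformEstimate

variable {n N : ℕ} {Ω : Set (EVec n)} {f f' f'' : ℝ → ℝ} {L Λ : ℝ} {k : ℕ}
  {T₀ : EVec n → Fin N → Fin n → ℝ} {u : EVec n → Fin N → ℝ} {Du : EVec n → Fin N → Fin n → ℝ}

theorem exists_forall_isRegMinimiser_hasWeakDirDerivOn [IsFiniteMeasure (volume.restrict Ω)]
    (H : IsLinearGrowthIntegrand L f f' f'') (hΩ : IsOpen Ω) (hT : MemW2inf Ω T₀) {ℓ : ℝ}
    (hlim : Tendsto (fun t => f t / t) atTop (𝓝 ℓ))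
    (hsmall : linfNormOn Ω T₀ < ENNReal.ofReal ℓ) :
    ∃ C : Set (EVec n) → ℝ, ∀ k u Du, 0 < k → IsRegMinimiser Ω f T₀ k u Du → ∀ s, ∃ D,
      HasWeakDirDerivOn volume Ω (EuclideanSpace.single s 1) (fun x => flatten (Du x)) D ∧
      ∀ K, IsCompact K → K ⊆ Ω → MemLp D 2 (volume.restrict K) ∧
        ∫ x in K, ⟪regHess f' f'' k (flatten (Du x)) (D x), D x⟫ ≤ C K := by
  obtain ⟨η, hη⟩ := exists_isCutoffExhaustion hΩ
  choose C hC using fun j =>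
    exists_forall_isRegMinimiser_hasWeakDirDerivOn_smul H hΩ hT hlim hsmall (hη.isTestFunction j)
  choose! j hj using hη.exists_subset
  refine ⟨fun K => C (j K), fun k u Du hk hu s => ?_⟩
  choose G hG hGη hGK using fun i => hC i k u Du hk hu s
  obtain ⟨D, hD, hDG⟩ :=
    hη.exists_hasWeakDirDerivOn (fun i => (hG i).locallyIntegrable one_le_two) hGη
  refine ⟨D, hD, fun K hK hKΩ => ?_⟩
  have hae : D =ᵐ[volume.restrict K] G (j K) := by
    refine (ae_restrict_iff' hK.measurableSet).2 ?_
    filter_upwards [hDG (j K)] with x hx hxK using hx (hj K hK hKΩ hxK)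
  refine ⟨((hG (j K)).restrict K).ae_eq hae.symm, ?_⟩
  refine (integral_congr_ae ?_).trans_le (hGK (j K) K hK (hj K hK hKΩ))
  filter_upwards [hae] with x hx
  rw [hx]

theorem hasLocWeakDerivOn_of_hasWeakDirDerivOn {ι : Type*} [Fintype ι]
    {g : EVec n → EuclideanSpace ℝ ι} {D : Fin n → EVec n → EuclideanSpace ℝ ι}
    (hg : LocallyIntegrableOn g Ω) (hD : ∀ s, LocallyIntegrableOn (D s) Ω)
    (hgD : ∀ s, HasWeakDirDerivOn volume Ω (EuclideanSpace.single s 1) g (D s)) :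
    HasLocWeakDerivOn Ω (fun x a => g x a) fun x a s => D s x a := by
  refine ⟨fun K hK hKΩ => Integrable.of_eval fun a => Integrable.of_eval fun s =>
    (EuclideanSpace.proj (𝕜 := ℝ) a).integrable_comp
      ((hD s).integrableOn_compact_subset hKΩ hK), fun φ hφ hφc hφΩ a s => ?_⟩
  exact (hasWeakDirDerivOn_euclidean_iff hg (hD s)).1 (hgD s) φ ⟨hφ, hφc, hφΩ⟩ a

theorem mnorm_sq_eq_sum_norm_sq {ι κ : Type*} [Fintype ι] [Fintype κ]
    (ζ : κ → EuclideanSpace ℝ ι) : mnorm (fun a s => ζ s a) ^ 2 = ∑ s, ‖ζ s‖ ^ 2 := by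
  have hnonneg : 0 ≤ mdot (fun a s => ζ s a) (fun a s => ζ s a) :=
    Finset.sum_nonneg fun _ _ => Finset.sum_nonneg fun _ _ => mul_self_nonneg _
  rw [mnorm, Real.sq_sqrt hnonneg, mdot, Finset.sum_comm]
  simp only [EuclideanSpace.real_norm_sq_eq]
  simp only [sq]

theorem QA_eq_inner_regHess_sub (f' f'' : ℝ → ℝ) (k : ℕ) (z : Fin N → Fin n → ℝ)
    (ζ : EMat N n) : QA f' f'' z (fun a i => ζ (a, i)) =
      ⟪regHess f' f'' k (flatten z) ζ, ζ⟫ - (k : ℝ)⁻¹ * ‖ζ‖ ^ 2 := by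
  have hζ : flatten (fun a i => ζ (a, i)) = ζ := rfl
  rw [QA_eq_inner_radialHess, hζ, regHess, add_apply, inner_add_left, smul_apply,
    ContinuousLinearMap.id_apply, real_inner_smul_left, real_inner_self_eq_norm_sq,
    add_sub_cancel_right]

theorem IsRadialIntegrand.sum_integral_QA_add (H : IsRadialIntegrand Λ f f' f'')
    {μ : Measure (EVec n)} {Z : EVec n → Fin N → Fin n → ℝ} {D : Fin n → EVec n → EMat N n}
    (hZ : AEStronglyMeasurable (fun x => flatten (Z x)) μ) (hD : ∀ s, MemLp (D s) 2 μ) :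
    (∑ s, ∫ x, QA f' f'' (Z x) (fun a i => D s x (a, i)) ∂μ) +
        (k : ℝ)⁻¹ * ∫ x, mnorm (fun p s => D s x p) ^ 2 ∂μ =
      ∑ s, ∫ x, ⟪regHess f' f'' k (flatten (Z x)) (D s x), D s x⟫ ∂μ := by
  have hA := H.isEllipticField_regGrad (V := EMat N n) k
  have hsq (s : Fin n) : Integrable (fun x => ‖D s x‖ ^ 2) μ :=
    (hD s).integrable_norm_pow two_ne_zero
  have hquad (s : Fin n) :
      Integrable (fun x => ⟪regHess f' f'' k (flatten (Z x)) (D s x), D s x⟫) μ :=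
    integrable_inner_of_memLp (memLp_clm_apply (hA.continuous_deriv.comp_aestronglyMeasurable hZ)
      (fun x => (hA.elliptic _).norm_le) (hD s)) (hD s)
  simp only [mnorm_sq_eq_sum_norm_sq, QA_eq_inner_regHess_sub f' f'' k]
  rw [integral_finsetSum _ fun s _ => hsq s, Finset.mul_sum, ← Finset.sum_add_distrib]
  refine Finset.sum_congr rfl fun s _ => ?_
  rw [integral_sub (hquad s) ((hsq s).const_mul _), integral_const_mul, sub_add_cancel]

theorem exists_forall_isRegMinimiser_hasLocWeakDerivOn [IsFiniteMeasure (volume.restrict Ω)]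
    (H : IsLinearGrowthIntegrand L f f' f'') (hΩ : IsOpen Ω) (hT : MemW2inf Ω T₀) {ℓ : ℝ}
    (hlim : Tendsto (fun t => f t / t) atTop (𝓝 ℓ))
    (hsmall : linfNormOn Ω T₀ < ENNReal.ofReal ℓ) :
    ∃ C : Set (EVec n) → ℝ, ∀ k u Du, 0 < k → IsRegMinimiser Ω f T₀ k u Du →
      ∃ D2 : EVec n → (Fin N × Fin n) → Fin n → ℝ,
        HasLocWeakDerivOn Ω (fun x (p : Fin N × Fin n) => Du x p.1 p.2) D2 ∧
        ∀ K, IsCompact K → K ⊆ Ω → IntegrableOn (fun x => mnorm (D2 x) ^ 2) K ∧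
          (∑ s, ∫ x in K, QA f' f'' (Du x) (fun a i => D2 x (a, i) s)) +
            (k : ℝ)⁻¹ * ∫ x in K, mnorm (D2 x) ^ 2 ≤ C K := by
  obtain ⟨C, hC⟩ := exists_forall_isRegMinimiser_hasWeakDirDerivOn H hΩ hT hlim hsmall
  refine ⟨fun K => ∑ _s : Fin n, C K, fun k u Du hk hu => ?_⟩
  choose D hD hDK using hC k u Du hk hu
  have hZ : MemLp (fun x => flatten (Du x)) 2 (volume.restrict Ω) := (memW12_iff.1 hu.memW12).2.1
  have hDloc (s : Fin n) : LocallyIntegrableOn (D s) Ω :=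
    (locallyIntegrableOn_iff hΩ.isLocallyClosed).2 fun K hKΩ hK => by
      have : IsFiniteMeasure (volume.restrict K) := isFiniteMeasure_restrict.2 hK.measure_ne_top
      exact (hDK s K hK hKΩ).1.integrable one_le_two
  refine ⟨fun x p s => D s x p, hasLocWeakDerivOn_of_hasWeakDirDerivOn
    (IntegrableOn.locallyIntegrableOn (hZ.integrable one_le_two)) hDloc hD,
    fun K hK hKΩ => ⟨?_, ?_⟩⟩
  · simp only [mnorm_sq_eq_sum_norm_sq]
    exact integrable_finsetSum _ fun s _ => (hDK s K hK hKΩ).1.integrable_norm_pow two_ne_zero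
  · rw [H.sum_integral_QA_add (hZ.1.mono_measure (Measure.restrict_mono hKΩ le_rfl))
      fun s => (hDK s K hK hKΩ).1]
    exact Finset.sum_le_sum fun s _ => (hDK s K hK hKΩ).2

end UniformEstimate

theorem W22loc_apriori_estimate_general {n N : ℕ} {Ω : Set (EVec n)} (hΩ : IsOpen Ω)
    (hΩfin : volume Ω ≠ ∞) {L : ℝ} {f f' f'' : ℝ → ℝ} (H : IsLinearGrowthIntegrand L f f' f'')
    {finf : ℝ} (hfinf : Tendsto (fun t => f t / t) atTop (𝓝 finf))
    {T₀ : EVec n → Fin N → Fin n → ℝ} (hT : MemW2inf Ω T₀)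
    (hTsmall : linfNormOn Ω T₀ < ENNReal.ofReal finf)
    {u : ℕ → EVec n → Fin N → ℝ} {Du : ℕ → EVec n → Fin N → Fin n → ℝ}
    (hu : ∀ k, 0 < k → IsRegMinimiser Ω f T₀ k (u k) (Du k)) :
    ∃ D2 : ℕ → EVec n → (Fin N × Fin n) → Fin n → ℝ,
      (∀ k, 0 < k →
        HasLocWeakDerivOn Ω (fun x (p : Fin N × Fin n) => Du k x p.1 p.2) (D2 k) ∧
        ∀ K, IsCompact K → K ⊆ Ω → IntegrableOn (fun x => mnorm (D2 k x) ^ 2) K) ∧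
      ∀ K, IsCompact K → K ⊆ Ω → ∃ C : ℝ, ∀ k, 0 < k →
        (∑ s, ∫ x in K, QA f' f'' (Du k x) (fun a i => D2 k x (a, i) s)) +
          (k : ℝ)⁻¹ * ∫ x in K, mnorm (D2 k x) ^ 2 ≤ C := by
  have : IsFiniteMeasure (volume.restrict Ω) := isFiniteMeasure_restrict.2 hΩfin
  obtain ⟨C, hC⟩ := exists_forall_isRegMinimiser_hasLocWeakDerivOn H hΩ hT hfinf hTsmall
  choose! D2 hD2 hK using fun k hk => hC k (u k) (Du k) hk (hu k hk)
  exact ⟨D2, fun k hk => ⟨hD2 k hk, fun K hKc hKΩ => (hK k hk K hKc hKΩ).1⟩,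
    fun K hKc hKΩ => ⟨C K, fun k hk => (hK k hk K hKc hKΩ).2⟩⟩

/-- **Lemma 3.3 (a priori `W^{2,2}_loc` estimates).** Each minimiser `u_k` of `𝔉_k`
with zero mean belongs to `W^{2,2}_loc(Ω;ℝ^N)`, and for every compact `K ⊂ Ω` the
quantities `∑_s ∫_K D_zA(∇u_k)[∂_s∇u_k, ∂_s∇u_k] dx + k⁻¹∫_K |∇²u_k|² dx` are bounded
uniformly in `k`. -/
theorem W22loc_apriori_estimate
    {n N : ℕ} (Ω : Set (EVec n))
    (hΩ : IsLipschitzDomain Ω) (hΩbdd : Bornology.IsBounded Ω)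
    (ν L : ℝ) (hν : 0 < ν) (hνL : ν ≤ L)
    (f f' f'' : ℝ → ℝ)
    (hderiv : ∀ t ∈ Set.Ici (0:ℝ), HasDerivWithinAt f (f' t) (Set.Ici 0) t)
    (hderiv' : ∀ t ∈ Set.Ici (0:ℝ), HasDerivWithinAt f' (f'' t) (Set.Ici 0) t)
    (hf''cont : ContinuousOn f'' (Set.Ici 0))
    (hconv : ConvexOn ℝ (Set.Ici 0) f)
    (hf0 : f 0 = 0) (hf'0 : f' 0 = 0)
    (hgrowth : ∀ t ∈ Set.Ici (0:ℝ), ν * t - L ≤ f t ∧ f t ≤ L * (t + 1))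
    (hsec : ∀ t ∈ Set.Ici (0:ℝ), f'' t ≤ L * (1 + t)⁻¹)
    (finf : ℝ) (hfinf : Filter.Tendsto (fun t => f t / t) Filter.atTop (nhds finf))
    (T₀ : EVec n → Fin N → Fin n → ℝ)
    (hT : MemW2inf Ω T₀)
    (hTsmall : linfNormOn Ω T₀ < ENNReal.ofReal finf)
    (u : ℕ → EVec n → Fin N → ℝ) (Du : ℕ → EVec n → Fin N → Fin n → ℝ)
    (hmem : ∀ k, 0 < k → MemW12 Ω (u k) (Du k))
    (hzero : ∀ k, 0 < k → ZeroMean Ω (u k))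
    (hmin : ∀ k, 0 < k →
      ∀ (w : EVec n → Fin N → ℝ) (Dw : EVec n → Fin N → Fin n → ℝ),
        MemW12 Ω w Dw → FFk Ω f T₀ k (Du k) ≤ FFk Ω f T₀ k Dw) :
    ∃ D2 : ℕ → EVec n → (Fin N × Fin n) → Fin n → ℝ,
      (∀ k, 0 < k →
        HasLocWeakDerivOn Ω (fun x (p : Fin N × Fin n) => Du k x p.1 p.2) (D2 k) ∧
        ∀ K : Set (EVec n), IsCompact K → K ⊆ Ω →
          IntegrableOn (fun x => mnorm (D2 k x) ^ 2) K volume) ∧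
      ∀ K : Set (EVec n), IsCompact K → K ⊆ Ω → ∃ C : ℝ, ∀ k, 0 < k →
        (∑ s : Fin n, ∫ x in K,
            QA f' f'' (Du k x) (fun a i => D2 k x (a, i) s)) +
          (k : ℝ)⁻¹ * ∫ x in K, mnorm (D2 k x) ^ 2 ≤ C := by
  exact W22loc_apriori_estimate_general hΩ.1 hΩbdd.measure_lt_top.ne
    (.of_deriv2_le_mul_inv (hν.le.trans hνL) hderiv hderiv' hf''cont hconv hf0 hf'0
      (fun t ht => (hgrowth t ht).2) hsec)
    hfinf hT hTsmall fun k hk => ⟨hmem k hk, hmin k hk⟩
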